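/- Let N ≥ 2, 1 < q ≤ 1* := N/(N-1), α > 0, a, b > 0. If the supremum D_α := sup { ‖u‖_1 + α ‖u‖_q^q : u ∈ BV(ℝ^N), ‖u‖_{TV}^a + ‖u‖_1^b = 1 } is attained by u₀ ∈ BV(ℝ^N), then there exist λ₀ ∈ ℝ\{0}, R > 0, x₀ ∈ ℝ^N with u₀ = λ₀ χ_{B_R(x₀)}, and λ₀ satisfies (|λ₀| R^{N-1} ω_{N-1})^a + (|λ₀| R^N ω_{N-1}/N)^b = 1. -/

import Mathlib

open MeasureTheory Real Filter Topology

noncomputable section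

abbrev Euc (N : ℕ) := EuclideanSpace ℝ (Fin N)

/-- The set of values `∫ u div ψ` over admissible test vector fields. -/
def TVSet (N : ℕ) (u : Euc N → ℝ) : Set ℝ :=
  { r | ∃ ψ : Euc N → Euc N, ContDiff ℝ 1 ψ ∧ HasCompactSupport ψ ∧
      (∀ x, ‖ψ x‖ ≤ 1) ∧
      r = ∫ x, u x * (∑ i, fderiv ℝ (fun y => ψ y i) x (EuclideanSpace.single i 1)) }

/-- Total variation of `u`. -/
def tv (N : ℕ) (u : Euc N → ℝ) : ℝ := sSup (TVSet N u)

/-- `u` is a function of bounded variation on `ℝ^N`. -/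
def MemBV (N : ℕ) (u : Euc N → ℝ) : Prop :=
  Integrable u ∧ BddAbove (TVSet N u)

/-- The `L¹` norm. -/
def nrm1 (N : ℕ) (u : Euc N → ℝ) : ℝ := (eLpNorm u 1 volume).toReal

/-- The `L^q` norm, `q` a real exponent. -/
def nrmq (N : ℕ) (q : ℝ) (u : Euc N → ℝ) : ℝ :=
  (eLpNorm u (ENNReal.ofReal q) volume).toReal

/-- Surface area `ω_{N-1}` of the unit sphere in `ℝ^N`, as `N` times the
volume of the unit ball. -/
def omegaS (N : ℕ) : ℝ := N * (volume (Metric.ball (0 : Euc N) 1)).toReal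

/-- The Gagliardo–Nirenberg ratio `‖u‖_q^q / (‖u‖_1^{q-(q-1)N} ‖u‖_{TV}^{(q-1)N})`. -/
def ratioQ (N : ℕ) (q : ℝ) (u : Euc N → ℝ) : ℝ :=
  nrmq N q u ^ q / (nrm1 N u ^ (q - (q-1)*N) * tv N u ^ ((q-1)*(N:ℝ)))

/-- The best constant `E_q` on `BV(ℝ^N)`. -/
def EqSup (N : ℕ) (q : ℝ) : ℝ :=
  sSup { r | ∃ u : Euc N → ℝ, MemBV N u ∧ u ≠ 0 ∧ r = ratioQ N q u }

/-!
Rescaling shows that a maximizer of `D_α` maximizes the Gagliardo–Nirenberg ratio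
`‖u‖_q ^ q / (‖u‖_TV ^ ((q - 1) * N) * ‖u‖₁ ^ (q - (q - 1) * N))`. For a suitable nondecreasing
smooth `H` with `t - H t` also nondecreasing, the pieces `u - H ∘ u` and `H ∘ u` split both `‖u‖₁`
and the total variation, so weighted AM-GM forces equality in Minkowski's inequality, hence
`H ∘ u = k * u`; as `H t = k * t` has a single nonzero solution, `u = λ χ_A`. The set `A` is
then optimal in the isoperimetric inequality, which is proved by the Knothe map; its equality case
bounds the width of `A` in every direction by that of a ball of the same volume, so `A` is a ball.
-/

open scoped Pointwise

/-! ### Divergence and total variation -/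

section Divergence

variable {N : ℕ} {φ ψ : Euc N → Euc N} {f : Euc N → ℝ} {x : Euc N}

/-- The divergence `∑ i, ∂ᵢ ψᵢ` of a vector field, in the coordinate form used by `TVSet`. -/
def divergence (ψ : Euc N → Euc N) (x : Euc N) : ℝ :=
  ∑ i, fderiv ℝ (fun y => ψ y i) x (EuclideanSpace.single i 1)

lemma divergence_eq_sum {ψ' : Euc N →L[ℝ] Euc N} (h : HasFDerivAt ψ ψ' x) :
    divergence ψ x = ∑ i, ψ' (EuclideanSpace.single i 1) i := by
  refine Finset.sum_congr rfl fun i _ => ?_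
  have hi : HasFDerivAt (fun y => ψ y i) ((EuclideanSpace.proj i : Euc N →L[ℝ] ℝ).comp ψ') x :=
    (EuclideanSpace.proj i : Euc N →L[ℝ] ℝ).hasFDerivAt.comp x h
  rw [hi.fderiv]
  rfl

lemma divergence_eq_trace {ψ' : Euc N →L[ℝ] Euc N} (h : HasFDerivAt ψ ψ' x) :
    divergence ψ x = LinearMap.trace ℝ (Euc N) ψ' := by
  rw [divergence_eq_sum h,
    LinearMap.trace_eq_sum_inner _ (EuclideanSpace.basisFun (Fin N) ℝ)]
  simp [EuclideanSpace.inner_single_left]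

lemma divergence_id (x : Euc N) : divergence id x = N := by
  rw [divergence_eq_sum (hasFDerivAt_id (𝕜 := ℝ) x)]
  simp

lemma divergence_add (hφ : DifferentiableAt ℝ φ x) (hψ : DifferentiableAt ℝ ψ x) :
    divergence (φ + ψ) x = divergence φ x + divergence ψ x := by
  rw [divergence_eq_trace (hφ.hasFDerivAt.add hψ.hasFDerivAt),
    divergence_eq_trace hφ.hasFDerivAt, divergence_eq_trace hψ.hasFDerivAt]
  exact map_add _ _ _

lemma divergence_smul (hf : DifferentiableAt ℝ f x) (hψ : DifferentiableAt ℝ ψ x) :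
    divergence (f • ψ) x = f x * divergence ψ x + fderiv ℝ f x (ψ x) := by
  rw [divergence_eq_trace (hf.hasFDerivAt.smul hψ.hasFDerivAt),
    divergence_eq_trace hψ.hasFDerivAt, ContinuousLinearMap.toLinearMap_add, map_add]
  congr 1
  · exact map_smul (LinearMap.trace ℝ (Euc N)) (f x) _
  · exact LinearMap.trace_smulRight (fderiv ℝ f x).toLinearMap (ψ x)

lemma divergence_comp_smul (hψ : Differentiable ℝ ψ) (r : ℝ) (x : Euc N) :
    divergence (fun y => ψ (r • y)) x = r * divergence ψ (r • x) := by
  have h : HasFDerivAt (fun y => ψ (r • y))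
      ((fderiv ℝ ψ (r • x)).comp (r • ContinuousLinearMap.id ℝ (Euc N))) x :=
    (hψ _).hasFDerivAt.comp x (r • ContinuousLinearMap.id ℝ (Euc N)).hasFDerivAt
  rw [divergence_eq_sum h, divergence_eq_sum (hψ _).hasFDerivAt, Finset.mul_sum]
  simp

lemma divergence_conj (hψ : Differentiable ℝ ψ) (L : Euc N ≃L[ℝ] Euc N) (x : Euc N) :
    divergence (fun y => L (ψ (L.symm y))) x = divergence ψ (L.symm x) := by
  have h : HasFDerivAt (fun y => L (ψ (L.symm y)))
      ((L : Euc N →L[ℝ] Euc N).comp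
        ((fderiv ℝ ψ (L.symm x)).comp (L.symm : Euc N →L[ℝ] Euc N))) x :=
    L.hasFDerivAt.comp x ((hψ _).hasFDerivAt.comp x L.symm.hasFDerivAt)
  rw [divergence_eq_trace h, divergence_eq_trace (hψ _).hasFDerivAt,
    ← LinearMap.trace_conj' (fderiv ℝ ψ (L.symm x)).toLinearMap L.toLinearEquiv]
  rfl

lemma continuous_divergence (hψ : ContDiff ℝ 1 ψ) : Continuous (divergence ψ) := by
  refine continuous_finsetSum _ fun i _ => ?_
  have hi : ContDiff ℝ 1 fun y => ψ y i :=
    (EuclideanSpace.proj i : Euc N →L[ℝ] ℝ).contDiff.comp hψ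
  exact (hi.continuous_fderiv one_ne_zero).clm_apply continuous_const

lemma hasCompactSupport_divergence (hc : HasCompactSupport ψ) :
    HasCompactSupport (divergence ψ) := by
  refine hc.mono' fun x hx => ?_
  contrapose! hx
  simp only [Function.mem_support, ne_eq, not_not]
  have hx' : ∀ i : Fin N, (fun y => ψ y i) =ᶠ[𝓝 x] fun _ => 0 := fun i =>
    (notMem_tsupport_iff_eventuallyEq.1 hx).mono fun y hy => by simp [hy]
  exact Finset.sum_eq_zero fun i _ => by simp [(hx' i).fderiv_eq]

lemma exists_norm_divergence_le (hψ : ContDiff ℝ 1 ψ) (hc : HasCompactSupport ψ) :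
    ∃ C, ∀ x, ‖divergence ψ x‖ ≤ C :=
  (continuous_divergence hψ).bounded_above_of_compact_support (hasCompactSupport_divergence hc)

lemma integrable_mul_divergence {u : Euc N → ℝ} (hu : Integrable u) (hψ : ContDiff ℝ 1 ψ)
    (hc : HasCompactSupport ψ) : Integrable fun x => u x * divergence ψ x :=
  let ⟨C, hC⟩ := exists_norm_divergence_le hψ hc
  hu.mul_bdd (c := C) (continuous_divergence hψ).aestronglyMeasurable (ae_of_all _ hC)

lemma integral_divergence (hψ : ContDiff ℝ 1 ψ) (hc : HasCompactSupport ψ) :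
    ∫ x, divergence ψ x = 0 := by
  have hi (i : Fin N) : ContDiff ℝ 1 fun y => ψ y i :=
    (EuclideanSpace.proj i : Euc N →L[ℝ] ℝ).contDiff.comp hψ
  have hci (i : Fin N) : HasCompactSupport fun y => ψ y i :=
    hc.comp_left (g := fun v : Euc N => v i) rfl
  have hint (i : Fin N) :
      Integrable fun x => fderiv ℝ (fun y => ψ y i) x (EuclideanSpace.single i 1) :=
    (((hi i).continuous_fderiv one_ne_zero).clm_apply
      continuous_const).integrable_of_hasCompactSupport ((hci i).fderiv_apply (𝕜 := ℝ) _)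
  unfold divergence
  rw [integral_finsetSum _ fun i _ => hint i]
  refine Finset.sum_eq_zero fun i _ => ?_
  simpa using integral_mul_fderiv_eq_neg_fderiv_mul_of_integrable (μ := volume)
    (f := fun _ : Euc N => (1 : ℝ)) (g := fun y => ψ y i) (v := EuclideanSpace.single i 1)
    (by simp) (by simpa using hint i)
    (by simpa using (hi i).continuous.integrable_of_hasCompactSupport (hci i))
    (fun _ _ => differentiableAt_const _) (fun x _ => (hi i).differentiable one_ne_zero x)

lemma integral_mul_divergence (hf : ContDiff ℝ 1 f) (hψ : ContDiff ℝ 1 ψ)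
    (hc : HasCompactSupport ψ) :
    ∫ x, f x * divergence ψ x = - ∫ x, fderiv ℝ f x (ψ x) := by
  have hdiv (x : Euc N) : divergence (f • ψ) x = f x * divergence ψ x + fderiv ℝ f x (ψ x) :=
    divergence_smul (hf.differentiable one_ne_zero x) (hψ.differentiable one_ne_zero x)
  have hint₁ : Integrable fun x => f x * divergence ψ x :=
    (hf.continuous.mul (continuous_divergence hψ)).integrable_of_hasCompactSupport
      (hasCompactSupport_divergence hc).mul_left
  have hint₂ : Integrable fun x => fderiv ℝ f x (ψ x) := by
    refine ((hf.continuous_fderiv one_ne_zero).clm_apply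
      hψ.continuous).integrable_of_hasCompactSupport (hc.mono fun x hx hψx => hx ?_)
    simp only [hψx, map_zero]
  have hzero := integral_divergence (hf.smul hψ) (hc.smul_left (f := f))
  simp only [hdiv] at hzero
  rw [integral_add hint₁ hint₂] at hzero
  linarith

end Divergence

section TotalVariation

variable {N : ℕ} {u v : Euc N → ℝ} {ψ : Euc N → Euc N}

lemma integral_mul_divergence_mem_TVSet (u : Euc N → ℝ) (hψ : ContDiff ℝ 1 ψ)
    (hc : HasCompactSupport ψ) (hle : ∀ x, ‖ψ x‖ ≤ 1) :
    ∫ x, u x * divergence ψ x ∈ TVSet N u :=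
  ⟨ψ, hψ, hc, hle, rfl⟩

lemma zero_mem_TVSet (u : Euc N → ℝ) : 0 ∈ TVSet N u :=
  ⟨fun _ => 0, contDiff_const, HasCompactSupport.zero, by simp, by simp⟩

lemma integral_mul_divergence_le_tv (hu : MemBV N u) (hψ : ContDiff ℝ 1 ψ)
    (hc : HasCompactSupport ψ) (hle : ∀ x, ‖ψ x‖ ≤ 1) :
    ∫ x, u x * divergence ψ x ≤ tv N u :=
  le_csSup hu.2 (integral_mul_divergence_mem_TVSet u hψ hc hle)

lemma tv_nonneg (u : Euc N → ℝ) : 0 ≤ tv N u :=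
  Real.sSup_nonneg' ⟨0, zero_mem_TVSet u, le_rfl⟩

lemma memBV_of_forall_mem_TVSet_le (hu : Integrable u) {C : ℝ} (h : ∀ r ∈ TVSet N u, r ≤ C) :
    MemBV N u ∧ tv N u ≤ C :=
  ⟨⟨hu, C, h⟩, csSup_le ⟨0, zero_mem_TVSet u⟩ h⟩

lemma memBV_and_tv_add_tv_le (hu : Integrable u) (hv : Integrable v) {C : ℝ}
    (h : ∀ r ∈ TVSet N u, ∀ s ∈ TVSet N v, r + s ≤ C) :
    MemBV N u ∧ MemBV N v ∧ tv N u + tv N v ≤ C := by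
  have hv' (r : ℝ) (hr : r ∈ TVSet N u) : MemBV N v ∧ tv N v ≤ C - r :=
    memBV_of_forall_mem_TVSet_le hv fun s hs => by linarith [h r hr s hs]
  have hu' : MemBV N u ∧ tv N u ≤ C - tv N v :=
    memBV_of_forall_mem_TVSet_le hu fun r hr => by linarith [(hv' r hr).2]
  exact ⟨hu'.1, (hv' 0 (zero_mem_TVSet u)).1, by linarith [hu'.2]⟩

lemma TVSet_congr (h : u =ᵐ[volume] v) : TVSet N u = TVSet N v := by
  ext r
  have hint (ψ : Euc N → Euc N) : ∫ x, u x * divergence ψ x = ∫ x, v x * divergence ψ x :=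
    integral_congr_ae (h.mono fun x hx => by simp only [hx])
  simp only [divergence] at hint
  simp only [TVSet, Set.mem_ofPred_eq, hint]

lemma tv_congr (h : u =ᵐ[volume] v) : tv N u = tv N v := by
  rw [tv, tv, TVSet_congr h]

lemma MemBV.congr (hu : MemBV N u) (h : u =ᵐ[volume] v) : MemBV N v :=
  ⟨hu.1.congr h, TVSet_congr h ▸ hu.2⟩

lemma TVSet_eq_smul_of_subset {c : ℝ} (hc : c ≠ 0) (huv : TVSet N u ⊆ c • TVSet N v)
    (hvu : TVSet N v ⊆ c⁻¹ • TVSet N u) : TVSet N u = c • TVSet N v :=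
  huv.antisymm <| (Set.smul_set_mono hvu).trans_eq (smul_inv_smul₀ hc _)

lemma tv_of_TVSet_eq_smul {c : ℝ} (hc : 0 ≤ c) (h : TVSet N u = c • TVSet N v) :
    tv N u = c * tv N v := by
  rw [tv, tv, h, Real.sSup_smul_of_nonneg hc, smul_eq_mul]

lemma MemBV.of_TVSet_eq_smul {c : ℝ} (hc : 0 ≤ c) (hv : MemBV N v) (hu : Integrable u)
    (h : TVSet N u = c • TVSet N v) : MemBV N u :=
  ⟨hu, h ▸ hv.2.smul_of_nonneg hc⟩

lemma TVSet_const_mul_subset (u : Euc N → ℝ) (c : ℝ) :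
    TVSet N (fun x => c * u x) ⊆ |c| • TVSet N u := by
  rintro _ ⟨ψ, hψ, hc, hle, rfl⟩
  obtain ⟨ε, hε, hεc⟩ : ∃ ε : ℝ, |ε| = 1 ∧ c = |c| * ε := by
    rcases abs_choice c with h | h
    · exact ⟨1, by simp, by rw [h, mul_one]⟩
    · exact ⟨-1, by simp, by rw [h]; ring⟩
  have hdiv (x : Euc N) : divergence ((fun _ : Euc N => ε) • ψ) x = ε * divergence ψ x := by
    rw [divergence_smul (differentiableAt_const _) (hψ.differentiable one_ne_zero x)]
    simp
  refine ⟨_, integral_mul_divergence_mem_TVSet u (ψ := (fun _ : Euc N => ε) • ψ)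
    (contDiff_const.smul hψ) hc.smul_left (fun x => ?_), ?_⟩
  · simpa [norm_smul, hε] using hle x
  · simp only [hdiv, smul_eq_mul]
    rw [← integral_const_mul]
    refine integral_congr_ae (ae_of_all _ fun x => ?_)
    change |c| * (u x * (ε * divergence ψ x)) = c * u x * divergence ψ x
    nth_rewrite 2 [hεc]
    ring

lemma TVSet_const_mul (u : Euc N → ℝ) {c : ℝ} (hc : c ≠ 0) :
    TVSet N (fun x => c * u x) = |c| • TVSet N u := by
  refine TVSet_eq_smul_of_subset (abs_ne_zero.2 hc) (TVSet_const_mul_subset u c) ?_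
  simpa only [inv_mul_cancel_left₀ hc, abs_inv] using
    TVSet_const_mul_subset (fun x => c * u x) c⁻¹

lemma MemBV.const_mul (hu : MemBV N u) {c : ℝ} (hc : c ≠ 0) : MemBV N fun x => c * u x :=
  hu.of_TVSet_eq_smul (abs_nonneg c) (hu.1.const_mul c) (TVSet_const_mul u hc)

lemma tv_const_mul (u : Euc N → ℝ) {c : ℝ} (hc : c ≠ 0) :
    tv N (fun x => c * u x) = |c| * tv N u :=
  tv_of_TVSet_eq_smul (abs_nonneg c) (TVSet_const_mul u hc)

lemma TVSet_comp_inv_smul_subset (u : Euc N → ℝ) {r : ℝ} (hr : 0 < r) :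
    TVSet N (fun x => u (r⁻¹ • x)) ⊆ (r ^ N * r⁻¹) • TVSet N u := by
  rintro _ ⟨ψ, hψ, hc, hle, rfl⟩
  refine ⟨_, integral_mul_divergence_mem_TVSet u (ψ := fun y => ψ (r • y)) (by fun_prop)
    (hc.comp_homeomorph (Homeomorph.smulOfNeZero r hr.ne')) (fun x => hle _), ?_⟩
  have hint := Measure.integral_comp_inv_smul_of_nonneg (volume : Measure (Euc N))
    (fun y => u y * divergence ψ (r • y)) hr.le
  simp only [smul_inv_smul₀ hr.ne', finrank_euclideanSpace, Fintype.card_fin] at hint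
  change _ = ∫ x, u (r⁻¹ • x) * divergence ψ x
  rw [hint]
  simp only [divergence_comp_smul (hψ.differentiable one_ne_zero), smul_eq_mul,
    mul_left_comm (u _) r, integral_const_mul, mul_assoc, inv_mul_cancel_left₀ hr.ne']

lemma TVSet_comp_inv_smul (u : Euc N → ℝ) {r : ℝ} (hr : 0 < r) :
    TVSet N (fun x => u (r⁻¹ • x)) = (r ^ N * r⁻¹) • TVSet N u := by
  refine TVSet_eq_smul_of_subset (by positivity) (TVSet_comp_inv_smul_subset u hr) ?_
  simpa only [inv_inv, inv_smul_smul₀ hr.ne', mul_inv, inv_pow] using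
    TVSet_comp_inv_smul_subset (fun x => u (r⁻¹ • x)) (inv_pos.2 hr)

lemma MemBV.comp_inv_smul (hu : MemBV N u) {r : ℝ} (hr : 0 < r) :
    MemBV N fun x => u (r⁻¹ • x) :=
  hu.of_TVSet_eq_smul (by positivity) (hu.1.comp_smul (inv_ne_zero hr.ne'))
    (TVSet_comp_inv_smul u hr)

lemma tv_comp_inv_smul (u : Euc N → ℝ) {r : ℝ} (hr : 0 < r) :
    tv N (fun x => u (r⁻¹ • x)) = r ^ N * r⁻¹ * tv N u :=
  tv_of_TVSet_eq_smul (by positivity) (TVSet_comp_inv_smul u hr)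

lemma TVSet_comp_isometry_subset (u : Euc N → ℝ) (L : Euc N ≃ₗᵢ[ℝ] Euc N) :
    TVSet N (u ∘ L) ⊆ TVSet N u := by
  rintro _ ⟨ψ, hψ, hc, hle, rfl⟩
  refine ⟨fun y => L (ψ (L.symm y)), L.contDiff.comp (hψ.comp L.symm.contDiff),
    (hc.comp_homeomorph L.symm.toHomeomorph).comp_left (g := L) (map_zero L),
    fun x => by simpa using hle _, ?_⟩
  have hint := L.measurePreserving.integral_comp L.toHomeomorph.measurableEmbedding
    fun y => u y * divergence ψ (L.symm y)
  simp only [L.symm_apply_apply] at hint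
  refine hint.trans (integral_congr_ae (ae_of_all _ fun x => congrArg (u x * ·) ?_))
  exact (divergence_conj (hψ.differentiable one_ne_zero) L.toContinuousLinearEquiv x).symm

lemma TVSet_comp_isometry (u : Euc N → ℝ) (L : Euc N ≃ₗᵢ[ℝ] Euc N) :
    TVSet N (u ∘ L) = TVSet N u := by
  refine (TVSet_comp_isometry_subset u L).antisymm ?_
  simpa [Function.comp_assoc] using TVSet_comp_isometry_subset (u ∘ L) L.symm

lemma MemBV.comp_isometry (hu : MemBV N u) (L : Euc N ≃ₗᵢ[ℝ] Euc N) : MemBV N (u ∘ L) :=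
  ⟨(L.measurePreserving.integrable_comp_emb L.toHomeomorph.measurableEmbedding).2 hu.1,
    TVSet_comp_isometry u L ▸ hu.2⟩

lemma tv_comp_isometry (u : Euc N → ℝ) (L : Euc N ≃ₗᵢ[ℝ] Euc N) : tv N (u ∘ L) = tv N u := by
  rw [tv, tv, TVSet_comp_isometry]

end TotalVariation

/-! ### Mollification -/

section Cutoff

variable {N : ℕ}

lemma tendsto_inv_natCast_add_one : Tendsto (fun k : ℕ => ((k : ℝ) + 1)⁻¹) atTop (𝓝 0) :=
  tendsto_inv_atTop_zero.comp (tendsto_atTop_add_const_right _ _ tendsto_natCast_atTop_atTop)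

lemma norm_fderiv_comp_smul_le {f : Euc N → ℝ} {C : ℝ}
    (hC : ∀ x, ‖fderiv ℝ f x‖ ≤ C) {r : ℝ} (hr : 0 ≤ r) (x : Euc N) :
    ‖fderiv ℝ (fun y => f (r • y)) x‖ ≤ C * r := by
  rw [fderiv_comp_smul, norm_smul, Real.norm_of_nonneg hr, mul_comm]
  gcongr
  exact hC _

lemma exists_cutoff_seq (N : ℕ) : ∃ (η : ℕ → Euc N → ℝ) (C : ℝ),
    (∀ k, ContDiff ℝ 1 (η k) ∧ HasCompactSupport (η k)) ∧ (∀ k x, η k x ∈ Set.Icc 0 1) ∧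
    (∀ k x, ‖fderiv ℝ (η k) x‖ ≤ C * ((k : ℝ) + 1)⁻¹) ∧
    ∀ x, Tendsto (fun k => η k x) atTop (𝓝 1) := by
  let φ : ContDiffBump (0 : Euc N) := ⟨1, 2, one_pos, one_lt_two⟩
  have hφ : ContDiff ℝ 1 φ := φ.contDiff
  obtain ⟨C, hC⟩ := (hφ.continuous_fderiv one_ne_zero).bounded_above_of_compact_support
    (φ.hasCompactSupport.fderiv (𝕜 := ℝ))
  have hk (k : ℕ) : (0 : ℝ) < ((k : ℝ) + 1)⁻¹ := by positivity
  refine ⟨fun k x => φ (((k : ℝ) + 1)⁻¹ • x), C, fun k => ⟨hφ.comp (contDiff_const_smul _),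
    φ.hasCompactSupport.comp_homeomorph (Homeomorph.smulOfNeZero _ (hk k).ne')⟩,
    fun k x => ⟨φ.nonneg, φ.le_one⟩, fun k x =>
    norm_fderiv_comp_smul_le hC (hk k).le x, fun x => ?_⟩
  have hlim : Tendsto (fun k : ℕ => φ (((k : ℝ) + 1)⁻¹ • x)) atTop (𝓝 (φ ((0 : ℝ) • x))) :=
    (hφ.continuous.tendsto _).comp (tendsto_inv_natCast_add_one.smul_const x)
  rwa [zero_smul, φ.one_of_mem_closedBall (Metric.mem_closedBall_self φ.rIn_pos.le)] at hlim

lemma integral_mul_divergence_le_tv_of_bounded {u : Euc N → ℝ} (hu : MemBV N u)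
    {ψ : Euc N → Euc N} (hψ : ContDiff ℝ 1 ψ) (hle : ∀ x, ‖ψ x‖ ≤ 1) {C : ℝ}
    (hC : ∀ x, ‖divergence ψ x‖ ≤ C) : ∫ x, u x * divergence ψ x ≤ tv N u := by
  obtain ⟨η, C', hη, hη01, hη', hη1⟩ := exists_cutoff_seq N
  have hfderiv (k : ℕ) (x : Euc N) : ‖fderiv ℝ (η k) x (ψ x)‖ ≤ C' * ((k : ℝ) + 1)⁻¹ :=
    ((fderiv ℝ (η k) x).le_opNorm _).trans
      ((mul_le_of_le_one_right (norm_nonneg _) (hle x)).trans (hη' k x))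
  have hdiv (k : ℕ) : divergence (η k • ψ) =
      fun x => η k x * divergence ψ x + fderiv ℝ (η k) x (ψ x) :=
    funext fun x => divergence_smul ((hη k).1.differentiable one_ne_zero x)
      (hψ.differentiable one_ne_zero x)
  have htest (k : ℕ) : ∫ x, u x * divergence (η k • ψ) x ≤ tv N u :=
    integral_mul_divergence_le_tv hu ((hη k).1.smul hψ) ((hη k).2.smul_right (f' := ψ)) fun x => by
      simp only [Pi.smul_apply', norm_smul, Real.norm_of_nonneg (hη01 k x).1]
      exact mul_le_one₀ (hη01 k x).2 (norm_nonneg _) (hle x)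
  refine le_of_tendsto' (x := atTop) ?_ htest
  have hbound (k : ℕ) (x : Euc N) : ‖divergence (η k • ψ) x‖ ≤ C + C' := by
    have hC' : 0 ≤ C' := by simpa using (norm_nonneg _).trans (hη' 0 x)
    rw [hdiv]
    refine (norm_add_le _ _).trans (add_le_add ?_ ((hfderiv k x).trans ?_))
    · rw [norm_mul, Real.norm_of_nonneg (hη01 k x).1]
      exact (mul_le_of_le_one_left (norm_nonneg _) (hη01 k x).2).trans (hC x)
    · exact mul_le_of_le_one_right hC' (inv_le_one_of_one_le₀ (by simp))
  refine tendsto_integral_of_dominated_convergence (fun x => ‖u x‖ * (C + C'))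
    (fun k => hu.1.aestronglyMeasurable.mul
      (continuous_divergence ((hη k).1.smul hψ)).aestronglyMeasurable) (hu.1.norm.mul_const _)
    (fun k => ae_of_all _ fun x => ?_) (ae_of_all _ fun x => Tendsto.const_mul _ ?_)
  · rw [norm_mul]
    gcongr
    exact hbound k x
  · have hzero : Tendsto (fun k => fderiv ℝ (η k) x (ψ x)) atTop (𝓝 0) :=
      squeeze_zero_norm (fun k => hfderiv k x)
        (by simpa using tendsto_inv_natCast_add_one.const_mul C')
    simpa [hdiv] using ((hη1 x).mul_const (divergence ψ x)).add hzero

end Cutoff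

section Mollify

variable {N : ℕ} {F : Type*} [NormedAddCommGroup F] [NormedSpace ℝ F]

/-- A smooth bump at the origin of outer radius `1 / (k + 1)`, twice its inner radius. -/
def mollifierBump (N k : ℕ) : ContDiffBump (0 : Euc N) :=
  ⟨(2 * ((k : ℝ) + 1))⁻¹, ((k : ℝ) + 1)⁻¹, by positivity, by
    gcongr
    linarith [(Nat.cast_nonneg k : (0 : ℝ) ≤ k)]⟩

/-- The `k`-th standard mollifier, a smooth even probability density supported in the ball of
radius `1 / (k + 1)`. -/
def mollifier (N k : ℕ) : Euc N → ℝ := (mollifierBump N k).normed volume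

/-- The mollification of `u` at scale `1 / (k + 1)`. -/
def mollify (k : ℕ) (u : Euc N → F) : Euc N → F :=
  fun x => ∫ y, mollifier N k (x - y) • u y

variable {k : ℕ}

lemma mollifier_nonneg (x : Euc N) : 0 ≤ mollifier N k x := (mollifierBump N k).nonneg_normed x

lemma contDiff_mollifier : ContDiff ℝ 1 (mollifier N k) :=
  (mollifierBump N k).contDiff_normed (n := 1)

lemma continuous_mollifier : Continuous (mollifier N k) := contDiff_mollifier.continuous

lemma hasCompactSupport_mollifier : HasCompactSupport (mollifier N k) :=
  (mollifierBump N k).hasCompactSupport_normed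

lemma integrable_mollifier : Integrable (mollifier N k) := (mollifierBump N k).integrable_normed

lemma integral_mollifier : ∫ x, mollifier N k x = 1 := (mollifierBump N k).integral_normed

lemma mollifier_neg (x : Euc N) : mollifier N k (-x) = mollifier N k x :=
  (mollifierBump N k).normed_neg x

lemma mollifier_sub_comm (x y : Euc N) : mollifier N k (x - y) = mollifier N k (y - x) := by
  rw [← mollifier_neg, neg_sub]

lemma integrable_mollifier_sub (x : Euc N) : Integrable fun y => mollifier N k (x - y) :=
  integrable_mollifier.comp_sub_left x

lemma integral_mollifier_sub (x : Euc N) : ∫ y, mollifier N k (x - y) = 1 := by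
  rw [integral_sub_left_eq_self (mollifier N k) volume x, integral_mollifier]

lemma lintegral_mollifier_sub (y : Euc N) : ∫⁻ x, ‖mollifier N k (x - y)‖ₑ = 1 := by
  simp only [mollifier_sub_comm _ y]
  rw [← ofReal_integral_norm_eq_lintegral_enorm (integrable_mollifier_sub y)]
  simp only [Real.norm_of_nonneg (mollifier_nonneg _), integral_mollifier_sub, ENNReal.ofReal_one]

lemma mollify_eq_convolution (u : Euc N → F) :
    mollify k u = convolution (mollifier N k) u (ContinuousLinearMap.lsmul ℝ ℝ) volume := by
  ext x
  rw [convolution_lsmul_swap]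
  rfl

lemma contDiff_mollify [CompleteSpace F] {u : Euc N → F} (hu : LocallyIntegrable u) :
    ContDiff ℝ 1 (mollify k u) := by
  rw [mollify_eq_convolution]
  exact hasCompactSupport_mollifier.contDiff_convolution_left (n := 1) _ contDiff_mollifier hu

lemma hasCompactSupport_mollify {u : Euc N → F} (hc : HasCompactSupport u) :
    HasCompactSupport (mollify k u) := by
  rw [mollify_eq_convolution]
  exact hasCompactSupport_mollifier.convolution (ContinuousLinearMap.lsmul ℝ ℝ) hc

lemma norm_mollify_le {u : Euc N → F} {C : ℝ} (hu : ∀ x, ‖u x‖ ≤ C) (x : Euc N) :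
    ‖mollify k u x‖ ≤ C := by
  calc ‖mollify k u x‖ ≤ ∫ y, mollifier N k (x - y) * C := by
        refine norm_integral_le_of_norm_le ((integrable_mollifier_sub x).mul_const C)
          (ae_of_all _ fun y => ?_)
        rw [norm_smul, Real.norm_of_nonneg (mollifier_nonneg _)]
        exact mul_le_mul_of_nonneg_left (hu y) (mollifier_nonneg _)
    _ = C := by rw [integral_mul_const, integral_mollifier_sub, one_mul]

lemma ae_tendsto_mollify [CompleteSpace F] {u : Euc N → F} (hu : LocallyIntegrable u) :
    ∀ᵐ x, Tendsto (fun k => mollify k u x) atTop (𝓝 (u x)) := by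
  simp only [mollify_eq_convolution]
  refine ContDiffBump.ae_convolution_tendsto_right_of_locallyIntegrable (φ := mollifierBump N)
    (K := 2) tendsto_inv_natCast_add_one (Eventually.of_forall fun k => ?_) hu
  simp only [mollifierBump, mul_inv]
  linarith

variable {u : Euc N → ℝ}

lemma integrable_mollify (hu : Integrable u) : Integrable (mollify k u) := by
  rw [mollify_eq_convolution]
  exact integrable_mollifier.integrable_convolution _ hu

lemma integrable_prod_mollifier_sub_mul (hu : Integrable u) :
    Integrable (fun p : Euc N × Euc N => mollifier N k (p.1 - p.2) * u p.2)
      ((volume : Measure (Euc N)).prod volume) := by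
  refine (hu.convolution_integrand (L := ContinuousLinearMap.mul ℝ ℝ)
    (integrable_mollifier (N := N) (k := k))).congr (ae_of_all _ fun p => ?_)
  simp [mul_comm]

lemma integral_mollify_mul (hu : Integrable u) {g : Euc N → ℝ} (hg : Continuous g) {C : ℝ}
    (hC : ∀ x, ‖g x‖ ≤ C) : ∫ x, mollify k u x * g x = ∫ x, u x * mollify k g x := by
  have hint : Integrable (fun p : Euc N × Euc N => mollifier N k (p.1 - p.2) * u p.2 * g p.1)
      ((volume : Measure (Euc N)).prod volume) :=
    (integrable_prod_mollifier_sub_mul hu).mul_bdd (c := C)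
      (hg.comp continuous_fst).aestronglyMeasurable (ae_of_all _ fun p => hC _)
  calc ∫ x, mollify k u x * g x = ∫ x, ∫ y, mollifier N k (x - y) * u y * g x := by
        simp only [mollify, smul_eq_mul, integral_mul_const]
    _ = ∫ y, ∫ x, mollifier N k (x - y) * u y * g x := integral_integral_swap hint
    _ = ∫ y, u y * mollify k g y := by
        refine integral_congr_ae (ae_of_all _ fun y => ?_)
        simp only [mollify, smul_eq_mul, ← integral_const_mul]
        refine integral_congr_ae (ae_of_all _ fun x => ?_)
        simp only [mollifier_sub_comm x y]
        ring

lemma lintegral_enorm_mollify_le (hu : Integrable u) :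
    ∫⁻ x, ‖mollify k u x‖ₑ ≤ ∫⁻ x, ‖u x‖ₑ := by
  calc ∫⁻ x, ‖mollify k u x‖ₑ ≤ ∫⁻ x, ∫⁻ y, ‖mollifier N k (x - y) * u y‖ₑ :=
        lintegral_mono fun x => enorm_integral_le_lintegral_enorm _
    _ = ∫⁻ y, ∫⁻ x, ‖mollifier N k (x - y) * u y‖ₑ :=
        lintegral_lintegral_swap (integrable_prod_mollifier_sub_mul hu).aestronglyMeasurable.enorm
    _ = ∫⁻ y, ‖u y‖ₑ := by
        refine lintegral_congr fun y => ?_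
        simp only [enorm_mul]
        rw [lintegral_mul_const' _ _ (by simp), lintegral_mollifier_sub, one_mul]

lemma fderiv_mollify {ψ : Euc N → Euc N} (hψ : ContDiff ℝ 1 ψ) (hc : HasCompactSupport ψ)
    (x v : Euc N) : fderiv ℝ (mollify k ψ) x v = mollify k (fun y => fderiv ℝ ψ y v) x := by
  have hloc : LocallyIntegrable (mollifier N k) := continuous_mollifier.locallyIntegrable
  have hd := hc.hasFDerivAt_convolution_right (ContinuousLinearMap.lsmul ℝ ℝ) hloc hψ x
  rw [mollify_eq_convolution, mollify_eq_convolution, hd.fderiv,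
    convolution_precompR_apply _ hloc (hc.fderiv (𝕜 := ℝ)) (hψ.continuous_fderiv one_ne_zero)]

lemma divergence_mollify {ψ : Euc N → Euc N} (hψ : ContDiff ℝ 1 ψ) (hc : HasCompactSupport ψ) :
    divergence (mollify k ψ) = mollify k (divergence ψ) := by
  ext x
  have hint (i : Fin N) : Integrable fun y =>
      mollifier N k (x - y) • fderiv ℝ ψ y (EuclideanSpace.single i 1) :=
    ((continuous_mollifier.comp (continuous_sub_left x)).smul
      ((hψ.continuous_fderiv one_ne_zero).clm_apply
        continuous_const)).integrable_of_hasCompactSupport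
      (hc.fderiv_apply (𝕜 := ℝ) _).smul_left
  have hcoord (i : Fin N) : fderiv ℝ (mollify k ψ) x (EuclideanSpace.single i 1) i
      = ∫ y, mollifier N k (x - y) * fderiv ℝ ψ y (EuclideanSpace.single i 1) i := by
    rw [fderiv_mollify hψ hc]
    exact ((EuclideanSpace.proj i : Euc N →L[ℝ] ℝ).integral_comp_comm (hint i)).symm
  have hdiv : divergence ψ = fun y => ∑ i, fderiv ℝ ψ y (EuclideanSpace.single i 1) i :=
    funext fun y => divergence_eq_sum (hψ.differentiable one_ne_zero y).hasFDerivAt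
  rw [divergence_eq_sum ((contDiff_mollify hψ.continuous.locallyIntegrable).differentiable
    one_ne_zero x).hasFDerivAt, hdiv]
  simp only [hcoord, mollify, smul_eq_mul, Finset.mul_sum]
  exact (integral_finsetSum _ fun i _ =>
    (EuclideanSpace.proj i : Euc N →L[ℝ] ℝ).integrable_comp (hint i)).symm

lemma integral_mollify_mul_divergence_le_tv (hu : MemBV N u) {ψ : Euc N → Euc N}
    (hψ : ContDiff ℝ 1 ψ) (hc : HasCompactSupport ψ) (hle : ∀ x, ‖ψ x‖ ≤ 1) :
    ∫ x, mollify k u x * divergence ψ x ≤ tv N u := by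
  obtain ⟨C, hC⟩ := exists_norm_divergence_le hψ hc
  rw [integral_mollify_mul hu.1 (continuous_divergence hψ) hC, ← divergence_mollify hψ hc]
  exact integral_mul_divergence_le_tv hu (contDiff_mollify hψ.continuous.locallyIntegrable)
    (hasCompactSupport_mollify hc) (norm_mollify_le hle)

/-- The Riesz–Scheffé lemma. -/
lemma tendsto_integral_abs_sub_of_ae_tendsto {Ω : Type*} [MeasurableSpace Ω] {μ : Measure Ω}
    {f : ℕ → Ω → ℝ} {g : Ω → ℝ} (hf : ∀ k, Integrable (f k) μ) (hg : Integrable g μ)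
    (hlim : ∀ᵐ x ∂μ, Tendsto (fun k => f k x) atTop (𝓝 (g x)))
    (hle : ∀ k, ∫ x, |f k x| ∂μ ≤ ∫ x, |g x| ∂μ) :
    Tendsto (fun k => ∫ x, |f k x - g x| ∂μ) atTop (𝓝 0) := by
  have hsub (k : ℕ) : Integrable (fun x => |f k x - g x|) μ := ((hf k).sub hg).abs
  have hadd (k : ℕ) : Integrable (fun x => |f k x| + |g x|) μ := (hf k).abs.add hg.abs
  -- `|f k| + |g| - |f k - g|` lies between `0` and `2 |g|`, hence converges to `2 |g|` in `L¹`.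
  have hdom : Tendsto (fun k => ∫ x, (|f k x| + |g x| - |f k x - g x|) ∂μ) atTop
      (𝓝 (∫ x, 2 * |g x| ∂μ)) := by
    refine tendsto_integral_of_dominated_convergence (fun x => 2 * |g x|)
      (fun k => ((hadd k).sub (hsub k)).aestronglyMeasurable) (hg.abs.const_mul 2)
      (fun k => ae_of_all _ fun x => ?_) ?_
    · have hlow := abs_sub (f k x) (g x)
      have hup := abs_sub_abs_le_abs_sub (f k x) (g x)
      exact abs_le.2 ⟨by linarith [abs_nonneg (g x)], by linarith⟩
    · filter_upwards [hlim] with x hx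
      simpa [two_mul] using (hx.abs.add_const |g x|).sub (hx.sub_const (g x)).abs
  have hup (k : ℕ) : ∫ x, |f k x - g x| ∂μ
      ≤ 2 * ∫ x, |g x| ∂μ - ∫ x, (|f k x| + |g x| - |f k x - g x|) ∂μ := by
    rw [integral_sub (hadd k) (hsub k), integral_add (hf k).abs hg.abs]
    linarith [hle k]
  refine squeeze_zero (fun k => integral_nonneg fun x => abs_nonneg _) hup ?_
  simpa [integral_const_mul] using hdom.const_sub (2 * ∫ x, |g x| ∂μ)

lemma tendsto_integral_abs_mollify_sub (hu : Integrable u) :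
    Tendsto (fun k => ∫ x, |mollify k u x - u x|) atTop (𝓝 0) := by
  refine tendsto_integral_abs_sub_of_ae_tendsto (fun k => integrable_mollify hu) hu
    (ae_tendsto_mollify hu.locallyIntegrable) fun k => ?_
  have hle := lintegral_enorm_mollify_le (k := k) hu
  rwa [← ofReal_integral_norm_eq_lintegral_enorm hu,
    ← ofReal_integral_norm_eq_lintegral_enorm (integrable_mollify hu),
    ENNReal.ofReal_le_ofReal_iff (integral_nonneg fun x => norm_nonneg _)] at hle

end Mollify

/-! ### Splitting the total variation -/

section ChainRule

variable {N : ℕ} {u : Euc N → ℝ} {G G₁ G₂ : ℝ → ℝ} {ψ ψ₁ ψ₂ : Euc N → Euc N}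

lemma integrable_comp_of_lipschitz (hu : Integrable u) (hG : LipschitzWith 1 G) (h0 : G 0 = 0) :
    Integrable fun x => G (u x) := by
  refine hu.mono (hG.continuous.comp_aestronglyMeasurable hu.aestronglyMeasurable)
    (ae_of_all _ fun x => ?_)
  simpa [h0] using hG.norm_sub_le (u x) 0

lemma tendsto_integral_comp_mollify_mul_divergence (hu : Integrable u) (hG : LipschitzWith 1 G)
    (h0 : G 0 = 0) (hψ : ContDiff ℝ 1 ψ) (hc : HasCompactSupport ψ) :
    Tendsto (fun k => ∫ x, G (mollify k u x) * divergence ψ x) atTop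
      (𝓝 (∫ x, G (u x) * divergence ψ x)) := by
  obtain ⟨C, hC⟩ := exists_norm_divergence_le hψ hc
  rw [tendsto_iff_norm_sub_tendsto_zero]
  refine squeeze_zero (fun k => norm_nonneg _) (fun k => ?_)
    (by simpa using (tendsto_integral_abs_mollify_sub hu).const_mul C)
  rw [← integral_sub
      (integrable_mul_divergence (integrable_comp_of_lipschitz (integrable_mollify hu) hG h0) hψ hc)
      (integrable_mul_divergence (integrable_comp_of_lipschitz hu hG h0) hψ hc),
    ← integral_const_mul]
  refine norm_integral_le_of_norm_le (((integrable_mollify hu).sub hu).abs.const_mul C)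
    (ae_of_all _ fun x => ?_)
  rw [← sub_mul, norm_mul, mul_comm]
  exact mul_le_mul (hC x) (by simpa using hG.norm_sub_le (mollify k u x) (u x)) (norm_nonneg _)
    ((norm_nonneg _).trans (hC x))

lemma integral_comp_mul_divergence {m : Euc N → ℝ} (hm : ContDiff ℝ 1 m) (hG : ContDiff ℝ 2 G)
    (hψ : ContDiff ℝ 1 ψ) (hc : HasCompactSupport ψ) :
    ∫ x, G (m x) * divergence ψ x = ∫ x, m x * divergence ((deriv G ∘ m) • ψ) x := by
  have hG' : ContDiff ℝ 1 (deriv G) := hG.deriv'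
  rw [integral_mul_divergence (f := fun x => G (m x)) ((hG.of_le one_le_two).comp hm) hψ hc,
    integral_mul_divergence hm ((hG'.comp hm).smul hψ) (hc.smul_left (f := deriv G ∘ m))]
  congr 1
  refine integral_congr_ae (ae_of_all _ fun x => ?_)
  have hd : HasFDerivAt (fun x => G (m x)) (deriv G (m x) • fderiv ℝ m x) x :=
    (hG.differentiable two_ne_zero (m x)).hasDerivAt.comp_hasFDerivAt x
      (hm.differentiable one_ne_zero x).hasFDerivAt
  simp [hd.fderiv]

lemma integral_comp_mollify_add_le_tv (hu : MemBV N u) (hG₁ : ContDiff ℝ 2 G₁)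
    (hG₂ : ContDiff ℝ 2 G₂) (hG : ∀ s, |deriv G₁ s| + |deriv G₂ s| ≤ 1)
    (hψ₁ : ContDiff ℝ 1 ψ₁) (hc₁ : HasCompactSupport ψ₁) (hle₁ : ∀ x, ‖ψ₁ x‖ ≤ 1)
    (hψ₂ : ContDiff ℝ 1 ψ₂) (hc₂ : HasCompactSupport ψ₂) (hle₂ : ∀ x, ‖ψ₂ x‖ ≤ 1) (k : ℕ) :
    (∫ x, G₁ (mollify k u x) * divergence ψ₁ x) + ∫ x, G₂ (mollify k u x) * divergence ψ₂ x
      ≤ tv N u := by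
  have hm : ContDiff ℝ 1 (mollify k u) := contDiff_mollify hu.1.locallyIntegrable
  have hφ₁ : ContDiff ℝ 1 ((deriv G₁ ∘ mollify k u) • ψ₁) := (hG₁.deriv'.comp hm).smul hψ₁
  have hφ₂ : ContDiff ℝ 1 ((deriv G₂ ∘ mollify k u) • ψ₂) := (hG₂.deriv'.comp hm).smul hψ₂
  have hs₁ := hc₁.smul_left (f := deriv G₁ ∘ mollify k u)
  have hs₂ := hc₂.smul_left (f := deriv G₂ ∘ mollify k u)
  rw [integral_comp_mul_divergence hm hG₁ hψ₁ hc₁, integral_comp_mul_divergence hm hG₂ hψ₂ hc₂,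
    ← integral_add (integrable_mul_divergence (integrable_mollify hu.1) hφ₁ hs₁)
      (integrable_mul_divergence (integrable_mollify hu.1) hφ₂ hs₂)]
  simp only [← mul_add, ← divergence_add (hφ₁.differentiable one_ne_zero _)
    (hφ₂.differentiable one_ne_zero _)]
  refine integral_mollify_mul_divergence_le_tv hu (hφ₁.add hφ₂) (hs₁.add hs₂) fun x => ?_
  refine (norm_add_le _ _).trans (le_trans (add_le_add ?_ ?_) (hG (mollify k u x))) <;>
    simp only [Pi.smul_apply', Function.comp_apply, norm_smul, Real.norm_eq_abs]
  exacts [mul_le_of_le_one_right (abs_nonneg _) (hle₁ x),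
    mul_le_of_le_one_right (abs_nonneg _) (hle₂ x)]

lemma MemBV.comp_and_tv_add_tv_le (hu : MemBV N u) (hG₁ : ContDiff ℝ 2 G₁)
    (hG₂ : ContDiff ℝ 2 G₂) (hG : ∀ s, |deriv G₁ s| + |deriv G₂ s| ≤ 1)
    (h₁ : G₁ 0 = 0) (h₂ : G₂ 0 = 0) :
    MemBV N (fun x => G₁ (u x)) ∧ MemBV N (fun x => G₂ (u x)) ∧
      tv N (fun x => G₁ (u x)) + tv N (fun x => G₂ (u x)) ≤ tv N u := by
  have hL₁ : LipschitzWith 1 G₁ := lipschitzWith_of_nnnorm_deriv_le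
    (hG₁.differentiable two_ne_zero) fun s =>
      (le_add_of_nonneg_right (abs_nonneg (deriv G₂ s))).trans (hG s)
  have hL₂ : LipschitzWith 1 G₂ := lipschitzWith_of_nnnorm_deriv_le
    (hG₂.differentiable two_ne_zero) fun s =>
      (le_add_of_nonneg_left (abs_nonneg (deriv G₁ s))).trans (hG s)
  refine memBV_and_tv_add_tv_le (integrable_comp_of_lipschitz hu.1 hL₁ h₁)
    (integrable_comp_of_lipschitz hu.1 hL₂ h₂) ?_
  rintro _ ⟨ψ₁, hψ₁, hc₁, hle₁, rfl⟩ _ ⟨ψ₂, hψ₂, hc₂, hle₂, rfl⟩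
  exact le_of_tendsto' ((tendsto_integral_comp_mollify_mul_divergence hu.1 hL₁ h₁ hψ₁ hc₁).add
      (tendsto_integral_comp_mollify_mul_divergence hu.1 hL₂ h₂ hψ₂ hc₂))
    (integral_comp_mollify_add_le_tv hu hG₁ hG₂ hG hψ₁ hc₁ hle₁ hψ₂ hc₂ hle₂)

/-- The part `H (u)` of the splitting `u = (u - H (u)) + H (u)`. The profile `H` is smooth with
`0 < H' < 1`, so that both parts are strictly monotone functions of `u`. -/
def splitProfile (s : ℝ) : ℝ := (s + (√(1 + s ^ 2) - 1)) / 2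

lemma contDiff_sqrt_one_add_sq_sub_one : ContDiff ℝ 2 fun s : ℝ => √(1 + s ^ 2) - 1 :=
  ((contDiff_const.add (contDiff_id.pow 2)).sqrt fun s => by positivity).sub contDiff_const

lemma deriv_sqrt_one_add_sq_sub_one (s : ℝ) :
    deriv (fun s => √(1 + s ^ 2) - 1) s = s / √(1 + s ^ 2) := by
  have hpos : 0 < 1 + s ^ 2 := by positivity
  rw [((((hasDerivAt_pow 2 s).const_add 1).sqrt hpos.ne').sub_const 1).deriv]
  field_simp
  simp

lemma abs_div_sqrt_one_add_sq_le_one (s : ℝ) : |s / √(1 + s ^ 2)| ≤ 1 := by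
  have hpos : 0 < √(1 + s ^ 2) := by positivity
  rw [abs_div, abs_of_pos hpos, div_le_one hpos]
  exact Real.abs_le_sqrt (by linarith)

lemma contDiff_splitProfile : ContDiff ℝ 2 splitProfile :=
  (contDiff_id.add contDiff_sqrt_one_add_sq_sub_one).div_const 2

lemma deriv_splitProfile (s : ℝ) : deriv splitProfile s = (1 + s / √(1 + s ^ 2)) / 2 := by
  rw [← deriv_sqrt_one_add_sq_sub_one]
  exact (((hasDerivAt_id s).add (contDiff_sqrt_one_add_sq_sub_one.differentiable two_ne_zero
    s).hasDerivAt).div_const 2).deriv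

lemma splitProfile_zero : splitProfile 0 = 0 := by simp [splitProfile]

lemma MemBV.split (hu : MemBV N u) :
    MemBV N (fun x => u x - splitProfile (u x)) ∧ MemBV N (fun x => splitProfile (u x)) ∧
      tv N (fun x => u x - splitProfile (u x)) + tv N (fun x => splitProfile (u x)) ≤ tv N u := by
  refine hu.comp_and_tv_add_tv_le (G₁ := fun s => s - splitProfile s)
    (contDiff_id.sub contDiff_splitProfile) contDiff_splitProfile (fun s => ?_)
    (by simp [splitProfile_zero]) splitProfile_zero
  have hd : deriv (fun s => s - splitProfile s) s = 1 - deriv splitProfile s :=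
    ((hasDerivAt_id s).sub
      (contDiff_splitProfile.differentiable two_ne_zero s).hasDerivAt).deriv
  have hs := abs_le.1 (abs_div_sqrt_one_add_sq_le_one s)
  rw [hd, deriv_splitProfile, abs_of_nonneg (by linarith), abs_of_nonneg (by linarith)]
  linarith

lemma MemBV.sqrt_one_add_sq_sub_one (hu : MemBV N u) :
    MemBV N (fun x => √(1 + u x ^ 2) - 1) ∧ tv N (fun x => √(1 + u x ^ 2) - 1) ≤ tv N u := by
  obtain ⟨h, -, hle⟩ := hu.comp_and_tv_add_tv_le (G₁ := fun s => √(1 + s ^ 2) - 1)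
    (G₂ := fun _ => 0) contDiff_sqrt_one_add_sq_sub_one contDiff_const
    (fun s => by simpa [deriv_sqrt_one_add_sq_sub_one] using abs_div_sqrt_one_add_sq_le_one s)
    (by simp) rfl
  exact ⟨h, by linarith [tv_nonneg (N := N) fun _ => 0]⟩

end ChainRule

/-! ### Slicing Euclidean balls -/

section Fubini

variable {n : ℕ}

lemma piFinSuccAbove_symm_apply_zero (p : ℝ × (Fin n → ℝ)) :
    (MeasurableEquiv.piFinSuccAbove (fun _ : Fin (n + 1) => ℝ) 0).symm p
      = (Fin.cons p.1 p.2 : Fin (n + 1) → ℝ) := by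
  simp only [MeasurableEquiv.piFinSuccAbove, MeasurableEquiv.symm_mk, MeasurableEquiv.coe_mk,
    Fin.insertNthEquiv_zero]
  rfl

lemma measurableEmbedding_finCons :
    MeasurableEmbedding fun p : ℝ × (Fin n → ℝ) => (Fin.cons p.1 p.2 : Fin (n + 1) → ℝ) := by
  simp only [← piFinSuccAbove_symm_apply_zero]
  exact MeasurableEquiv.measurableEmbedding _

lemma measurable_finCons :
    Measurable fun p : ℝ × (Fin n → ℝ) => (Fin.cons p.1 p.2 : Fin (n + 1) → ℝ) :=
  measurableEmbedding_finCons.measurable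

lemma measurePreserving_finCons :
    MeasurePreserving (fun p : ℝ × (Fin n → ℝ) => (Fin.cons p.1 p.2 : Fin (n + 1) → ℝ))
      (volume.prod volume) volume := by
  simp only [← piFinSuccAbove_symm_apply_zero]
  exact (volume_preserving_piFinSuccAbove (fun _ : Fin (n + 1) => ℝ) 0).symm _

lemma lintegral_finCons {f : (Fin (n + 1) → ℝ) → ENNReal} (hf : Measurable f) :
    ∫⁻ x, f x = ∫⁻ t, ∫⁻ x', f (Fin.cons t x') := by
  rw [← measurePreserving_finCons.lintegral_comp hf]
  exact lintegral_prod _ (hf.comp measurable_finCons).aemeasurable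

lemma lintegral_finCons_symm {f : (Fin (n + 1) → ℝ) → ENNReal} (hf : Measurable f) :
    ∫⁻ x, f x = ∫⁻ x', ∫⁻ t, f (Fin.cons t x') := by
  rw [← measurePreserving_finCons.lintegral_comp hf]
  exact lintegral_prod_symm _ (hf.comp measurable_finCons).aemeasurable

lemma integrable_finCons {f : (Fin (n + 1) → ℝ) → ℝ} (hf : Integrable f) :
    Integrable (fun p : ℝ × (Fin n → ℝ) => f (Fin.cons p.1 p.2)) (volume.prod volume) :=
  (measurePreserving_finCons.integrable_comp_emb measurableEmbedding_finCons).2 hf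

lemma integral_finCons {f : (Fin (n + 1) → ℝ) → ℝ} (hf : Integrable f) :
    ∫ x, f x = ∫ t, ∫ x', f (Fin.cons t x') := by
  rw [← measurePreserving_finCons.integral_comp measurableEmbedding_finCons]
  exact integral_prod _ (integrable_finCons hf)

lemma integral_finCons_symm {f : (Fin (n + 1) → ℝ) → ℝ} (hf : Integrable f) :
    ∫ x, f x = ∫ x', ∫ t, f (Fin.cons t x') := by
  rw [← measurePreserving_finCons.integral_comp measurableEmbedding_finCons]
  exact integral_prod_symm _ (integrable_finCons hf)

lemma ae_mem_iff_ae_ae_finCons_mem {s : Set (Fin (n + 1) → ℝ)} (hs : MeasurableSet s) :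
    (∀ᵐ x, x ∈ s) ↔ ∀ᵐ t : ℝ, ∀ᵐ x' : Fin n → ℝ, (Fin.cons t x' : Fin (n + 1) → ℝ) ∈ s := by
  rw [← measurePreserving_finCons.map_eq, measurableEmbedding_finCons.ae_map_iff]
  exact Measure.ae_prod_mem_iff_ae_ae_mem (measurable_finCons hs)

end Fubini

section SliceWeight

variable (n : ℕ)

/-- The volume of the unit ball of `ℝⁿ`. -/
def ballVolume : ℝ := (volume (Metric.ball (0 : Euc n) 1)).toReal

/-- The `n`-dimensional volume, up to the factor `ballVolume n`, of the slice at height `s` of the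
unit ball of `ℝⁿ⁺¹`. -/
def sliceWeight (s : ℝ) : ℝ := √(1 - s ^ 2) ^ n

/-- The total mass of `sliceWeight n` on `[-1, 1]`. -/
def sliceMass : ℝ := ∫ s in (-1 : ℝ)..1, sliceWeight n s

lemma ballVolume_pos : 0 < ballVolume n :=
  ENNReal.toReal_pos (Metric.measure_ball_pos _ _ one_pos).ne' measure_ball_lt_top.ne

lemma ofReal_ballVolume : ENNReal.ofReal (ballVolume n) = volume (Metric.ball (0 : Euc n) 1) :=
  ENNReal.ofReal_toReal measure_ball_lt_top.ne

lemma continuous_sliceWeight : Continuous (sliceWeight n) := by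
  unfold sliceWeight
  fun_prop

variable {n}

lemma volume_sum_sq_lt {ρ : ℝ} (hρ : 0 < ρ) :
    volume {x : Fin n → ℝ | ∑ i, x i ^ 2 < ρ} = ENNReal.ofReal (√ρ ^ n * ballVolume n) := by
  have hball : (WithLp.ofLp : Euc n → _) ⁻¹' {x : Fin n → ℝ | ∑ i, x i ^ 2 < ρ}
      = Metric.ball (0 : Euc n) √ρ := by
    ext x
    simp only [Set.mem_preimage, Set.mem_ofPred_eq, mem_ball_zero_iff, EuclideanSpace.norm_eq,
      Real.norm_eq_abs, sq_abs]
    exact (Real.sqrt_lt_sqrt_iff (Finset.sum_nonneg fun i _ => sq_nonneg _)).symm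
  have hm : MeasurableSet {x : Fin n → ℝ | ∑ i, x i ^ 2 < ρ} :=
    measurableSet_lt (by fun_prop) measurable_const
  rw [← (PiLp.volume_preserving_ofLp (Fin n)).measure_preimage hm.nullMeasurableSet, hball,
    Measure.addHaar_ball_of_pos _ _ (Real.sqrt_pos.2 hρ), ← ofReal_ballVolume,
    ENNReal.ofReal_mul (by positivity), finrank_euclideanSpace_fin]

lemma sliceWeight_nonneg (s : ℝ) : 0 ≤ sliceWeight n s := by
  unfold sliceWeight
  positivity

lemma one_sub_sq_pos {s : ℝ} (hs : s ∈ Set.Ioo (-1 : ℝ) 1) : 0 < 1 - s ^ 2 := by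
  nlinarith [hs.1, hs.2]

lemma sliceWeight_pos {s : ℝ} (hs : s ∈ Set.Ioo (-1 : ℝ) 1) : 0 < sliceWeight n s :=
  pow_pos (Real.sqrt_pos.2 (one_sub_sq_pos hs)) n

lemma sliceMass_pos : 0 < sliceMass n :=
  intervalIntegral.intervalIntegral_pos_of_pos_on
    ((continuous_sliceWeight n).intervalIntegrable _ _) (fun _ => sliceWeight_pos) (by norm_num)

lemma volume_sum_sq_lt_one_sub_sq (t : ℝ) :
    volume {x : Fin n → ℝ | ∑ i, x i ^ 2 < 1 - t ^ 2} =
      (Set.Ioo (-1 : ℝ) 1).indicator (fun s => ENNReal.ofReal (sliceWeight n s * ballVolume n))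
        t := by
  by_cases ht : t ∈ Set.Ioo (-1 : ℝ) 1
  · rw [Set.indicator_of_mem ht, volume_sum_sq_lt (one_sub_sq_pos ht), sliceWeight]
  · have hempty : {x : Fin n → ℝ | ∑ i, x i ^ 2 < 1 - t ^ 2} = ∅ := by
      refine Set.eq_empty_of_forall_notMem fun x hx => ht (abs_lt.1 ?_)
      have hsum : 0 ≤ ∑ i, x i ^ 2 := Finset.sum_nonneg fun i _ => sq_nonneg _
      exact (sq_lt_one_iff_abs_lt_one t).1 (by linarith [show ∑ i, x i ^ 2 < 1 - t ^ 2 from hx])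
    rw [Set.indicator_of_notMem ht, hempty, measure_empty]

lemma ballVolume_succ : ballVolume (n + 1) = ballVolume n * sliceMass n := by
  have hm : MeasurableSet {x : Fin (n + 1) → ℝ | ∑ i, x i ^ 2 < 1} :=
    measurableSet_lt (by fun_prop) measurable_const
  have hslice (t : ℝ) : ∫⁻ x' : Fin n → ℝ, {x : Fin (n + 1) → ℝ | ∑ i, x i ^ 2 < 1}.indicator 1
      (Fin.cons t x' : Fin (n + 1) → ℝ) = volume {x : Fin n → ℝ | ∑ i, x i ^ 2 < 1 - t ^ 2} := by
    rw [← lintegral_indicator_one (measurableSet_lt (by fun_prop) measurable_const)]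
    refine lintegral_congr fun x' => ?_
    simp only [Set.indicator, Set.mem_ofPred_eq, Fin.sum_univ_succ, Fin.cons_zero, Fin.cons_succ,
      lt_sub_iff_add_lt', Pi.one_apply]
  have hint : Integrable (fun s => sliceWeight n s * ballVolume n)
      (volume.restrict (Set.Ioo (-1 : ℝ) 1)) :=
    ((continuous_sliceWeight n).integrableOn_Icc.mono_set Set.Ioo_subset_Icc_self).mul_const _
  have hball := volume_sum_sq_lt (n := n + 1) one_pos
  simp only [Real.sqrt_one, one_pow, one_mul] at hball
  rw [← lintegral_indicator_one hm, lintegral_finCons (measurable_one.indicator hm)] at hball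
  simp only [hslice, volume_sum_sq_lt_one_sub_sq] at hball
  rw [lintegral_indicator measurableSet_Ioo, ← ofReal_integral_eq_lintegral_ofReal hint
      (ae_of_all _ fun t => mul_nonneg (sliceWeight_nonneg t) (ballVolume_pos n).le),
    integral_mul_const, ← integral_Ioc_eq_integral_Ioo,
    ← intervalIntegral.integral_of_le (by norm_num)] at hball
  rw [mul_comm]
  exact ((ENNReal.ofReal_eq_ofReal_iff (mul_pos sliceMass_pos (ballVolume_pos n)).le
    (ballVolume_pos (n + 1)).le).1 hball).symm

end SliceWeight

section SliceQuantile

variable (n : ℕ)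

/-- The distribution function of the first coordinate of a uniform point of the unit ball
of `ℝⁿ⁺¹`. -/
def sliceCDF (x : ℝ) : ℝ := (sliceMass n)⁻¹ * ∫ s in (-1 : ℝ)..x, sliceWeight n s

lemma hasDerivAt_sliceCDF (x : ℝ) :
    HasDerivAt (sliceCDF n) ((sliceMass n)⁻¹ * sliceWeight n x) x :=
  ((continuous_sliceWeight n).integral_hasStrictDerivAt (-1) x).hasDerivAt.const_mul _

lemma continuous_sliceCDF : Continuous (sliceCDF n) :=
  continuous_iff_continuousAt.2 fun x => (hasDerivAt_sliceCDF n x).continuousAt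

lemma sliceCDF_neg_one : sliceCDF n (-1) = 0 := by simp [sliceCDF]

lemma sliceCDF_one : sliceCDF n 1 = 1 := inv_mul_cancel₀ sliceMass_pos.ne'

lemma strictMonoOn_sliceCDF : StrictMonoOn (sliceCDF n) (Set.Icc (-1) 1) := by
  refine strictMonoOn_of_deriv_pos (convex_Icc _ _) (continuous_sliceCDF n).continuousOn
    fun x hx => ?_
  rw [interior_Icc] at hx
  rw [(hasDerivAt_sliceCDF n x).deriv]
  exact mul_pos (inv_pos.2 sliceMass_pos) (sliceWeight_pos hx)

lemma exists_sliceCDF_eq_projIcc (y : ℝ) :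
    ∃ x ∈ Set.Icc (-1 : ℝ) 1, sliceCDF n x = Set.projIcc (0 : ℝ) 1 zero_le_one y := by
  have h := intermediate_value_Icc (by norm_num : (-1 : ℝ) ≤ 1)
    (continuous_sliceCDF n).continuousOn
  rw [sliceCDF_neg_one, sliceCDF_one] at h
  exact h (Set.projIcc (0 : ℝ) 1 zero_le_one y).2

/-- The inverse of `sliceCDF n` on `[0, 1]`, extended by `-1` and `1` outside. -/
def sliceQuantile (y : ℝ) : ℝ := (exists_sliceCDF_eq_projIcc n y).choose

variable {n} {x y : ℝ}

lemma sliceQuantile_mem_Icc (y : ℝ) : sliceQuantile n y ∈ Set.Icc (-1 : ℝ) 1 :=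
  (exists_sliceCDF_eq_projIcc n y).choose_spec.1

lemma sliceCDF_sliceQuantile_eq_projIcc (y : ℝ) :
    sliceCDF n (sliceQuantile n y) = Set.projIcc (0 : ℝ) 1 zero_le_one y :=
  (exists_sliceCDF_eq_projIcc n y).choose_spec.2

lemma sliceCDF_sliceQuantile (hy : y ∈ Set.Icc (0 : ℝ) 1) :
    sliceCDF n (sliceQuantile n y) = y := by
  rw [sliceCDF_sliceQuantile_eq_projIcc, Set.projIcc_of_mem _ hy]

variable (n) in
lemma monotone_sliceQuantile : Monotone (sliceQuantile n) := by
  intro x y hxy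
  rw [← (strictMonoOn_sliceCDF n).le_iff_le (sliceQuantile_mem_Icc x) (sliceQuantile_mem_Icc y),
    sliceCDF_sliceQuantile_eq_projIcc, sliceCDF_sliceQuantile_eq_projIcc]
  exact_mod_cast Set.monotone_projIcc (zero_le_one (α := ℝ)) hxy

lemma sliceCDF_mem_Icc (hx : x ∈ Set.Icc (-1 : ℝ) 1) : sliceCDF n x ∈ Set.Icc (0 : ℝ) 1 := by
  have hmono := (strictMonoOn_sliceCDF n).monotoneOn
  exact ⟨(sliceCDF_neg_one n).ge.trans (hmono (by simp) hx hx.1),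
    (hmono hx (by simp) hx.2).trans_eq (sliceCDF_one n)⟩

lemma sliceQuantile_sliceCDF (hx : x ∈ Set.Icc (-1 : ℝ) 1) : sliceQuantile n (sliceCDF n x) = x :=
  (strictMonoOn_sliceCDF n).injOn (sliceQuantile_mem_Icc _) hx
    (sliceCDF_sliceQuantile (sliceCDF_mem_Icc hx))

lemma sliceQuantile_mem_Ioo (hy : y ∈ Set.Ioo (0 : ℝ) 1) :
    sliceQuantile n y ∈ Set.Ioo (-1 : ℝ) 1 := by
  have hmem := sliceQuantile_mem_Icc (n := n) y
  have heq := sliceCDF_sliceQuantile (n := n) ⟨hy.1.le, hy.2.le⟩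
  refine ⟨hmem.1.lt_of_ne fun h => hy.1.ne ?_, hmem.2.lt_of_ne fun h => hy.2.ne' ?_⟩
  · rwa [← h, sliceCDF_neg_one] at heq
  · rwa [h, sliceCDF_one] at heq

lemma hasDerivAt_sliceQuantile (hy : y ∈ Set.Ioo (0 : ℝ) 1) :
    HasDerivAt (sliceQuantile n) (sliceMass n / sliceWeight n (sliceQuantile n y)) y := by
  have hmem := sliceQuantile_mem_Ioo (n := n) hy
  have hnhds : Set.Icc (0 : ℝ) 1 ∈ 𝓝 y := Icc_mem_nhds hy.1 hy.2
  have hcont : ContinuousAt (sliceQuantile n) y :=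
    continuousAt_of_monotoneOn_of_image_mem_nhds ((monotone_sliceQuantile n).monotoneOn _) hnhds <|
      mem_of_superset (Icc_mem_nhds hmem.1 hmem.2) fun x hx =>
        ⟨sliceCDF n x, sliceCDF_mem_Icc hx, sliceQuantile_sliceCDF hx⟩
  have hderiv := HasDerivAt.of_local_left_inverse hcont (hasDerivAt_sliceCDF n _)
    (mul_pos (inv_pos.2 sliceMass_pos) (sliceWeight_pos hmem)).ne'
    (by filter_upwards [hnhds] with z hz using sliceCDF_sliceQuantile hz)
  rwa [mul_inv, inv_inv, ← div_eq_mul_inv] at hderiv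

end SliceQuantile

/-! ### One-dimensional monotone transport -/

section WeakDerivative

variable {a a' η : ℝ → ℝ}

lemma hasDerivAt_integral_mul_comp_sub (ha : LocallyIntegrable a) (hη : ContDiff ℝ 1 η)
    (hc : HasCompactSupport η) :
    HasDerivAt (fun x => ∫ t, a t * η (t - x)) (-∫ t, a t * deriv η t) 0 := by
  have hconv := (hc.comp_homeomorph (Homeomorph.neg ℝ)).hasDerivAt_convolution_right
    (ContinuousLinearMap.mul ℝ ℝ) ha (hη.comp contDiff_neg) 0
  refine (hconv.congr_deriv ?_).congr_of_eventuallyEq (Eventually.of_forall fun x => ?_)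
  · simp [convolution_def, Function.comp_def, deriv_comp_neg, integral_neg]
  · simp [convolution_def]

lemma hasDerivAt_integral_comp_add_mul (ha : Monotone a) (hη : ContDiff ℝ 1 η)
    (hc : HasCompactSupport η) :
    HasDerivAt (fun x => ∫ t, a (t + x) * η t) (-∫ t, a t * deriv η t) 0 := by
  refine (hasDerivAt_integral_mul_comp_sub ha.locallyIntegrable hη hc).congr_of_eventuallyEq
    (Eventually.of_forall fun x => ?_)
  simpa using (integral_sub_right_eq_self (fun t => a (t + x) * η t) x).symm

lemma tendsto_forward_difference {f : ℝ → ℝ} {f' x : ℝ} (hf : HasDerivAt f f' x) :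
    Tendsto (fun k : ℕ => (f (x + ((k : ℝ) + 1)⁻¹) - f x) / ((k : ℝ) + 1)⁻¹) atTop (𝓝 f') := by
  have hne : Tendsto (fun k : ℕ => ((k : ℝ) + 1)⁻¹) atTop (𝓝[≠] 0) :=
    tendsto_nhdsWithin_iff.2 ⟨tendsto_inv_natCast_add_one,
      Eventually.of_forall fun k => inv_ne_zero k.cast_add_one_ne_zero⟩
  refine (hf.tendsto_slope_zero.comp hne).congr fun k => ?_
  simp only [Function.comp_apply, smul_eq_mul, div_eq_inv_mul]

lemma integral_mul_deriv_nonpos_and_lintegral_le (ha : Monotone a)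
    (hd : ∀ᵐ t, a' t = 0 ∨ HasDerivAt a (a' t) t) (hη : ContDiff ℝ 1 η)
    (hc : HasCompactSupport η) (h0 : ∀ t, 0 ≤ η t) :
    0 ≤ -∫ t, a t * deriv η t ∧
      ∫⁻ t, ENNReal.ofReal (a' t) * ENNReal.ofReal (η t) ≤
        ENNReal.ofReal (-∫ t, a t * deriv η t) := by
  set d : ℕ → ℝ → ℝ := fun k t => (a (t + ((k : ℝ) + 1)⁻¹) - a t) / ((k : ℝ) + 1)⁻¹ with hd_def
  have hd_nonneg (k : ℕ) (t : ℝ) : 0 ≤ d k t * η t :=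
    mul_nonneg (div_nonneg (sub_nonneg.2 (ha (le_add_of_nonneg_right (by positivity))))
      (by positivity)) (h0 t)
  have hint (x : ℝ) : Integrable fun t => a (t + x) * η t := by
    have hshift : Monotone fun t => a (t + x) := fun s t hst => ha (by gcongr)
    simpa only [smul_eq_mul] using
      hshift.locallyIntegrable.integrable_smul_right_of_hasCompactSupport hη.continuous hc
  have hd_eq (k : ℕ) (t : ℝ) :
      d k t * η t = (a (t + ((k : ℝ) + 1)⁻¹) * η t - a (t + 0) * η t) / ((k : ℝ) + 1)⁻¹ := by
    rw [add_zero, ← sub_mul, hd_def, div_mul_eq_mul_div]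
  have hd_int (k : ℕ) : Integrable fun t => d k t * η t := by
    simp only [hd_eq]
    exact ((hint _).sub (hint 0)).div_const _
  have hlim : Tendsto (fun k => ∫ t, d k t * η t) atTop (𝓝 (-∫ t, a t * deriv η t)) := by
    refine (tendsto_forward_difference (hasDerivAt_integral_comp_add_mul ha hη hc)).congr
      fun k => ?_
    simp only [hd_eq, integral_div, integral_sub (hint _) (hint 0), zero_add]
  refine ⟨ge_of_tendsto' hlim fun k => integral_nonneg (hd_nonneg k), ?_⟩
  have hlim' : Tendsto (fun k => ∫⁻ t, ENNReal.ofReal (d k t * η t)) atTop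
      (𝓝 (ENNReal.ofReal (-∫ t, a t * deriv η t))) :=
    ((ENNReal.continuous_ofReal.tendsto _).comp hlim).congr fun k =>
      ofReal_integral_eq_lintegral_ofReal (hd_int k) (ae_of_all _ (hd_nonneg k))
  rw [← hlim'.liminf_eq]
  refine (lintegral_mono_ae ?_).trans
    (lintegral_liminf_le' fun k => (hd_int k).aemeasurable.ennreal_ofReal)
  filter_upwards [hd] with t ht
  rcases ht with ht | ht
  · simp [ht]
  · rw [← ENNReal.ofReal_mul' (h0 t)]
    exact ((ENNReal.continuous_ofReal.tendsto _).comp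
      ((tendsto_forward_difference ht).mul_const (η t))).liminf_eq.ge

end WeakDerivative

section Transport

variable (n : ℕ) (m : ℝ → ENNReal) (t : ℝ)

/-- The normalized distribution function of the density `m` on the line, equal to `0` if `m` has
total mass `0` or `∞`. -/
def lineCDF : ℝ := (∫⁻ s in Set.Iio t, m s).toReal / (∫⁻ s, m s).toReal

/-- The monotone map of the line carrying the normalized density `m` to the law of the first
coordinate of a uniform point of the unit ball of `ℝⁿ⁺¹`. -/
def transport : ℝ := sliceQuantile n (lineCDF m t)

/-- The radius of the slice of the unit ball of `ℝⁿ⁺¹` at height `transport n m t`. -/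
def transportRadius : ℝ := √(1 - transport n m t ^ 2)

open Classical in
/-- The derivative of `transport n m`, set to `0` where `transport n m` takes the values `±1`. -/
def transportDeriv : ℝ :=
  if lineCDF m t ∈ Set.Ioo (0 : ℝ) 1 then
    sliceMass n / transportRadius n m t ^ n * ((m t).toReal / (∫⁻ s, m s).toReal)
  else 0

lemma transportRadius_nonneg : 0 ≤ transportRadius n m t := Real.sqrt_nonneg _

lemma transportDeriv_nonneg : 0 ≤ transportDeriv n m t := by
  unfold transportDeriv
  split_ifs
  · have hmass := sliceMass_pos (n := n)
    have hradius := transportRadius_nonneg n m t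
    positivity
  · exact le_rfl

lemma monotone_lineCDF : Monotone (lineCDF m) := by
  intro s t hst
  by_cases hm : ∫⁻ s, m s = ⊤
  · simp [lineCDF, hm]
  · refine div_le_div_of_nonneg_right (ENNReal.toReal_mono ?_ ?_) ENNReal.toReal_nonneg
    · exact ne_top_of_le_ne_top hm (setLIntegral_le_lintegral _ _)
    · exact lintegral_mono_set (Set.Iio_subset_Iio hst)

lemma lineCDF_mem_Icc : lineCDF m t ∈ Set.Icc (0 : ℝ) 1 := by
  refine ⟨div_nonneg ENNReal.toReal_nonneg ENNReal.toReal_nonneg, ?_⟩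
  by_cases hm : ∫⁻ s, m s = ⊤
  · simp [lineCDF, hm]
  · exact div_le_one_of_le₀ (ENNReal.toReal_mono hm (setLIntegral_le_lintegral _ _))
      ENNReal.toReal_nonneg

lemma monotone_transport : Monotone (transport n m) :=
  (monotone_sliceQuantile n).comp (monotone_lineCDF m)

lemma transport_sq_add_transportRadius_sq :
    transport n m t ^ 2 + transportRadius n m t ^ 2 = 1 := by
  have hle : transport n m t ^ 2 ≤ 1 :=
    (sq_le_one_iff_abs_le_one _).2 (abs_le.2 (sliceQuantile_mem_Icc _))
  rw [transportRadius, Real.sq_sqrt (by linarith), add_sub_cancel]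

variable {n m}

lemma lineCDF_eq (hm : Measurable m) (hfin : ∫⁻ s, m s ≠ ⊤) :
    lineCDF m t = (∫ s in Set.Iic t, (m s).toReal) / (∫⁻ s, m s).toReal := by
  rw [lineCDF, integral_Iic_eq_integral_Iio, integral_toReal hm.aemeasurable]
  exact ae_restrict_of_ae (ae_lt_top hm hfin)

lemma lineCDF_sub (hm : Measurable m) (hfin : ∫⁻ s, m s ≠ ⊤) (s : ℝ) :
    lineCDF m t - lineCDF m s = (∫ r in s..t, (m r).toReal) / (∫⁻ s, m s).toReal := by
  have hint := integrable_toReal_of_lintegral_ne_top hm.aemeasurable hfin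
  rw [lineCDF_eq t hm hfin, lineCDF_eq s hm hfin, ← sub_div,
    intervalIntegral.integral_Iic_sub_Iic hint.integrableOn hint.integrableOn]

lemma ae_hasDerivAt_lineCDF (hm : Measurable m) (hfin : ∫⁻ s, m s ≠ ⊤) :
    ∀ᵐ t, HasDerivAt (lineCDF m) ((m t).toReal / (∫⁻ s, m s).toReal) t := by
  have hint := integrable_toReal_of_lintegral_ne_top hm.aemeasurable hfin
  filter_upwards [LocallyIntegrable.ae_hasDerivAt_integral hint.locallyIntegrable] with t ht
  refine (((ht 0).div_const _).add_const (lineCDF m 0)).congr_of_eventuallyEq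
    (Eventually.of_forall fun s => ?_)
  exact (sub_eq_iff_eq_add.1 (lineCDF_sub s hm hfin 0))

lemma hasDerivAt_transport {f' : ℝ} (ht : lineCDF m t ∈ Set.Ioo (0 : ℝ) 1)
    (hf : HasDerivAt (lineCDF m) f' t) :
    HasDerivAt (transport n m) (sliceMass n / transportRadius n m t ^ n * f') t :=
  (hasDerivAt_sliceQuantile ht).comp t hf

variable (n) in
lemma ae_transportDeriv_eq_zero_or_hasDerivAt (hm : Measurable m) :
    ∀ᵐ t, transportDeriv n m t = 0 ∨ HasDerivAt (transport n m) (transportDeriv n m t) t := by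
  by_cases hfin : ∫⁻ s, m s = ⊤
  · exact ae_of_all _ fun t => Or.inl (by simp [transportDeriv, lineCDF, hfin])
  filter_upwards [ae_hasDerivAt_lineCDF hm hfin] with t ht
  by_cases h : lineCDF m t ∈ Set.Ioo (0 : ℝ) 1
  · rw [transportDeriv, if_pos h]
    exact Or.inr (hasDerivAt_transport t h ht)
  · exact Or.inl (if_neg h)

lemma transportRadius_pos (ht : lineCDF m t ∈ Set.Ioo (0 : ℝ) 1) : 0 < transportRadius n m t :=
  Real.sqrt_pos.2 (one_sub_sq_pos (sliceQuantile_mem_Ioo ht))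

lemma transportDeriv_mul_transportRadius_pow (ht : lineCDF m t ∈ Set.Ioo (0 : ℝ) 1) :
    transportDeriv n m t * transportRadius n m t ^ n =
      sliceMass n * (m t).toReal / (∫⁻ s, m s).toReal := by
  have hradius : transportRadius n m t ^ n ≠ 0 := (pow_pos (transportRadius_pos t ht) n).ne'
  rw [transportDeriv, if_pos ht]
  field_simp

lemma ae_lineCDF_mem_Ioo (hm : Measurable m) (hzero : ∫⁻ s, m s ≠ 0) (hfin : ∫⁻ s, m s ≠ ⊤) :
    ∀ᵐ t, m t ≠ 0 → lineCDF m t ∈ Set.Ioo (0 : ℝ) 1 := by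
  filter_upwards [ae_hasDerivAt_lineCDF hm hfin, ae_lt_top hm hfin] with t ht hlt hne
  have hderiv : (m t).toReal / (∫⁻ s, m s).toReal ≠ 0 :=
    div_ne_zero (ENNReal.toReal_pos hne hlt.ne).ne' (ENNReal.toReal_pos hzero hfin).ne'
  have hmem := lineCDF_mem_Icc m
  refine ⟨(hmem t).1.lt_of_ne fun h => hderiv ?_, (hmem t).2.lt_of_ne fun h => hderiv ?_⟩
  · have hmin : IsLocalMin (lineCDF m) t := Eventually.of_forall fun s => h ▸ (hmem s).1
    exact hmin.hasDerivAt_eq_zero ht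
  · have hmax : IsLocalMax (lineCDF m) t := Eventually.of_forall fun s => h ▸ (hmem s).2
    exact hmax.hasDerivAt_eq_zero ht

end Transport

section Measurability

variable {Ω : Type*} [MeasurableSpace Ω] {M : Ω → ℝ → ENNReal} (n : ℕ)

lemma measurable_lineCDF_prod (hM : Measurable fun p : Ω × ℝ => M p.1 p.2) :
    Measurable fun p : Ω × ℝ => lineCDF (M p.1) p.2 := by
  have htotal : Measurable fun ω => ∫⁻ s, M ω s := hM.lintegral_prod_right'
  have heq (p : Ω × ℝ) : ∫⁻ s in Set.Iio p.2, M p.1 s =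
      ∫⁻ s, {z : (Ω × ℝ) × ℝ | z.2 < z.1.2}.indicator (fun z => M z.1.1 z.2) (p, s) := by
    rw [← lintegral_indicator measurableSet_Iio]
    rfl
  have hpart : Measurable fun p : Ω × ℝ => ∫⁻ s in Set.Iio p.2, M p.1 s := by
    simp only [heq]
    exact ((hM.comp (measurable_fst.fst.prodMk measurable_snd)).indicator
      (measurableSet_lt measurable_snd (by fun_prop))).lintegral_prod_right'
  exact hpart.ennreal_toReal.div (htotal.comp measurable_fst).ennreal_toReal

lemma measurable_transport_prod (hM : Measurable fun p : Ω × ℝ => M p.1 p.2) :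
    Measurable fun p : Ω × ℝ => transport n (M p.1) p.2 :=
  (monotone_sliceQuantile n).measurable.comp (measurable_lineCDF_prod hM)

lemma measurable_transportRadius_prod (hM : Measurable fun p : Ω × ℝ => M p.1 p.2) :
    Measurable fun p : Ω × ℝ => transportRadius n (M p.1) p.2 := by
  have htransport := measurable_transport_prod n hM
  unfold transportRadius
  fun_prop

lemma measurable_transportDeriv_prod (hM : Measurable fun p : Ω × ℝ => M p.1 p.2) :
    Measurable fun p : Ω × ℝ => transportDeriv n (M p.1) p.2 := by
  have htotal : Measurable fun ω => ∫⁻ s, M ω s := hM.lintegral_prod_right'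
  refine Measurable.ite ((measurable_lineCDF_prod hM) measurableSet_Ioo) ?_ measurable_const
  exact (((measurable_transportRadius_prod n hM).pow_const n).const_div _).mul
    (hM.ennreal_toReal.div (htotal.comp measurable_fst).ennreal_toReal)

end Measurability

lemma measurable_transportRadius (n : ℕ) (m : ℝ → ENNReal) : Measurable (transportRadius n m) := by
  have htransport := (monotone_transport n m).measurable
  unfold transportRadius
  fun_prop

lemma measurable_transportDeriv (n : ℕ) {m : ℝ → ENNReal} (hm : Measurable m) :
    Measurable (transportDeriv n m) :=
  Measurable.ite ((monotone_lineCDF m).measurable measurableSet_Ioo)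
    ((((measurable_transportRadius n m).pow_const n).const_div _).mul
      (hm.ennreal_toReal.div_const _)) measurable_const

/-! ### The Knothe map -/

section HeadSlice

variable {n : ℕ} {A : Set (Fin (n + 1) → ℝ)}

/-- The slice of `A` on which the first coordinate equals `t`. -/
def headSlice (A : Set (Fin (n + 1) → ℝ)) (t : ℝ) : Set (Fin n → ℝ) :=
  {x' | (Fin.cons t x' : Fin (n + 1) → ℝ) ∈ A}

/-- The `n`-dimensional volume of `headSlice A t`. -/
def headSliceVolume (A : Set (Fin (n + 1) → ℝ)) (t : ℝ) : ENNReal := volume (headSlice A t)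

lemma continuous_finCons_right (t : ℝ) :
    Continuous fun x' : Fin n → ℝ => (Fin.cons t x' : Fin (n + 1) → ℝ) :=
  continuous_const.finCons continuous_id

lemma continuous_finCons_left (x' : Fin n → ℝ) :
    Continuous fun t : ℝ => (Fin.cons t x' : Fin (n + 1) → ℝ) :=
  Continuous.finCons (A := fun _ => ℝ) continuous_id continuous_const

lemma measurableSet_headSlice (hA : MeasurableSet A) (t : ℝ) : MeasurableSet (headSlice A t) :=
  (continuous_finCons_right t).measurable hA

lemma measurable_headSliceVolume (hA : MeasurableSet A) : Measurable (headSliceVolume A) :=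
  measurable_measure_prodMk_left (ν := (volume : Measure (Fin n → ℝ))) (measurable_finCons hA)

lemma lintegral_headSliceVolume (hA : MeasurableSet A) :
    ∫⁻ t, headSliceVolume A t = volume A := by
  rw [← lintegral_indicator_one hA, lintegral_finCons (measurable_one.indicator hA)]
  refine lintegral_congr fun t => ?_
  rw [headSliceVolume, ← lintegral_indicator_one (measurableSet_headSlice hA t)]
  rfl

end HeadSlice

section WeakDivergence

variable {n : ℕ}

/-- The distributional divergence of `T` is bounded below by the nonnegative function `D`. -/
def IsWeakDivLowerBound (T : (Fin n → ℝ) → Fin n → ℝ) (D : (Fin n → ℝ) → ENNReal) : Prop :=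
  ∀ η : (Fin n → ℝ) → ℝ, ContDiff ℝ 1 η → HasCompactSupport η → (∀ x, 0 ≤ η x) →
    0 ≤ -∫ x, fderiv ℝ η x (T x) ∧
      ∫⁻ x, D x * ENNReal.ofReal (η x) ≤ ENNReal.ofReal (-∫ x, fderiv ℝ η x (T x))

lemma integral_neg_and_lintegral_le_of_forall_headSlice {f : (Fin (n + 1) → ℝ) → ℝ}
    {g : (Fin (n + 1) → ℝ) → ENNReal} (hf : Integrable f) (hg : Measurable g)
    (h : ∀ t, 0 ≤ -∫ x', f (Fin.cons t x') ∧
      ∫⁻ x', g (Fin.cons t x') ≤ ENNReal.ofReal (-∫ x', f (Fin.cons t x'))) :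
    0 ≤ -∫ x, f x ∧ ∫⁻ x, g x ≤ ENNReal.ofReal (-∫ x, f x) := by
  rw [integral_finCons hf, lintegral_finCons hg, ← integral_neg,
    ofReal_integral_eq_lintegral_ofReal (by exact (integrable_finCons hf).integral_prod_left.neg)
      (ae_of_all _ fun t => (h t).1)]
  exact ⟨integral_nonneg fun t => (h t).1, lintegral_mono fun t => (h t).2⟩

lemma integral_neg_and_lintegral_le_of_forall_line {f : (Fin (n + 1) → ℝ) → ℝ}
    {g : (Fin (n + 1) → ℝ) → ENNReal} (hf : Integrable f) (hg : Measurable g)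
    (h : ∀ x', 0 ≤ -∫ t, f (Fin.cons t x') ∧
      ∫⁻ t, g (Fin.cons t x') ≤ ENNReal.ofReal (-∫ t, f (Fin.cons t x'))) :
    0 ≤ -∫ x, f x ∧ ∫⁻ x, g x ≤ ENNReal.ofReal (-∫ x, f x) := by
  rw [integral_finCons_symm hf, lintegral_finCons_symm hg, ← integral_neg,
    ofReal_integral_eq_lintegral_ofReal (by exact (integrable_finCons hf).integral_prod_right.neg)
      (ae_of_all _ fun x' => (h x').1)]
  exact ⟨integral_nonneg fun x' => (h x').1, lintegral_mono fun x' => (h x').2⟩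

lemma integrable_fderiv_apply_of_norm_le_one {η : (Fin n → ℝ) → ℝ} (hη : ContDiff ℝ 1 η)
    (hc : HasCompactSupport η) {T : (Fin n → ℝ) → Fin n → ℝ} (hT : Measurable T)
    (hT1 : ∀ x, ‖T x‖ ≤ 1) : Integrable fun x => fderiv ℝ η x (T x) := by
  have hcont : Continuous (fderiv ℝ η) := hη.continuous_fderiv one_ne_zero
  refine (hcont.integrable_of_hasCompactSupport (hc.fderiv ℝ)).mono
    (ContinuousLinearMap.measurable_apply₂.comp
    (hcont.measurable.prodMk hT)).aestronglyMeasurable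
    (ae_of_all _ fun x => ?_)
  exact ((fderiv ℝ η x).le_opNorm _).trans (mul_le_of_le_one_right (norm_nonneg _) (hT1 x))

lemma IsWeakDivLowerBound.add {T₁ T₂ : (Fin n → ℝ) → Fin n → ℝ} {D₁ D₂ : (Fin n → ℝ) → ENNReal}
    (hT₁ : Measurable T₁) (hT₁' : ∀ x, ‖T₁ x‖ ≤ 1) (hT₂ : Measurable T₂) (hT₂' : ∀ x, ‖T₂ x‖ ≤ 1)
    (hD₁ : Measurable D₁) (h₁ : IsWeakDivLowerBound T₁ D₁) (h₂ : IsWeakDivLowerBound T₂ D₂) :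
    IsWeakDivLowerBound (fun x => T₁ x + T₂ x) (fun x => D₁ x + D₂ x) := by
  intro η hη hc h0
  obtain ⟨hpos₁, hle₁⟩ := h₁ η hη hc h0
  obtain ⟨hpos₂, hle₂⟩ := h₂ η hη hc h0
  have hmeas : Measurable fun x => D₁ x * ENNReal.ofReal (η x) :=
    hD₁.mul hη.continuous.measurable.ennreal_ofReal
  simp only [map_add, add_mul]
  rw [integral_add (integrable_fderiv_apply_of_norm_le_one hη hc hT₁ hT₁')
    (integrable_fderiv_apply_of_norm_le_one hη hc hT₂ hT₂'), neg_add,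
    ENNReal.ofReal_add hpos₁ hpos₂, lintegral_add_left hmeas]
  exact ⟨add_nonneg hpos₁ hpos₂, add_le_add hle₁ hle₂⟩

variable {η : (Fin (n + 1) → ℝ) → ℝ}

lemma deriv_comp_finCons_left (hη : Differentiable ℝ η) (t : ℝ) (x' : Fin n → ℝ) :
    deriv (fun s => η (Fin.cons s x')) t = fderiv ℝ η (Fin.cons t x') (Fin.cons 1 0) := by
  have hcons : HasDerivAt (fun s => (Fin.cons s x' : Fin (n + 1) → ℝ)) (Fin.cons 1 0) t :=
    hasDerivAt_pi.2 fun i => by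
      cases i using Fin.cases with
      | zero => exact hasDerivAt_id t
      | succ j => exact hasDerivAt_const t (x' j)
  exact ((hη _).hasFDerivAt.comp_hasDerivAt t hcons).deriv

lemma fderiv_comp_finCons_right (hη : Differentiable ℝ η) (t : ℝ) (x' v : Fin n → ℝ) :
    fderiv ℝ (fun y => η (Fin.cons t y)) x' v = fderiv ℝ η (Fin.cons t x') (Fin.cons 0 v) := by
  have hcons : HasFDerivAt (fun y => (Fin.cons t y : Fin (n + 1) → ℝ)) _ x' :=
    (hasFDerivAt_const (𝕜 := ℝ) t x').finCons (F' := fun _ => ℝ) (hasFDerivAt_id x')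
  exact DFunLike.congr_fun ((hη _).hasFDerivAt.comp x' hcons).fderiv v

lemma contDiff_finCons {E : Type*} [NormedAddCommGroup E] [NormedSpace ℝ E] {f : E → ℝ}
    {g : E → Fin n → ℝ} {k : WithTop ℕ∞} (hf : ContDiff ℝ k f) (hg : ContDiff ℝ k g) :
    ContDiff ℝ k fun x => (Fin.cons (f x) (g x) : Fin (n + 1) → ℝ) :=
  contDiff_pi.2 fun i => by
    cases i using Fin.cases with
    | zero => exact hf
    | succ j => exact contDiff_pi.1 hg j

lemma hasCompactSupport_comp_finCons_left (hc : HasCompactSupport η) (x' : Fin n → ℝ) :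
    HasCompactSupport fun t => η (Fin.cons t x') :=
  hc.comp_isClosedEmbedding (Function.LeftInverse.isClosedEmbedding
    (f := fun x : Fin (n + 1) → ℝ => x 0) (fun _ => rfl) (continuous_apply 0)
    (continuous_finCons_left x'))

lemma hasCompactSupport_comp_finCons_right (hc : HasCompactSupport η) (t : ℝ) :
    HasCompactSupport fun x' : Fin n → ℝ => η (Fin.cons t x') :=
  hc.comp_isClosedEmbedding (Function.LeftInverse.isClosedEmbedding
    (f := fun x : Fin (n + 1) → ℝ => Fin.tail x) (fun _ => rfl) (by fun_prop)
    (continuous_finCons_right t))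

lemma measurable_head_tail :
    Measurable fun x : Fin (n + 1) → ℝ => (x 0, Fin.tail x) :=
  (measurable_pi_apply 0).prodMk (measurable_pi_lambda _ fun _ => measurable_pi_apply _)

lemma norm_finCons_le_one {r : ℝ} {v : Fin n → ℝ} (hr : |r| ≤ 1) (hv : ‖v‖ ≤ 1) :
    ‖(Fin.cons r v : Fin (n + 1) → ℝ)‖ ≤ 1 :=
  (pi_norm_le_iff_of_nonneg zero_le_one).2 fun i => by
    cases i using Fin.cases with
    | zero => exact hr
    | succ j => exact (norm_le_pi_norm v j).trans hv

section Step

variable {a a' b : ℝ → ℝ} {T : ℝ → (Fin n → ℝ) → Fin n → ℝ} {D : ℝ → (Fin n → ℝ) → ENNReal}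

lemma IsWeakDivLowerBound.head (ha : Monotone a) (ha1 : ∀ t, |a t| ≤ 1) (ha' : Measurable a')
    (hd : ∀ᵐ t, a' t = 0 ∨ HasDerivAt a (a' t) t) :
    IsWeakDivLowerBound (fun x : Fin (n + 1) → ℝ => Fin.cons (a (x 0)) 0)
      (fun x => ENNReal.ofReal (a' (x 0))) := by
  intro η hη hc h0
  have hmeas : Measurable fun x : Fin (n + 1) → ℝ => (Fin.cons (a (x 0)) 0 : Fin (n + 1) → ℝ) :=
    measurable_finCons.comp ((ha.measurable.comp (measurable_pi_apply 0)).prodMk measurable_const)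
  refine integral_neg_and_lintegral_le_of_forall_line
    (integrable_fderiv_apply_of_norm_le_one hη hc hmeas fun x =>
      norm_finCons_le_one (ha1 _) (by simp))
    ((ha'.comp (measurable_pi_apply 0)).ennreal_ofReal.mul hη.continuous.measurable.ennreal_ofReal)
    fun x' => ?_
  have hsmul (t : ℝ) : (Fin.cons (a t) 0 : Fin (n + 1) → ℝ) = a t • Fin.cons 1 0 := by
    ext i
    cases i using Fin.cases <;> simp
  simp only [Fin.cons_zero, hsmul, map_smul, smul_eq_mul,
    ← deriv_comp_finCons_left (hη.differentiable one_ne_zero)]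
  exact integral_mul_deriv_nonpos_and_lintegral_le ha hd
    (hη.comp (contDiff_finCons contDiff_id contDiff_const))
    (hasCompactSupport_comp_finCons_left hc x') fun t => h0 _

lemma IsWeakDivLowerBound.tail (hb : Measurable b) (hb0 : ∀ t, 0 ≤ b t) (hb1 : ∀ t, b t ≤ 1)
    (hT : Measurable fun p : ℝ × (Fin n → ℝ) => T p.1 p.2) (hT1 : ∀ t x, ‖T t x‖ ≤ 1)
    (hD : Measurable fun p : ℝ × (Fin n → ℝ) => D p.1 p.2)
    (h : ∀ t, IsWeakDivLowerBound (T t) (D t)) :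
    IsWeakDivLowerBound
      (fun x : Fin (n + 1) → ℝ => Fin.cons 0 (b (x 0) • T (x 0) (Fin.tail x)))
      (fun x => ENNReal.ofReal (b (x 0)) * D (x 0) (Fin.tail x)) := by
  intro η hη hc h0
  have hb' : Measurable fun x : Fin (n + 1) → ℝ => b (x 0) := hb.comp (measurable_pi_apply 0)
  have hmeas : Measurable fun x : Fin (n + 1) → ℝ =>
      (Fin.cons 0 (b (x 0) • T (x 0) (Fin.tail x)) : Fin (n + 1) → ℝ) :=
    measurable_finCons.comp (measurable_const.prodMk (hb'.smul (hT.comp measurable_head_tail)))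
  have hnorm (t : ℝ) (x' : Fin n → ℝ) : ‖b t • T t x'‖ ≤ 1 := by
    rw [norm_smul, Real.norm_of_nonneg (hb0 t)]
    exact mul_le_one₀ (hb1 t) (norm_nonneg _) (hT1 t x')
  refine integral_neg_and_lintegral_le_of_forall_headSlice
    (integrable_fderiv_apply_of_norm_le_one hη hc hmeas fun x =>
      norm_finCons_le_one (by simp) (hnorm _ _))
    ((hb'.ennreal_ofReal.mul (hD.comp measurable_head_tail)).mul
      hη.continuous.measurable.ennreal_ofReal) fun t => ?_
  obtain ⟨hnonneg, hle⟩ := h t _ (hη.comp (contDiff_finCons contDiff_const contDiff_id))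
    (hasCompactSupport_comp_finCons_right hc t) fun x' => h0 _
  simp only [Fin.cons_zero, Fin.tail_cons, mul_assoc,
    ← fderiv_comp_finCons_right (hη.differentiable one_ne_zero), map_smul, smul_eq_mul,
    integral_const_mul, lintegral_const_mul' _ _ ENNReal.ofReal_ne_top, ← mul_neg,
    ENNReal.ofReal_mul (hb0 t)]
  exact ⟨mul_nonneg (hb0 t) hnonneg, mul_le_mul_right hle _⟩

lemma IsWeakDivLowerBound.finCons (ha : Monotone a) (ha1 : ∀ t, |a t| ≤ 1) (ha' : Measurable a')
    (hd : ∀ᵐ t, a' t = 0 ∨ HasDerivAt a (a' t) t)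
    (hb : Measurable b) (hb0 : ∀ t, 0 ≤ b t) (hb1 : ∀ t, b t ≤ 1)
    (hT : Measurable fun p : ℝ × (Fin n → ℝ) => T p.1 p.2) (hT1 : ∀ t x, ‖T t x‖ ≤ 1)
    (hD : Measurable fun p : ℝ × (Fin n → ℝ) => D p.1 p.2)
    (h : ∀ t, IsWeakDivLowerBound (T t) (D t)) :
    IsWeakDivLowerBound
      (fun x : Fin (n + 1) → ℝ => Fin.cons (a (x 0)) (b (x 0) • T (x 0) (Fin.tail x)))
      (fun x => ENNReal.ofReal (a' (x 0)) +
        ENNReal.ofReal (b (x 0)) * D (x 0) (Fin.tail x)) := by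
  have hsum (x : Fin (n + 1) → ℝ) :
      (Fin.cons (a (x 0)) (b (x 0) • T (x 0) (Fin.tail x)) : Fin (n + 1) → ℝ) =
        Fin.cons (a (x 0)) 0 + Fin.cons 0 (b (x 0) • T (x 0) (Fin.tail x)) := by
    ext i
    cases i using Fin.cases <;> simp
  simp only [hsum]
  refine (IsWeakDivLowerBound.head ha ha1 ha' hd).add ?_ (fun x => ?_) ?_ (fun x => ?_) ?_
    (IsWeakDivLowerBound.tail hb hb0 hb1 hT hT1 hD h)
  · exact measurable_finCons.comp
      ((ha.measurable.comp (measurable_pi_apply 0)).prodMk measurable_const)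
  · exact norm_finCons_le_one (ha1 _) (by simp)
  · exact measurable_finCons.comp (measurable_const.prodMk
      ((hb.comp (measurable_pi_apply 0)).smul (hT.comp measurable_head_tail)))
  · refine norm_finCons_le_one (by simp) ?_
    rw [norm_smul, Real.norm_of_nonneg (hb0 _)]
    exact mul_le_one₀ (hb1 _) (norm_nonneg _) (hT1 _ _)
  · exact (ha'.comp (measurable_pi_apply 0)).ennreal_ofReal

end Step

end WeakDivergence

/-- The Knothe map of `A`, sending the uniform measure on `A` to the one on the unit ball.  The
first coordinate is transported monotonically between the slice volumes; the remaining ones are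
transported recursively and rescaled to the corresponding slice of the ball. -/
def knotheMap : (n : ℕ) → Set (Fin n → ℝ) → (Fin n → ℝ) → Fin n → ℝ
  | 0, _, _ => 0
  | n + 1, A, x => Fin.cons (transport n (headSliceVolume A) (x 0))
      (transportRadius n (headSliceVolume A) (x 0) •
        knotheMap n (headSlice A (x 0)) (Fin.tail x))

/-- The divergence of `knotheMap`, without its singular part. -/
def knotheDiv : (n : ℕ) → Set (Fin n → ℝ) → (Fin n → ℝ) → ENNReal
  | 0, _, _ => 0
  | n + 1, A, x => ENNReal.ofReal (transportDeriv n (headSliceVolume A) (x 0)) +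
      ENNReal.ofReal (transportRadius n (headSliceVolume A) (x 0)) *
        knotheDiv n (headSlice A (x 0)) (Fin.tail x)

lemma sum_sq_knotheMap_le_one {n : ℕ} (A : Set (Fin n → ℝ)) (x : Fin n → ℝ) :
    ∑ i, knotheMap n A x i ^ 2 ≤ 1 := by
  induction n with
  | zero => simp
  | succ n ih =>
    simp only [knotheMap, Fin.sum_univ_succ, Fin.cons_zero, Fin.cons_succ, Pi.smul_apply,
      smul_eq_mul, mul_pow, ← Finset.mul_sum]
    have hcircle := transport_sq_add_transportRadius_sq n (headSliceVolume A) (x 0)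
    have htail := mul_le_of_le_one_right
      (sq_nonneg (transportRadius n (headSliceVolume A) (x 0)))
      (ih (headSlice A (x 0)) (Fin.tail x))
    linarith

lemma norm_knotheMap_le_one {n : ℕ} (A : Set (Fin n → ℝ)) (x : Fin n → ℝ) :
    ‖knotheMap n A x‖ ≤ 1 :=
  (pi_norm_le_iff_of_nonneg zero_le_one).2 fun i => (sq_le_one_iff_abs_le_one _).1 <|
    (Finset.single_le_sum (f := fun i => knotheMap n A x i ^ 2) (fun _ _ => sq_nonneg _)
      (Finset.mem_univ i)).trans (sum_sq_knotheMap_le_one A x)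

lemma headSlice_preimage_prodMk {Ω : Type*} {n : ℕ} (A : Set (Ω × (Fin (n + 1) → ℝ))) (ω : Ω)
    (t : ℝ) : headSlice (Prod.mk ω ⁻¹' A) t = Prod.mk (ω, t) ⁻¹'
      ((fun p : (Ω × ℝ) × (Fin n → ℝ) => (p.1.1, Fin.cons p.1.2 p.2)) ⁻¹' A) := rfl

section Measurability

variable {Ω : Type*} [MeasurableSpace Ω] {n : ℕ}

lemma measurableSet_preimage_finCons {A : Set (Ω × (Fin (n + 1) → ℝ))} (hA : MeasurableSet A) :
    MeasurableSet ((fun p : (Ω × ℝ) × (Fin n → ℝ) => (p.1.1, Fin.cons p.1.2 p.2)) ⁻¹' A) :=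
  (measurable_fst.fst.prodMk
    (measurable_finCons.comp (measurable_fst.snd.prodMk measurable_snd))) hA

lemma measurable_headSliceVolume_prod {A : Set (Ω × (Fin (n + 1) → ℝ))} (hA : MeasurableSet A) :
    Measurable fun p : Ω × ℝ => headSliceVolume (Prod.mk p.1 ⁻¹' A) p.2 :=
  measurable_measure_prodMk_left (ν := (volume : Measure (Fin n → ℝ)))
    (measurableSet_preimage_finCons hA)

lemma measurable_prod_head_tail :
    Measurable fun p : Ω × (Fin (n + 1) → ℝ) => ((p.1, p.2 0), Fin.tail p.2) :=
  (measurable_fst.prodMk (measurable_head_tail.comp measurable_snd).fst).prodMk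
    (measurable_head_tail.comp measurable_snd).snd

lemma measurable_knotheMap_prod {A : Set (Ω × (Fin n → ℝ))} (hA : MeasurableSet A) :
    Measurable fun p : Ω × (Fin n → ℝ) => knotheMap n (Prod.mk p.1 ⁻¹' A) p.2 := by
  induction n generalizing Ω with
  | zero => exact measurable_const
  | succ n ih =>
    let M (ω : Ω) := headSliceVolume (Prod.mk ω ⁻¹' A)
    have hV : Measurable fun p : Ω × ℝ => M p.1 p.2 := measurable_headSliceVolume_prod hA
    simp only [knotheMap, headSlice_preimage_prodMk]
    have hx := measurable_prod_head_tail (Ω := Ω) (n := n)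
    have ha := (measurable_transport_prod n (M := M) hV).comp hx.fst
    have hb := (measurable_transportRadius_prod n (M := M) hV).comp hx.fst
    have hT := (ih (measurableSet_preimage_finCons hA)).comp hx
    exact measurable_finCons.comp (ha.prodMk (hb.smul hT))

lemma measurable_knotheDiv_prod {A : Set (Ω × (Fin n → ℝ))} (hA : MeasurableSet A) :
    Measurable fun p : Ω × (Fin n → ℝ) => knotheDiv n (Prod.mk p.1 ⁻¹' A) p.2 := by
  induction n generalizing Ω with
  | zero => exact measurable_const
  | succ n ih =>
    let M (ω : Ω) := headSliceVolume (Prod.mk ω ⁻¹' A)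
    have hV : Measurable fun p : Ω × ℝ => M p.1 p.2 := measurable_headSliceVolume_prod hA
    simp only [knotheDiv, headSlice_preimage_prodMk]
    have hx := measurable_prod_head_tail (Ω := Ω) (n := n)
    have ha' := (measurable_transportDeriv_prod n (M := M) hV).comp hx.fst
    have hb := (measurable_transportRadius_prod n (M := M) hV).comp hx.fst
    have hD := (ih (measurableSet_preimage_finCons hA)).comp hx
    exact ha'.ennreal_ofReal.add (hb.ennreal_ofReal.mul hD)

end Measurability

section AMGM

variable {n : ℕ} {x y c : ℝ}

lemma rpow_inv_mul_rpow_div_eq (hx : 0 ≤ x) (hy : 0 ≤ y) (hc : 0 ≤ c)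
    (h : x * y ^ n = c ^ (n + 1)) : x ^ (n + 1 : ℝ)⁻¹ * y ^ (n / (n + 1) : ℝ) = c := by
  rw [div_eq_mul_inv, Real.rpow_mul hy, Real.rpow_natCast, ← Real.mul_rpow hx (pow_nonneg hy n), h]
  exact_mod_cast Real.pow_rpow_inv_natCast hc n.succ_ne_zero

lemma mul_le_add_mul_of_mul_pow_eq (hx : 0 ≤ x) (hy : 0 ≤ y) (hc : 0 ≤ c)
    (h : x * y ^ n = c ^ (n + 1)) : (n + 1) * c ≤ x + n * y := by
  have hn : (0 : ℝ) < n + 1 := n.cast_add_one_pos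
  have hmean := Real.geom_mean_le_arith_mean2_weighted (inv_nonneg.2 hn.le)
    (div_nonneg n.cast_nonneg hn.le) hx hy (by field_simp; ring)
  rw [rpow_inv_mul_rpow_div_eq hx hy hc h] at hmean
  calc (n + 1) * c ≤ (n + 1) * ((n + 1 : ℝ)⁻¹ * x + n / (n + 1) * y) := by gcongr
    _ = x + n * y := by field_simp

lemma mul_lt_add_mul_of_mul_pow_eq (hn : n ≠ 0) (hx : 0 ≤ x) (hy : 0 ≤ y) (hc : 0 ≤ c)
    (h : x * y ^ n = c ^ (n + 1)) (hne : x ≠ c) : (n + 1) * c < x + n * y := by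
  have hn' : (0 : ℝ) < n := Nat.cast_pos.2 (Nat.pos_of_ne_zero hn)
  have hxy : x ≠ y := by
    rintro rfl
    exact hne ((pow_left_inj₀ hx hc n.succ_ne_zero).1 (by rwa [pow_succ']))
  have hmean := (Real.geom_mean_lt_arith_mean2_weighted_iff_of_pos (inv_pos.2 n.cast_add_one_pos)
    (div_pos hn' n.cast_add_one_pos) hx hy (by field_simp; ring)).2 hxy
  rw [rpow_inv_mul_rpow_div_eq hx hy hc h] at hmean
  calc (n + 1) * c < (n + 1) * ((n + 1 : ℝ)⁻¹ * x + n / (n + 1) * y) := by gcongr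
    _ = x + n * y := by field_simp

end AMGM

section Knothe

variable {n : ℕ}

lemma measurable_knotheMap {A : Set (Fin n → ℝ)} (hA : MeasurableSet A) :
    Measurable (knotheMap n A) :=
  (measurable_knotheMap_prod (Ω := Unit) (measurable_snd hA)).comp
    (measurable_prodMk_left (x := ()))

lemma measurable_knotheDiv {A : Set (Fin n → ℝ)} (hA : MeasurableSet A) :
    Measurable (knotheDiv n A) :=
  (measurable_knotheDiv_prod (Ω := Unit) (measurable_snd hA)).comp
    (measurable_prodMk_left (x := ()))

lemma isWeakDivLowerBound_knotheMap {A : Set (Fin n → ℝ)} (hA : MeasurableSet A) :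
    IsWeakDivLowerBound (knotheMap n A) (knotheDiv n A) := by
  induction n with
  | zero =>
    intro η _ _ _
    simp only [knotheMap, knotheDiv, map_zero, integral_zero, zero_mul, lintegral_zero, neg_zero,
      le_refl, zero_le, and_self]
  | succ n ih =>
    set m := headSliceVolume A
    have hm : Measurable m := measurable_headSliceVolume hA
    have ha1 (t : ℝ) : |transport n m t| ≤ 1 := abs_le.2 (sliceQuantile_mem_Icc _)
    have hb1 (t : ℝ) : transportRadius n m t ≤ 1 :=
      Real.sqrt_le_one.2 (sub_le_self _ (sq_nonneg _))
    have hT : Measurable fun p : ℝ × (Fin n → ℝ) => knotheMap n (headSlice A p.1) p.2 :=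
      measurable_knotheMap_prod (measurable_finCons hA)
    have hD : Measurable fun p : ℝ × (Fin n → ℝ) => knotheDiv n (headSlice A p.1) p.2 :=
      measurable_knotheDiv_prod (measurable_finCons hA)
    exact IsWeakDivLowerBound.finCons (T := fun t => knotheMap n (headSlice A t))
      (D := fun t => knotheDiv n (headSlice A t)) (monotone_transport n m) ha1
      (measurable_transportDeriv n hm) (ae_transportDeriv_eq_zero_or_hasDerivAt n hm)
      (measurable_transportRadius n m) (transportRadius_nonneg n m) hb1 hT
      (fun _ _ => norm_knotheMap_le_one _ _) hD fun t => ih (measurableSet_headSlice hA t)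

/-- The factor `(|B| / |A|) ^ (1 / n)` by which an `n`-dimensional set `A` of volume `V` is dilated
to have the volume of the unit ball `B`. -/
def invRadius (n : ℕ) (V : ENNReal) : ℝ := (ballVolume n / V.toReal) ^ (n : ℝ)⁻¹

lemma invRadius_nonneg (n : ℕ) (V : ENNReal) : 0 ≤ invRadius n V :=
  Real.rpow_nonneg (div_nonneg (ballVolume_pos n).le ENNReal.toReal_nonneg) _

lemma invRadius_pow (hn : n ≠ 0) (V : ENNReal) :
    invRadius n V ^ n = ballVolume n / V.toReal :=
  Real.rpow_inv_natCast_pow (div_nonneg (ballVolume_pos n).le ENNReal.toReal_nonneg) hn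

lemma ballVolume_zero : ballVolume 0 = 1 := by
  have hvol := volume_sum_sq_lt (n := 0) one_pos
  have huniv : {x : Fin 0 → ℝ | ∑ i, x i ^ 2 < 1} = Set.univ := Set.eq_univ_of_forall fun x => by
    simp
  rw [huniv, volume_pi, Measure.pi_of_empty] at hvol
  exact ENNReal.ofReal_eq_one.1 (by simpa using hvol.symm)

lemma invRadius_volume_pow {S : Set (Fin n → ℝ)} (hS : volume S ≠ 0) :
    invRadius n (volume S) ^ n = ballVolume n / (volume S).toReal := by
  rcases eq_or_ne n 0 with rfl | hn
  · rw [Subsingleton.eq_univ_of_nonempty (nonempty_of_measure_ne_zero hS), volume_pi,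
      Measure.pi_of_empty]
    simp [ballVolume_zero]
  · exact invRadius_pow hn _

/-- The Jacobian of the Knothe map is the constant `|B| / |A|`. -/
lemma ae_transportDeriv_mul_pow_eq {A : Set (Fin (n + 1) → ℝ)} (hA : MeasurableSet A)
    (h0 : volume A ≠ 0) (h1 : volume A ≠ ⊤) :
    ∀ᵐ t, headSliceVolume A t ≠ 0 → headSliceVolume A t ≠ ⊤ ∧
      transportDeriv n (headSliceVolume A) t *
        (transportRadius n (headSliceVolume A) t * invRadius n (headSliceVolume A t)) ^ n =
      invRadius (n + 1) (volume A) ^ (n + 1) := by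
  have hV := measurable_headSliceVolume hA
  rw [← lintegral_headSliceVolume hA] at h0 h1
  filter_upwards [ae_lt_top hV h1, ae_lineCDF_mem_Ioo hV h0 h1] with t htop hmem hne
  refine ⟨htop.ne, ?_⟩
  have hpos : (headSliceVolume A t).toReal ≠ 0 := ENNReal.toReal_ne_zero.2 ⟨hne, htop.ne⟩
  have hpow : invRadius n (headSliceVolume A t) ^ n = ballVolume n / (headSliceVolume A t).toReal :=
    invRadius_volume_pow hne
  rw [mul_pow, hpow, ← mul_assoc, transportDeriv_mul_transportRadius_pow t (hmem hne),
    lintegral_headSliceVolume hA, invRadius_pow n.succ_ne_zero, ballVolume_succ]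
  field_simp

/-- The recursive formula for `knotheDiv`, with the divergence on the slice replaced by its lower
bound `n * invRadius n (headSliceVolume A t)`. -/
def knotheDivBound (n : ℕ) (A : Set (Fin (n + 1) → ℝ)) (t : ℝ) : ℝ :=
  transportDeriv n (headSliceVolume A) t +
    n * (transportRadius n (headSliceVolume A) t * invRadius n (headSliceVolume A t))

lemma measurable_knotheDivBound {A : Set (Fin (n + 1) → ℝ)} (hA : MeasurableSet A) :
    Measurable (knotheDivBound n A) := by
  have hm := measurable_headSliceVolume hA
  have hinv : Measurable fun t => invRadius n (headSliceVolume A t) :=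
    (hm.ennreal_toReal.const_div _).pow_const _
  exact (measurable_transportDeriv n hm).add
    (((measurable_transportRadius n _).mul hinv).const_mul _)

lemma ofReal_knotheDivBound_le {A : Set (Fin (n + 1) → ℝ)} {t : ℝ} {x' : Fin n → ℝ}
    (h : ENNReal.ofReal (n * invRadius n (headSliceVolume A t)) ≤ knotheDiv n (headSlice A t) x') :
    ENNReal.ofReal (knotheDivBound n A t) ≤ knotheDiv (n + 1) A (Fin.cons t x') := by
  have hr := transportRadius_nonneg n (headSliceVolume A) t
  have hinv := invRadius_nonneg n (headSliceVolume A t)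
  simp only [knotheDivBound, knotheDiv, Fin.cons_zero, Fin.tail_cons]
  rw [ENNReal.ofReal_add (transportDeriv_nonneg _ _ _) (by positivity), mul_left_comm,
    ENNReal.ofReal_mul hr]
  gcongr

lemma ae_headSliceVolume_ne_zero_and_le_knotheDiv {A : Set (Fin (n + 1) → ℝ)}
    (hA : MeasurableSet A)
    (h : ∀ t, headSliceVolume A t ≠ 0 → headSliceVolume A t ≠ ⊤ → ∀ᵐ x', x' ∈ headSlice A t →
      ENNReal.ofReal (n * invRadius n (headSliceVolume A t)) ≤ knotheDiv n (headSlice A t) x') :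
    ∀ᵐ x, x ∈ A → headSliceVolume A (x 0) ≠ 0 ∧ (headSliceVolume A (x 0) ≠ ⊤ →
      ENNReal.ofReal (knotheDivBound n A (x 0)) ≤ knotheDiv (n + 1) A x) := by
  have hhead : Measurable fun x : Fin (n + 1) → ℝ => x 0 := measurable_pi_apply 0
  have hV := (measurable_headSliceVolume hA).comp hhead
  have hbound := (measurable_knotheDivBound hA).comp hhead
  refine (ae_mem_iff_ae_ae_finCons_mem (hA.imp ((hV (measurableSet_singleton 0)).compl.inter
    ((hV (measurableSet_singleton ⊤)).compl.imp
    (measurableSet_le hbound.ennreal_ofReal (measurable_knotheDiv hA)))))).2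
    (ae_of_all _ fun t => ?_)
  by_cases h0 : headSliceVolume A t = 0
  · filter_upwards [measure_eq_zero_iff_ae_notMem.1 h0] with x' hx' hmem using absurd hmem hx'
  by_cases h1 : headSliceVolume A t = ⊤
  · exact ae_of_all _ fun x' _ => ⟨h0, fun htop => absurd h1 htop⟩
  filter_upwards [h t h0 h1] with x' hx' hmem
  exact ⟨h0, fun _ => ofReal_knotheDivBound_le (hx' hmem)⟩

lemma ae_le_knotheDivBound {A : Set (Fin (n + 1) → ℝ)} (hA : MeasurableSet A)
    (h0 : volume A ≠ 0) (h1 : volume A ≠ ⊤) :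
    ∀ᵐ t, headSliceVolume A t ≠ 0 →
      (n + 1) * invRadius (n + 1) (volume A) ≤ knotheDivBound n A t := by
  filter_upwards [ae_transportDeriv_mul_pow_eq hA h0 h1] with t ht hne
  exact mul_le_add_mul_of_mul_pow_eq (transportDeriv_nonneg _ _ _)
    (mul_nonneg (transportRadius_nonneg _ _ _) (invRadius_nonneg _ _)) (invRadius_nonneg _ _)
    (ht hne).2

lemma ae_le_knotheDiv {A : Set (Fin n → ℝ)} (hA : MeasurableSet A) (h0 : volume A ≠ 0)
    (h1 : volume A ≠ ⊤) :
    ∀ᵐ x, x ∈ A → ENNReal.ofReal (n * invRadius n (volume A)) ≤ knotheDiv n A x := by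
  induction n with
  | zero => simp
  | succ n ih =>
    have hhead : Measure.QuasiMeasurePreserving (fun x : Fin (n + 1) → ℝ => x 0) :=
      Measure.quasiMeasurePreserving_eval (fun _ => volume) 0
    filter_upwards [ae_headSliceVolume_ne_zero_and_le_knotheDiv hA
        fun t => ih (measurableSet_headSlice hA t),
      hhead.ae (ae_transportDeriv_mul_pow_eq hA h0 h1), hhead.ae (ae_le_knotheDivBound hA h0 h1)]
      with x hx hfin hle hmem
    obtain ⟨hne, hbound⟩ := hx hmem
    push_cast
    exact (ENNReal.ofReal_le_ofReal (hle hne)).trans (hbound (hfin hne).1)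

end Knothe

section MollifiedField

variable {N k : ℕ}

lemma integrable_fderiv_mollifier : Integrable (fderiv ℝ (mollifier N k)) :=
  (contDiff_mollifier.continuous_fderiv one_ne_zero).integrable_of_hasCompactSupport
    (hasCompactSupport_mollifier.fderiv (𝕜 := ℝ))

lemma divergence_mollify_eq_integral {E : Euc N → Euc N} (hE : LocallyIntegrable E) (x : Euc N) :
    divergence (mollify k E) x = ∫ y, fderiv ℝ (mollifier N k) (x - y) (E y) := by
  have hconv : ConvolutionExistsAt (fderiv ℝ (mollifier N k)) E x
      ((ContinuousLinearMap.lsmul ℝ ℝ).precompL (Euc N)) volume :=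
    (hasCompactSupport_mollifier.fderiv (𝕜 := ℝ)).convolutionExists_left _
      (contDiff_mollifier.continuous_fderiv one_ne_zero) hE x
  have hderiv := hasCompactSupport_mollifier.hasFDerivAt_convolution_left
    (ContinuousLinearMap.lsmul ℝ ℝ) (contDiff_mollifier (N := N) (k := k)) hE x
  rw [← mollify_eq_convolution] at hderiv
  let trace : (Euc N →L[ℝ] Euc N) →L[ℝ] ℝ :=
    ∑ i, (EuclideanSpace.proj i).comp (ContinuousLinearMap.apply ℝ _ (EuclideanSpace.single i 1))
  have htrace (A : Euc N →L[ℝ] Euc N) : trace A = ∑ i, A (EuclideanSpace.single i 1) i := by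
    simp [trace]
  rw [divergence_eq_sum hderiv, ← htrace, convolution_def,
    ← trace.integral_comp_comm hconv.integrable,
    ← integral_sub_left_eq_self (fun y => fderiv ℝ (mollifier N k) (x - y) (E y)) volume x]
  refine integral_congr_ae (ae_of_all _ fun y => ?_)
  simp only [htrace, sub_sub_cancel, ContinuousLinearMap.precompL_apply,
    ContinuousLinearMap.lsmul_apply, PiLp.smul_apply, smul_eq_mul]
  conv_rhs => rw [← (EuclideanSpace.basisFun (Fin N) ℝ).sum_repr (E (x - y))]
  simp [mul_comm]

lemma norm_divergence_mollify_le {E : Euc N → Euc N} (hE : LocallyIntegrable E)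
    (hE1 : ∀ x, ‖E x‖ ≤ 1) (x : Euc N) :
    ‖divergence (mollify k E) x‖ ≤ ∫ y, ‖fderiv ℝ (mollifier N k) y‖ := by
  rw [divergence_mollify_eq_integral hE,
    ← integral_sub_left_eq_self (fun y => ‖fderiv ℝ (mollifier N k) y‖) volume x]
  exact norm_integral_le_of_norm_le (integrable_fderiv_mollifier.comp_sub_left x).norm
    (ae_of_all _ fun y => ContinuousLinearMap.le_of_opNorm_le_of_le _ le_rfl (hE1 y) |>.trans_eq
      (mul_one _))

lemma lintegral_mul_ofReal_mollify_le {d : Euc N → ENNReal} (hd : Measurable d) {u : Euc N → ℝ}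
    (hu : AEMeasurable u) (hu0 : ∀ x, 0 ≤ u x) :
    ∫⁻ x, d x * ENNReal.ofReal (mollify k u x) ≤
      ∫⁻ y, ENNReal.ofReal (u y) * ∫⁻ x, d x * ENNReal.ofReal (mollifier N k (y - x)) := by
  have hmoll : Measurable fun p : Euc N × Euc N => ENNReal.ofReal (mollifier N k (p.1 - p.2)) :=
    (continuous_mollifier.comp (continuous_fst.sub continuous_snd)).measurable.ennreal_ofReal
  have hmoll' (x : Euc N) : Measurable fun y => ENNReal.ofReal (mollifier N k (x - y)) :=
    (continuous_mollifier.comp (continuous_sub_left x)).measurable.ennreal_ofReal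
  have hu' := hu.ennreal_ofReal
  have hle (x : Euc N) : ENNReal.ofReal (mollify k u x) ≤
      ∫⁻ y, ENNReal.ofReal (mollifier N k (x - y)) * ENNReal.ofReal (u y) := by
    refine (Real.ofReal_le_enorm _).trans
      ((enorm_integral_le_lintegral_enorm _).trans_eq (lintegral_congr fun y => ?_))
    rw [smul_eq_mul, enorm_mul, Real.enorm_of_nonneg (mollifier_nonneg _),
      Real.enorm_of_nonneg (hu0 y)]
  calc ∫⁻ x, d x * ENNReal.ofReal (mollify k u x)
      ≤ ∫⁻ x, ∫⁻ y, d x * (ENNReal.ofReal (mollifier N k (x - y)) * ENNReal.ofReal (u y)) := by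
        refine lintegral_mono fun x => ?_
        rw [lintegral_const_mul'' _ (by exact (hmoll' x).aemeasurable.mul hu')]
        gcongr
        exact hle x
    _ = ∫⁻ y, ∫⁻ x, d x * (ENNReal.ofReal (mollifier N k (x - y)) * ENNReal.ofReal (u y)) := by
        refine lintegral_lintegral_swap ?_
        exact (hd.comp measurable_fst).aemeasurable.mul (hmoll.aemeasurable.mul
          (hu'.comp_quasiMeasurePreserving Measure.quasiMeasurePreserving_snd))
    _ = ∫⁻ y, ENNReal.ofReal (u y) * ∫⁻ x, d x * ENNReal.ofReal (mollifier N k (y - x)) := by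
        refine lintegral_congr fun y => ?_
        rw [← lintegral_const_mul _ (by exact hd.mul (hmoll' y))]
        refine lintegral_congr fun x => ?_
        rw [mollifier_sub_comm]
        ring

variable {T : (Fin N → ℝ) → Fin N → ℝ} {D : (Fin N → ℝ) → ENNReal}

lemma locallyIntegrable_toLp (hT : Measurable T)
    (hT1 : ∀ x, ‖(WithLp.toLp 2 (T x) : Euc N)‖ ≤ 1) :
    LocallyIntegrable fun x : Euc N => (WithLp.toLp 2 (T x.ofLp) : Euc N) := by
  have hm : Measurable fun x : Euc N => (WithLp.toLp 2 (T x.ofLp) : Euc N) := by fun_prop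
  exact (locallyIntegrable_const (1 : ℝ)).mono hm.aestronglyMeasurable
    (ae_of_all _ fun x => (hT1 x.ofLp).trans_eq norm_one.symm)

lemma hasFDerivAt_mollifier_sub_toLp (x : Euc N) (y : Fin N → ℝ) :
    HasFDerivAt (fun y : Fin N → ℝ => mollifier N k (x - WithLp.toLp 2 y))
      (-(fderiv ℝ (mollifier N k) (x - WithLp.toLp 2 y)).comp
        (PiLp.continuousLinearEquiv 2 ℝ fun _ : Fin N => ℝ).symm.toContinuousLinearMap) y := by
  have hsub := ((PiLp.continuousLinearEquiv 2 ℝ fun _ : Fin N =>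
    ℝ).symm.toContinuousLinearMap.hasFDerivAt (x := y)).const_sub x
  have hmoll := (contDiff_mollifier (N := N) (k := k)).differentiable one_ne_zero
    (x - WithLp.toLp 2 y)
  rw [← ContinuousLinearMap.comp_neg]
  exact hmoll.hasFDerivAt.comp y hsub

lemma IsWeakDivLowerBound.divergence_mollify_nonneg_and_lintegral_le
    (h : IsWeakDivLowerBound T D) (hT : Measurable T)
    (hT1 : ∀ x, ‖(WithLp.toLp 2 (T x) : Euc N)‖ ≤ 1) (x : Euc N) :
    0 ≤ divergence (mollify k fun y : Euc N => WithLp.toLp 2 (T y.ofLp)) x ∧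
      ∫⁻ y : Euc N, D y.ofLp * ENNReal.ofReal (mollifier N k (x - y)) ≤
        ENNReal.ofReal (divergence (mollify k fun y : Euc N => WithLp.toLp 2 (T y.ofLp)) x) := by
  have htoLp := PiLp.volume_preserving_toLp (Fin N)
  have hemb := (MeasurableEquiv.toLp 2 (Fin N → ℝ)).measurableEmbedding
  have hdiv : divergence (mollify k fun y : Euc N => WithLp.toLp 2 (T y.ofLp)) x =
      -∫ y, fderiv ℝ (fun y : Fin N → ℝ => mollifier N k (x - WithLp.toLp 2 y)) y (T y) := by
    rw [divergence_mollify_eq_integral (locallyIntegrable_toLp hT hT1), ← integral_neg,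
      ← htoLp.integral_comp hemb]
    refine integral_congr_ae (ae_of_all _ fun y => ?_)
    simp [(hasFDerivAt_mollifier_sub_toLp x y).fderiv]
  have hsmooth : ContDiff ℝ 1 fun y : Fin N → ℝ => mollifier N k (x - WithLp.toLp 2 y) :=
    contDiff_mollifier.comp (contDiff_const.sub
      (PiLp.continuousLinearEquiv 2 ℝ fun _ : Fin N => ℝ).symm.contDiff)
  have hcompact : HasCompactSupport fun y : Fin N → ℝ => mollifier N k (x - WithLp.toLp 2 y) :=
    hasCompactSupport_mollifier.comp_homeomorph
      ((PiLp.homeomorph 2 fun _ : Fin N => ℝ).symm.trans (Homeomorph.subLeft x))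
  rw [hdiv, ← htoLp.lintegral_comp_emb hemb]
  exact h _ hsmooth hcompact fun y => mollifier_nonneg _

lemma IsWeakDivLowerBound.lintegral_mul_mollify_le_tv (h : IsWeakDivLowerBound T D)
    (hT : Measurable T) (hT1 : ∀ x, ‖(WithLp.toLp 2 (T x) : Euc N)‖ ≤ 1) (hD : Measurable D)
    {u : Euc N → ℝ} (hu : MemBV N u) (hu0 : ∀ x, 0 ≤ u x) :
    ∫⁻ x : Euc N, D x.ofLp * ENNReal.ofReal (mollify k u x) ≤ ENNReal.ofReal (tv N u) := by
  set E : Euc N → Euc N := fun x => WithLp.toLp 2 (T x.ofLp)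
  have hE : LocallyIntegrable E := locallyIntegrable_toLp hT hT1
  have hE1 (x : Euc N) : ‖E x‖ ≤ 1 := hT1 x.ofLp
  have hsmooth : ContDiff ℝ 1 (mollify k E) := contDiff_mollify hE
  have hbound := norm_divergence_mollify_le (k := k) hE hE1
  have hint : Integrable fun x => u x * divergence (mollify k E) x :=
    hu.1.mul_bdd (continuous_divergence hsmooth).aestronglyMeasurable (ae_of_all _ hbound)
  calc ∫⁻ x : Euc N, D x.ofLp * ENNReal.ofReal (mollify k u x)
      ≤ ∫⁻ y, ENNReal.ofReal (u y) *
          ∫⁻ x : Euc N, D x.ofLp * ENNReal.ofReal (mollifier N k (y - x)) :=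
        lintegral_mul_ofReal_mollify_le (by fun_prop) hu.1.aemeasurable hu0
    _ ≤ ∫⁻ y, ENNReal.ofReal (u y * divergence (mollify k E) y) := by
        refine lintegral_mono fun y => ?_
        rw [ENNReal.ofReal_mul (hu0 y)]
        gcongr
        exact (h.divergence_mollify_nonneg_and_lintegral_le hT hT1 y).2
    _ = ENNReal.ofReal (∫ y, u y * divergence (mollify k E) y) :=
        (ofReal_integral_eq_lintegral_ofReal hint (ae_of_all _ fun y =>
          mul_nonneg (hu0 y) (h.divergence_mollify_nonneg_and_lintegral_le hT hT1 y).1)).symm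
    _ ≤ ENNReal.ofReal (tv N u) := ENNReal.ofReal_le_ofReal
        (integral_mul_divergence_le_tv_of_bounded hu hsmooth (norm_mollify_le hE1) hbound)

lemma IsWeakDivLowerBound.lintegral_mul_le_tv (h : IsWeakDivLowerBound T D)
    (hT : Measurable T) (hT1 : ∀ x, ‖(WithLp.toLp 2 (T x) : Euc N)‖ ≤ 1) (hD : Measurable D)
    {u : Euc N → ℝ} (hu : MemBV N u) (hu0 : ∀ x, 0 ≤ u x) :
    ∫⁻ x : Euc N, D x.ofLp * ENNReal.ofReal (u x) ≤ ENNReal.ofReal (tv N u) := by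
  have hloc := hu.1.locallyIntegrable
  have hlim : ∀ᵐ x : Euc N, D x.ofLp * ENNReal.ofReal (u x) ≤
      liminf (fun k => D x.ofLp * ENNReal.ofReal (mollify k u x)) atTop := by
    filter_upwards [ae_tendsto_mollify hloc] with x hx
    rcases (hu0 x).eq_or_lt with h0 | h0
    · simp [← h0]
    · exact (ENNReal.Tendsto.const_mul ((ENNReal.continuous_ofReal.tendsto _).comp hx)
        (Or.inl (ENNReal.ofReal_pos.2 h0).ne')).liminf_eq.ge
  calc ∫⁻ x : Euc N, D x.ofLp * ENNReal.ofReal (u x)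
      ≤ ∫⁻ x : Euc N, liminf (fun k => D x.ofLp * ENNReal.ofReal (mollify k u x)) atTop :=
        lintegral_mono_ae hlim
    _ ≤ liminf (fun k => ∫⁻ x : Euc N, D x.ofLp * ENNReal.ofReal (mollify k u x)) atTop :=
        lintegral_liminf_le fun k => (hD.comp (by fun_prop)).mul
          (contDiff_mollify hloc).continuous.measurable.ennreal_ofReal
    _ ≤ ENNReal.ofReal (tv N u) := by
        refine (liminf_le_liminf (Eventually.of_forall fun k =>
          h.lintegral_mul_mollify_le_tv hT hT1 hD hu hu0)).trans_eq (liminf_const _)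

end MollifiedField

/-! ### The isoperimetric inequality -/

section Isoperimetric

variable {N : ℕ} {A : Set (Euc N)} {u : Euc N → ℝ}

lemma volume_ball_eq (x : Euc N) {R : ℝ} (hR : 0 < R) :
    volume (Metric.ball x R) = ENNReal.ofReal (R ^ N * ballVolume N) := by
  rw [Measure.addHaar_ball_of_pos _ _ hR, ← ofReal_ballVolume,
    ENNReal.ofReal_mul (by positivity), finrank_euclideanSpace_fin]

lemma norm_toLp_knotheMap_le_one (B : Set (Fin N → ℝ)) (x : Fin N → ℝ) :
    ‖(WithLp.toLp 2 (knotheMap N B x) : Euc N)‖ ≤ 1 := by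
  rw [EuclideanSpace.norm_eq, Real.sqrt_le_one]
  simpa using sum_sq_knotheMap_le_one B x

lemma lintegral_knotheDiv_mul_le_tv {B : Set (Fin N → ℝ)} (hB : MeasurableSet B)
    (hu : MemBV N u) (hu0 : ∀ x, 0 ≤ u x) :
    ∫⁻ x : Euc N, knotheDiv N B x.ofLp * ENNReal.ofReal (u x) ≤ ENNReal.ofReal (tv N u) :=
  (isWeakDivLowerBound_knotheMap hB).lintegral_mul_le_tv (measurable_knotheMap hB)
    (norm_toLp_knotheMap_le_one B) (measurable_knotheDiv hB) hu hu0

lemma measurableSet_preimage_toLp (hA : MeasurableSet A) :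
    MeasurableSet (WithLp.toLp 2 ⁻¹' A : Set (Fin N → ℝ)) :=
  (by fun_prop : Measurable (WithLp.toLp 2 : (Fin N → ℝ) → Euc N)) hA

lemma volume_preimage_toLp (hA : MeasurableSet A) :
    volume (WithLp.toLp 2 ⁻¹' A : Set (Fin N → ℝ)) = volume A :=
  (PiLp.volume_preserving_toLp (Fin N)).measure_preimage hA.nullMeasurableSet

lemma ofReal_mul_setLIntegral_le_tv (hA : MeasurableSet A) (h0 : volume A ≠ 0)
    (h1 : volume A ≠ ⊤) (hu : MemBV N u) (hu0 : ∀ x, 0 ≤ u x) :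
    ENNReal.ofReal (N * invRadius N (volume A)) * ∫⁻ x in A, ENNReal.ofReal (u x) ≤
      ENNReal.ofReal (tv N u) := by
  have hB := measurableSet_preimage_toLp hA
  have hdiv := (PiLp.volume_preserving_ofLp (Fin N)).quasiMeasurePreserving.ae
    (ae_le_knotheDiv hB (by rwa [volume_preimage_toLp hA]) (by rwa [volume_preimage_toLp hA]))
  rw [volume_preimage_toLp hA] at hdiv
  rw [← lintegral_const_mul' _ _ ENNReal.ofReal_ne_top]
  refine le_trans ?_ (lintegral_knotheDiv_mul_le_tv hB hu hu0)
  refine le_trans (setLIntegral_mono_ae' hA ?_) (setLIntegral_le_lintegral A _)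
  filter_upwards [hdiv] with x hx hxA
  gcongr
  exact hx hxA

lemma lintegral_mul_ofReal_indicator_one (hA : MeasurableSet A) (f : Euc N → ENNReal) :
    ∫⁻ x, f x * ENNReal.ofReal (A.indicator 1 x) = ∫⁻ x in A, f x := by
  rw [← lintegral_indicator hA]
  congr with x
  by_cases hx : x ∈ A <;> simp [hx]

lemma integrable_indicator_one (hA : MeasurableSet A) (h1 : volume A ≠ ⊤) :
    Integrable (A.indicator (1 : Euc N → ℝ)) :=
  (integrable_indicator_iff hA).2 (integrableOn_const h1)

theorem mul_invRadius_mul_volume_le_tv (hA : MeasurableSet A) (h0 : volume A ≠ 0)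
    (h1 : volume A ≠ ⊤) (hu : MemBV N (A.indicator 1)) :
    N * invRadius N (volume A) * (volume A).toReal ≤ tv N (A.indicator 1) := by
  have h := ofReal_mul_setLIntegral_le_tv hA h0 h1 hu
    fun x => Set.indicator_nonneg (fun _ _ => zero_le_one) x
  have hvol : ∫⁻ x in A, ENNReal.ofReal (A.indicator 1 x) = volume A := by
    rw [← setLIntegral_one]
    exact setLIntegral_congr_fun hA fun x hx => by simp [hx]
  rw [hvol] at h
  have h' := ENNReal.toReal_mono ENNReal.ofReal_ne_top h
  rwa [ENNReal.toReal_mul, ENNReal.toReal_ofReal (tv_nonneg _), ENNReal.toReal_ofReal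
    (mul_nonneg N.cast_nonneg (invRadius_nonneg _ _))] at h'

lemma ae_eq_zero_of_tv_eq_zero_of_nonneg (hN : N ≠ 0) (hu : MemBV N u) (hu0 : ∀ x, 0 ≤ u x)
    (h : tv N u = 0) : u =ᵐ[volume] 0 := by
  have hball : ∀ k : ℕ, ∀ᵐ x, x ∈ Metric.ball (0 : Euc N) (k + 1) → u x = 0 := by
    intro k
    have hk : (0 : ℝ) < k + 1 := by positivity
    have hvol : volume (Metric.ball (0 : Euc N) (k + 1)) ≠ 0 :=
      (Metric.measure_ball_pos volume _ hk).ne'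
    have hfin : volume (Metric.ball (0 : Euc N) (k + 1)) ≠ ⊤ := measure_ball_lt_top.ne
    have hrad : 0 < invRadius N (volume (Metric.ball (0 : Euc N) (k + 1))) :=
      Real.rpow_pos_of_pos (div_pos (ballVolume_pos N) (ENNReal.toReal_pos hvol hfin)) _
    have hle := ofReal_mul_setLIntegral_le_tv measurableSet_ball hvol hfin hu hu0
    rw [h, ENNReal.ofReal_zero, nonpos_iff_eq_zero, mul_eq_zero_iff_left
      (ENNReal.ofReal_pos.2 (by positivity)).ne', lintegral_eq_zero_iff'
      hu.1.aemeasurable.ennreal_ofReal.restrict, EventuallyEq,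
      ae_restrict_iff' measurableSet_ball] at hle
    filter_upwards [hle] with x hx hxA
    exact (ENNReal.ofReal_eq_zero.1 (hx hxA)).antisymm (hu0 x)
  filter_upwards [ae_all_iff.2 hball] with x hx
  obtain ⟨k, hk⟩ := exists_nat_gt ‖x‖
  exact hx k (by simpa using hk.trans (lt_add_one _))

theorem ae_eq_zero_of_tv_eq_zero (hN : N ≠ 0) (hu : MemBV N u) (h : tv N u = 0) :
    u =ᵐ[volume] 0 := by
  obtain ⟨hsqrt, hle⟩ := hu.sqrt_one_add_sq_sub_one
  have hsq (x : Euc N) : 1 ≤ 1 + u x ^ 2 := le_add_of_nonneg_right (sq_nonneg _)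
  filter_upwards [ae_eq_zero_of_tv_eq_zero_of_nonneg hN hsqrt
    (fun x => sub_nonneg.2 (Real.one_le_sqrt.2 (hsq x)))
    ((hle.trans_eq h).antisymm (tv_nonneg _))] with x hx
  have hx1 : √(1 + u x ^ 2) = 1 := sub_eq_zero.1 hx
  simpa using hx1

end Isoperimetric

/-! ### The perimeter of a ball -/

section BallPerimeter

variable {N : ℕ} {r R : ℝ}

/-- A smooth radial function equal to `1` on the ball of radius `r` and supported in the ball of
radius `R > r`, both centred at the origin. -/
def radialCutoff (N : ℕ) (r R : ℝ) (x : Euc N) : ℝ :=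
  Real.smoothTransition ((R ^ 2 - ‖x‖ ^ 2) / (R ^ 2 - r ^ 2))

lemma radialCutoff_nonneg (x : Euc N) : 0 ≤ radialCutoff N r R x :=
  Real.smoothTransition.nonneg _

lemma radialCutoff_le_one (x : Euc N) : radialCutoff N r R x ≤ 1 :=
  Real.smoothTransition.le_one _

lemma contDiff_radialCutoff : ContDiff ℝ 1 (radialCutoff N r R) :=
  Real.smoothTransition.contDiff.comp
    ((contDiff_const.sub (contDiff_norm_sq ℝ)).div_const _)

lemma radialCutoff_eq_zero (hr : 0 < r) (h : r < R) {x : Euc N} (hx : R ≤ ‖x‖) :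
    radialCutoff N r R x = 0 :=
  Real.smoothTransition.zero_of_nonpos
    (div_nonpos_of_nonpos_of_nonneg (by nlinarith) (by nlinarith))

lemma radialCutoff_eq_one (hr : 0 < r) (h : r < R) {x : Euc N} (hx : ‖x‖ ≤ r) :
    radialCutoff N r R x = 1 :=
  Real.smoothTransition.one_of_one_le
    ((one_le_div (by nlinarith)).2 (by nlinarith [norm_nonneg x]))

lemma hasCompactSupport_radialCutoff (hr : 0 < r) (h : r < R) :
    HasCompactSupport (radialCutoff N r R) :=
  HasCompactSupport.intro (isCompact_closedBall 0 R) fun x hx =>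
    radialCutoff_eq_zero hr h (by simpa using (not_le.1 (mt mem_closedBall_zero_iff.2 hx)).le)

lemma integrable_radialCutoff (hr : 0 < r) (h : r < R) : Integrable (radialCutoff N r R) :=
  contDiff_radialCutoff.continuous.integrable_of_hasCompactSupport
    (hasCompactSupport_radialCutoff hr h)

lemma integrable_fderiv_radialCutoff (hr : 0 < r) (h : r < R) {ψ : Euc N → Euc N}
    (hψ : Continuous ψ) : Integrable fun x => fderiv ℝ (radialCutoff N r R) x (ψ x) :=
  ((contDiff_radialCutoff.continuous_fderiv one_ne_zero).clm_apply
    hψ).integrable_of_hasCompactSupport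
    (((hasCompactSupport_radialCutoff hr h).fderiv (𝕜 := ℝ)).mono fun x hx hx' =>
      hx (by simp [hx']))

lemma fderiv_radialCutoff_apply (x v : Euc N) : fderiv ℝ (radialCutoff N r R) x v =
    -(deriv Real.smoothTransition ((R ^ 2 - ‖x‖ ^ 2) / (R ^ 2 - r ^ 2)) * (2 * inner ℝ x v)
      / (R ^ 2 - r ^ 2)) := by
  have hquot : HasFDerivAt (fun x : Euc N => (R ^ 2 - ‖x‖ ^ 2) / (R ^ 2 - r ^ 2))
      ((R ^ 2 - r ^ 2)⁻¹ • -((2 : ℕ) • (innerSL ℝ x : Euc N →L[ℝ] ℝ))) x := by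
    simpa only [div_eq_mul_inv] using
      ((hasStrictFDerivAt_norm_sq x).hasFDerivAt.const_sub (R ^ 2)).mul_const (R ^ 2 - r ^ 2)⁻¹
  have hst : HasDerivAt Real.smoothTransition _ ((R ^ 2 - ‖x‖ ^ 2) / (R ^ 2 - r ^ 2)) :=
    (Real.smoothTransition.contDiff.differentiable one_ne_zero _).hasDerivAt
  have hcomp : fderiv ℝ (radialCutoff N r R) x = _ := (hst.comp_hasFDerivAt x hquot).fderiv
  rw [hcomp]
  simp
  ring

lemma neg_fderiv_radialCutoff_le (hr : 0 < r) (h : r < R) (x : Euc N) {v : Euc N}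
    (hv : ‖v‖ ≤ 1) : -fderiv ℝ (radialCutoff N r R) x v ≤
      r⁻¹ * -fderiv ℝ (radialCutoff N r R) x x := by
  have hpos : 0 < R ^ 2 - r ^ 2 := by nlinarith
  rw [fderiv_radialCutoff_apply, fderiv_radialCutoff_apply, neg_neg, neg_neg]
  set d := deriv Real.smoothTransition ((R ^ 2 - ‖x‖ ^ 2) / (R ^ 2 - r ^ 2))
  rcases le_or_gt ‖x‖ r with hx | hx
  · have hd0 : d = 0 := IsLocalMax.deriv_eq_zero <| Eventually.of_forall fun t => by
      rw [Real.smoothTransition.one_of_one_le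
        ((one_le_div hpos).2 (by nlinarith [norm_nonneg x]))]
      exact Real.smoothTransition.le_one t
    simp [hd0]
  · have hd0 : 0 ≤ d := Real.smoothTransition.monotone.deriv_nonneg
    have hinner : inner ℝ x v ≤ r⁻¹ * ‖x‖ ^ 2 := by
      calc inner ℝ x v ≤ ‖x‖ * ‖v‖ := real_inner_le_norm x v
        _ ≤ ‖x‖ * 1 := by gcongr
        _ ≤ r⁻¹ * ‖x‖ ^ 2 := by rw [inv_mul_eq_div, le_div_iff₀ hr]; nlinarith
    rw [real_inner_self_eq_norm_sq]
    calc d * (2 * inner ℝ x v) / (R ^ 2 - r ^ 2)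
        ≤ d * (2 * (r⁻¹ * ‖x‖ ^ 2)) / (R ^ 2 - r ^ 2) := by gcongr
      _ = _ := by ring

lemma integral_fderiv_radialCutoff_self (hr : 0 < r) (h : r < R) :
    ∫ x, fderiv ℝ (radialCutoff N r R) x x = -(N * ∫ x, radialCutoff N r R x) := by
  have hφ := integrable_radialCutoff (N := N) hr h
  have hzero : ∫ x, divergence (radialCutoff N r R • id) x = 0 :=
    integral_divergence (contDiff_radialCutoff.smul contDiff_id)
      (hasCompactSupport_radialCutoff hr h).smul_right
  have hdiv (x : Euc N) : divergence (radialCutoff N r R • id) x =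
      radialCutoff N r R x * N + fderiv ℝ (radialCutoff N r R) x x := by
    rw [divergence_smul (contDiff_radialCutoff.differentiable one_ne_zero x) differentiableAt_id,
      divergence_id, id]
  have hadd := integral_add (hφ.mul_const (N : ℝ))
    (integrable_fderiv_radialCutoff hr h continuous_id)
  rw [integral_mul_const] at hadd
  simp_rw [hdiv] at hzero
  simp only [id] at hadd
  linarith

lemma integral_indicator_ball_one (hR : 0 < R) :
    ∫ x, (Metric.ball (0 : Euc N) R).indicator 1 x = R ^ N * ballVolume N := by
  rw [integral_indicator_one measurableSet_ball, measureReal_def, volume_ball_eq _ hR,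
    ENNReal.toReal_ofReal (mul_nonneg (pow_nonneg hR.le _) (ballVolume_pos N).le)]

lemma integral_radialCutoff_le (hr : 0 < r) (h : r < R) :
    ∫ x, radialCutoff N r R x ≤ R ^ N * ballVolume N := by
  rw [← integral_indicator_ball_one (hr.trans h)]
  refine integral_mono (integrable_radialCutoff hr h)
    (integrable_indicator_one measurableSet_ball measure_ball_lt_top.ne) fun x => ?_
  by_cases hx : ‖x‖ < R
  · simpa [hx] using radialCutoff_le_one x
  · rw [radialCutoff_eq_zero hr h (not_lt.1 hx)]
    exact Set.indicator_nonneg (fun _ _ => zero_le_one) x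

lemma integral_radialCutoff_mul_divergence_le (hr : 0 < r) (h : r < R) {ψ : Euc N → Euc N}
    (hψ : ContDiff ℝ 1 ψ) (hc : HasCompactSupport ψ) (hle : ∀ x, ‖ψ x‖ ≤ 1) :
    ∫ x, radialCutoff N r R x * divergence ψ x ≤ N / r * (R ^ N * ballVolume N) := by
  rw [integral_mul_divergence contDiff_radialCutoff hψ hc, ← integral_neg]
  calc ∫ x, -fderiv ℝ (radialCutoff N r R) x (ψ x)
      ≤ ∫ x, r⁻¹ * -fderiv ℝ (radialCutoff N r R) x x :=
        integral_mono (integrable_fderiv_radialCutoff hr h hψ.continuous).neg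
          ((integrable_fderiv_radialCutoff hr h continuous_id).neg.const_mul _)
          fun x => neg_fderiv_radialCutoff_le hr h x (hle x)
    _ = N / r * ∫ x, radialCutoff N r R x := by
        rw [integral_const_mul, integral_neg, integral_fderiv_radialCutoff_self hr h]
        ring
    _ ≤ N / r * (R ^ N * ballVolume N) := by
        gcongr
        exact integral_radialCutoff_le hr h

lemma tendsto_radialCutoff (hR : 0 < R) (x : Euc N) :
    Tendsto (fun r => radialCutoff N r R x) (𝓝[<] R)
      (𝓝 ((Metric.ball (0 : Euc N) R).indicator 1 x)) := by
  refine tendsto_const_nhds.congr' ?_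
  by_cases hx : ‖x‖ < R
  · filter_upwards [Ioo_mem_nhdsLT (max_lt hR hx)] with r hr
    rw [radialCutoff_eq_one ((le_max_left _ _).trans_lt hr.1) hr.2
      ((le_max_right _ _).trans hr.1.le)]
    simp [hx]
  · filter_upwards [Ioo_mem_nhdsLT hR] with r hr
    rw [radialCutoff_eq_zero hr.1 hr.2 (not_lt.1 hx)]
    simp [hx]

lemma integral_indicator_ball_mul_divergence_le (hR : 0 < R) {ψ : Euc N → Euc N}
    (hψ : ContDiff ℝ 1 ψ) (hc : HasCompactSupport ψ) (hle : ∀ x, ‖ψ x‖ ≤ 1) :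
    ∫ x, (Metric.ball (0 : Euc N) R).indicator 1 x * divergence ψ x ≤
      N / R * (R ^ N * ballVolume N) := by
  have hdiv : Integrable (divergence ψ) :=
    (continuous_divergence hψ).integrable_of_hasCompactSupport (hasCompactSupport_divergence hc)
  have hlim : Tendsto (fun r => ∫ x, radialCutoff N r R x * divergence ψ x) (𝓝[<] R)
      (𝓝 (∫ x, (Metric.ball (0 : Euc N) R).indicator 1 x * divergence ψ x)) := by
    refine tendsto_integral_filter_of_dominated_convergence (fun x => ‖divergence ψ x‖)
      (Eventually.of_forall fun r => contDiff_radialCutoff.continuous.aestronglyMeasurable.mul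
        hdiv.1) (Eventually.of_forall fun r => ae_of_all _ fun x => ?_) hdiv.norm
      (ae_of_all _ fun x => (tendsto_radialCutoff hR x).mul_const _)
    rw [norm_mul, Real.norm_of_nonneg (radialCutoff_nonneg x)]
    exact mul_le_of_le_one_left (norm_nonneg _) (radialCutoff_le_one x)
  have hbound : Tendsto (fun r => N / r * (R ^ N * ballVolume N)) (𝓝[<] R)
      (𝓝 (N / R * (R ^ N * ballVolume N))) :=
    ((tendsto_const_nhds.div (tendsto_id.mono_left nhdsWithin_le_nhds) hR.ne').mul_const _)
  refine le_of_tendsto_of_tendsto hlim hbound ?_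
  filter_upwards [Ioo_mem_nhdsLT hR] with r hr
  exact integral_radialCutoff_mul_divergence_le hr.1 hr.2 hψ hc hle

theorem memBV_indicator_ball_and_tv_le (hR : 0 < R) :
    MemBV N ((Metric.ball 0 R).indicator 1) ∧
      tv N ((Metric.ball 0 R).indicator 1) ≤ N / R * (R ^ N * ballVolume N) := by
  refine memBV_of_forall_mem_TVSet_le
    (integrable_indicator_one measurableSet_ball measure_ball_lt_top.ne) ?_
  rintro _ ⟨ψ, hψ, hc, hle, rfl⟩
  exact integral_indicator_ball_mul_divergence_le hR hψ hc hle

end BallPerimeter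

/-! ### The equality case of the isoperimetric inequality -/

section TransportProfile

variable {n : ℕ} {m : ℝ → ENNReal} {c t : ℝ}

lemma continuous_lineCDF (hm : Measurable m) (hfin : ∫⁻ s, m s ≠ ⊤) : Continuous (lineCDF m) := by
  have hint := integrable_toReal_of_lintegral_ne_top hm.aemeasurable hfin
  have heq : lineCDF m = fun t =>
      (∫ r in (0 : ℝ)..t, (m r).toReal) / (∫⁻ s, m s).toReal + lineCDF m 0 :=
    funext fun t => sub_eq_iff_eq_add.1 (lineCDF_sub t hm hfin 0)
  rw [heq]
  exact ((intervalIntegral.continuous_primitive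
    (fun _ _ => hint.intervalIntegrable) 0).div_const _).add_const _

lemma tendsto_lineCDF_atTop (hm : Measurable m) (hzero : ∫⁻ s, m s ≠ 0) (hfin : ∫⁻ s, m s ≠ ⊤) :
    Tendsto (lineCDF m) atTop (𝓝 1) := by
  have hlim := ((aecover_Iic tendsto_id).integral_tendsto_of_countably_generated
    (integrable_toReal_of_lintegral_ne_top hm.aemeasurable hfin)).div_const (∫⁻ s, m s).toReal
  rw [integral_toReal hm.aemeasurable (ae_lt_top hm hfin),
    div_self (ENNReal.toReal_ne_zero.2 ⟨hzero, hfin⟩)] at hlim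
  exact hlim.congr fun t => (lineCDF_eq t hm hfin).symm

lemma tendsto_lineCDF_atBot (hm : Measurable m) (hfin : ∫⁻ s, m s ≠ ⊤) :
    Tendsto (lineCDF m) atBot (𝓝 0) := by
  have hint := integrable_toReal_of_lintegral_ne_top hm.aemeasurable hfin
  have hlim := (((aecover_Ioi tendsto_id).integral_tendsto_of_countably_generated
    hint).const_sub (∫ s, (m s).toReal)).div_const (∫⁻ s, m s).toReal
  rw [sub_self, zero_div] at hlim
  refine hlim.congr fun t => ?_
  rw [lineCDF_eq t hm hfin,
    ← intervalIntegral.integral_Iic_add_Ioi (b := t) hint.integrableOn hint.integrableOn]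
  simp

lemma exists_lineCDF_eq (hm : Measurable m) (hzero : ∫⁻ s, m s ≠ 0) (hfin : ∫⁻ s, m s ≠ ⊤)
    {y : ℝ} (hy : y ∈ Set.Ioo (0 : ℝ) 1) : ∃ t, lineCDF m t = y := by
  obtain ⟨a, ha⟩ := ((tendsto_lineCDF_atBot hm hfin).eventually_lt_const hy.1).exists
  obtain ⟨b, hb⟩ := ((tendsto_lineCDF_atTop hm hzero hfin).eventually_const_lt hy.2).exists
  exact mem_range_of_exists_le_of_exists_ge (continuous_lineCDF hm hfin) ⟨a, ha.le⟩ ⟨b, hb.le⟩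

lemma sliceCDF_add_sliceCDF_neg (n : ℕ) (x : ℝ) : sliceCDF n x + sliceCDF n (-x) = 1 := by
  have hint (a b : ℝ) : IntervalIntegrable (sliceWeight n) volume a b :=
    (continuous_sliceWeight n).intervalIntegrable a b
  have hneg : ∫ s in (-1 : ℝ)..(-x), sliceWeight n s = ∫ s in x..1, sliceWeight n s := by
    rw [← intervalIntegral.integral_comp_neg]
    simp [sliceWeight]
  rw [sliceCDF, sliceCDF, hneg, ← mul_add,
    intervalIntegral.integral_add_adjacent_intervals (hint _ _) (hint _ _)]
  exact inv_mul_cancel₀ sliceMass_pos.ne'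

lemma hasDerivAt_lineCDF_of_ae_transportDeriv_eq (hm : Measurable m) (hfin : ∫⁻ s, m s ≠ ⊤)
    (h : ∀ᵐ t, lineCDF m t ∈ Set.Ioo (0 : ℝ) 1 → transportDeriv n m t = c)
    (ht : lineCDF m t ∈ Set.Ioo (0 : ℝ) 1) :
    HasDerivAt (lineCDF m) (c * transportRadius n m t ^ n / sliceMass n) t := by
  have hcont := continuous_lineCDF hm hfin
  have htransport : ContinuousAt (transport n m) t :=
    (hasDerivAt_sliceQuantile ht).continuousAt.comp hcont.continuousAt
  have hradius : ContinuousAt (fun s => c * transportRadius n m s ^ n / sliceMass n) t := by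
    unfold transportRadius
    fun_prop
  have hmeas : Measurable fun s => c * transportRadius n m s ^ n / sliceMass n :=
    (((measurable_transportRadius n m).pow_const n).const_mul c).div_const _
  refine ((intervalIntegral.integral_hasDerivAt_right (a := t) (by simp)
    hmeas.stronglyMeasurable.stronglyMeasurableAtFilter hradius).add_const
    (lineCDF m t)).congr_of_eventuallyEq ?_
  filter_upwards [hcont.continuousAt.eventually (isOpen_Ioo.mem_nhds ht)] with s hs
  rw [← sub_eq_iff_eq_add, lineCDF_sub s hm hfin t, ← intervalIntegral.integral_div]
  refine intervalIntegral.integral_congr_ae ?_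
  filter_upwards [h] with r hr hrs
  have hmem : lineCDF m r ∈ Set.Ioo (0 : ℝ) 1 :=
    (Set.ordConnected_Ioo.preimage_mono (monotone_lineCDF m)).uIcc_subset ht hs
      (Set.uIoc_subset_uIcc hrs)
  rw [← hr hmem, transportDeriv_mul_transportRadius_pow r hmem]
  field_simp [(sliceMass_pos (n := n)).ne']

lemma hasDerivAt_transport_of_ae_transportDeriv_eq (hm : Measurable m) (hfin : ∫⁻ s, m s ≠ ⊤)
    (h : ∀ᵐ t, lineCDF m t ∈ Set.Ioo (0 : ℝ) 1 → transportDeriv n m t = c)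
    (ht : lineCDF m t ∈ Set.Ioo (0 : ℝ) 1) : HasDerivAt (transport n m) c t := by
  have hderiv := hasDerivAt_transport (n := n) t ht
    (hasDerivAt_lineCDF_of_ae_transportDeriv_eq hm hfin h ht)
  have hradius := (transportRadius_pos (n := n) t ht).ne'
  have hmass := (sliceMass_pos (n := n)).ne'
  convert hderiv using 1
  field_simp

lemma transport_sub_mul_eq_of_ae_transportDeriv_eq (hm : Measurable m) (hfin : ∫⁻ s, m s ≠ ⊤)
    (h : ∀ᵐ t, lineCDF m t ∈ Set.Ioo (0 : ℝ) 1 → transportDeriv n m t = c) {s : ℝ}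
    (hs : lineCDF m s ∈ Set.Ioo (0 : ℝ) 1) (ht : lineCDF m t ∈ Set.Ioo (0 : ℝ) 1) :
    transport n m s - c * s = transport n m t - c * t := by
  have hderiv (r : ℝ) (hr : r ∈ lineCDF m ⁻¹' Set.Ioo 0 1) :
      HasDerivAt (fun r => transport n m r - c * r) 0 r := by
    simpa using (hasDerivAt_transport_of_ae_transportDeriv_eq hm hfin h hr).fun_sub
      ((hasDerivAt_id r).const_mul c)
  exact (isOpen_Ioo.preimage (continuous_lineCDF hm hfin)).is_const_of_deriv_eq_zero
    (Set.ordConnected_Ioo.preimage_mono (monotone_lineCDF m)).isPreconnected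
    (fun r hr => (hderiv r hr).differentiableAt.differentiableWithinAt)
    (fun r hr => (hderiv r hr).deriv) hs ht

lemma exists_lineCDF_eq_sliceCDF (hc : 0 < c) (hm : Measurable m) (hzero : ∫⁻ s, m s ≠ 0)
    (hfin : ∫⁻ s, m s ≠ ⊤)
    (h : ∀ᵐ t, lineCDF m t ∈ Set.Ioo (0 : ℝ) 1 → transportDeriv n m t = c) :
    ∃ p, ∀ t ∈ Set.Icc (p - c⁻¹) (p + c⁻¹), lineCDF m t = sliceCDF n (c * (t - p)) := by
  obtain ⟨t₀, ht₀⟩ := exists_lineCDF_eq hm hzero hfin (y := 1 / 2) (by norm_num)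
  set p := t₀ - c⁻¹ * transport n m t₀ with hp
  have haffine (t : ℝ) (ht : lineCDF m t ∈ Set.Ioo (0 : ℝ) 1) :
      transport n m t = c * (t - p) := by
    have heq := transport_sub_mul_eq_of_ae_transportDeriv_eq hm hfin h ht
      (t := t₀) (by rw [ht₀]; norm_num)
    rw [hp]
    field_simp
    linarith
  have hinner : Set.EqOn (lineCDF m) (fun t => sliceCDF n (c * (t - p)))
      (Set.Ioo (p - c⁻¹) (p + c⁻¹)) := by
    intro t ht
    have hx : c * (t - p) ∈ Set.Ioo (-1 : ℝ) 1 := by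
      have hcinv : c * c⁻¹ = 1 := mul_inv_cancel₀ hc.ne'
      constructor <;> nlinarith [ht.1, ht.2]
    have hy : sliceCDF n (c * (t - p)) ∈ Set.Ioo (0 : ℝ) 1 := by
      have hleft := strictMonoOn_sliceCDF n (by simp) ⟨hx.1.le, hx.2.le⟩ hx.1
      have hright := strictMonoOn_sliceCDF n ⟨hx.1.le, hx.2.le⟩ (by simp) hx.2
      rw [sliceCDF_neg_one] at hleft
      rw [sliceCDF_one] at hright
      exact ⟨hleft, hright⟩
    obtain ⟨s, hs⟩ := exists_lineCDF_eq hm hzero hfin hy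
    have hquantile : c * (s - p) = c * (t - p) := by
      rw [← haffine s (hs ▸ hy), transport, hs, sliceQuantile_sliceCDF ⟨hx.1.le, hx.2.le⟩]
    have hst : s = t := sub_left_injective (mul_left_cancel₀ hc.ne' hquantile)
    exact hst ▸ hs
  have hcinv : 0 < c⁻¹ := inv_pos.2 hc
  refine ⟨p, fun t ht => ?_⟩
  rw [← closure_Ioo (by linarith)] at ht
  exact hinner.closure (continuous_lineCDF hm hfin)
    ((continuous_sliceCDF n).comp (by fun_prop)) ht

lemma exists_lineCDF_add_lineCDF_sub_eq_one (hc : 0 < c) (hm : Measurable m)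
    (hzero : ∫⁻ s, m s ≠ 0) (hfin : ∫⁻ s, m s ≠ ⊤)
    (h : ∀ᵐ t, lineCDF m t ∈ Set.Ioo (0 : ℝ) 1 → transportDeriv n m t = c) :
    ∃ p, (∀ s, lineCDF m (p + s) + lineCDF m (p - s) = 1) ∧
      ∀ t, lineCDF m t ∈ Set.Ioo (0 : ℝ) 1 → |t - p| ≤ c⁻¹ := by
  obtain ⟨p, hp⟩ := exists_lineCDF_eq_sliceCDF hc hm hzero hfin h
  have hcinv : 0 < c⁻¹ := inv_pos.2 hc
  have htop (t : ℝ) (ht : p + c⁻¹ ≤ t) : lineCDF m t = 1 := by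
    refine (lineCDF_mem_Icc m t).2.antisymm (le_of_eq_of_le ?_ (monotone_lineCDF m ht))
    rw [hp _ ⟨by linarith, le_rfl⟩, add_sub_cancel_left, mul_inv_cancel₀ hc.ne', sliceCDF_one]
  have hbot (t : ℝ) (ht : t ≤ p - c⁻¹) : lineCDF m t = 0 := by
    refine ((monotone_lineCDF m ht).trans_eq ?_).antisymm (lineCDF_mem_Icc m t).1
    rw [hp _ ⟨le_rfl, by linarith⟩, sub_sub_cancel_left, mul_neg, mul_inv_cancel₀ hc.ne',
      sliceCDF_neg_one]
  refine ⟨p, fun s => ?_, fun t ht => abs_le.2 ⟨?_, ?_⟩⟩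
  · rcases lt_or_ge c⁻¹ |s| with hs | hs
    · rcases lt_abs.1 hs with hs | hs
      · rw [htop _ (by linarith), hbot _ (by linarith), add_zero]
      · rw [hbot _ (by linarith), htop _ (by linarith), zero_add]
    · have hs' := abs_le.1 hs
      rw [hp _ ⟨by linarith, by linarith⟩, hp _ ⟨by linarith, by linarith⟩, add_sub_cancel_left,
        sub_sub_cancel_left, mul_neg, sliceCDF_add_sliceCDF_neg]
  · by_contra! hlt
    exact ht.1.ne' (hbot t (by linarith))
  · by_contra! hlt
    exact ht.2.ne (htop t (by linarith))

lemma integral_mul_sub_eq_zero_of_lineCDF_symm (hm : Measurable m) (hzero : ∫⁻ s, m s ≠ 0)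
    (hfin : ∫⁻ s, m s ≠ ⊤) {p : ℝ} (h : ∀ s, lineCDF m (p + s) + lineCDF m (p - s) = 1) :
    ∫ t, (m t).toReal * (t - p) = 0 := by
  have hderiv (s : ℝ) : deriv (lineCDF m) (s + p) = deriv (lineCDF m) (-s + p) := by
    have heq : (fun r => lineCDF m (r + p)) = fun r => 1 - lineCDF m (-r + p) :=
      funext fun r => by
        rw [add_comm r, add_comm (-r), ← sub_eq_add_neg]
        exact eq_sub_of_add_eq (h r)
    rw [← deriv_comp_add_const, heq, deriv_const_sub,
      deriv_comp_neg (fun r => lineCDF m (r + p)), deriv_comp_add_const, neg_neg]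
  have hdensity : (fun t => (m t).toReal * (t - p)) =ᵐ[volume]
      fun t => (∫⁻ s, m s).toReal * (deriv (lineCDF m) t * (t - p)) := by
    filter_upwards [ae_hasDerivAt_lineCDF hm hfin] with t ht
    rw [ht.deriv]
    field_simp [ENNReal.toReal_ne_zero.2 ⟨hzero, hfin⟩]
  have hodd : ∫ s, deriv (lineCDF m) (s + p) * s = -∫ s, deriv (lineCDF m) (s + p) * s := by
    conv_lhs => rw [← integral_neg_eq_self]
    rw [← integral_neg]
    simp_rw [← hderiv, mul_neg]
  have hshift := integral_add_right_eq_self (μ := volume)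
    (fun t => deriv (lineCDF m) t * (t - p)) p
  simp only [add_sub_cancel_right] at hshift
  rw [integral_congr_ae hdensity, integral_const_mul, ← hshift, self_eq_neg.1 hodd, mul_zero]

lemma exists_ae_abs_sub_le_and_integral_eq_zero (hc : 0 < c) (hm : Measurable m)
    (hzero : ∫⁻ s, m s ≠ 0) (hfin : ∫⁻ s, m s ≠ ⊤)
    (h : ∀ᵐ t, lineCDF m t ∈ Set.Ioo (0 : ℝ) 1 → transportDeriv n m t = c) :
    ∃ p, (∀ᵐ t, m t ≠ 0 → |t - p| ≤ c⁻¹) ∧ ∫ t, (m t).toReal * (t - p) = 0 := by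
  obtain ⟨p, hsymm, hle⟩ := exists_lineCDF_add_lineCDF_sub_eq_one hc hm hzero hfin h
  refine ⟨p, ?_, integral_mul_sub_eq_zero_of_lineCDF_symm hm hzero hfin hsymm⟩
  filter_upwards [ae_lineCDF_mem_Ioo hm hzero hfin] with t ht hne
  exact hle t (ht hne)

end TransportProfile

section Cut

variable {N : ℕ} {A L S : Set (Euc N)} {h : Euc N → ℝ} {K : ℝ}

lemma exists_abs_deriv_smoothTransition_le : ∃ C, ∀ s, |deriv Real.smoothTransition s| ≤ C := by
  have hzero (s : ℝ) (hs : s ∉ Set.Icc (0 : ℝ) 1) : deriv Real.smoothTransition s = 0 := by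
    rcases lt_or_ge s 0 with hneg | hpos
    · refine IsLocalMin.deriv_eq_zero (Eventually.of_forall fun t => ?_)
      rw [Real.smoothTransition.zero_of_nonpos hneg.le]
      exact Real.smoothTransition.nonneg t
    · refine IsLocalMax.deriv_eq_zero (Eventually.of_forall fun t => ?_)
      rw [Real.smoothTransition.one_of_one_le (le_of_not_ge fun hle => hs ⟨hpos, hle⟩)]
      exact Real.smoothTransition.le_one t
  exact (HasCompactSupport.intro isCompact_Icc hzero).exists_bound_of_continuous
    ((Real.smoothTransition.contDiff (n := 1)).continuous_deriv le_rfl)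

lemma exists_halfSpace_cutoff (i : Fin N) (s : ℝ) : ∃ C, ∀ ε > 0, ∃ h : Euc N → ℝ,
    ContDiff ℝ 1 h ∧ (∀ x, h x ∈ Set.Icc 0 1) ∧ (∀ x, ‖fderiv ℝ h x‖ ≤ C / ε) ∧
      (∀ x, x i ≤ s → h x = 0) ∧ ∀ x, s + ε ≤ x i → h x = 1 := by
  obtain ⟨C, hC⟩ := exists_abs_deriv_smoothTransition_le
  have hC0 : 0 ≤ C := (abs_nonneg _).trans (hC 0)
  refine ⟨C, fun ε hε => ⟨fun x => Real.smoothTransition (ε⁻¹ * (x i - s)), ?_,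
    fun x => ⟨Real.smoothTransition.nonneg _, Real.smoothTransition.le_one _⟩, fun x => ?_,
    fun x hx => Real.smoothTransition.zero_of_nonpos ?_,
    fun x hx => Real.smoothTransition.one_of_one_le ?_⟩⟩
  · exact Real.smoothTransition.contDiff.comp (by fun_prop)
  · let proj : Euc N →L[ℝ] ℝ := EuclideanSpace.proj i
    have hlin : HasFDerivAt (fun x : Euc N => ε⁻¹ * (x i - s)) (ε⁻¹ • proj) x :=
      (proj.hasFDerivAt.sub_const s).const_mul ε⁻¹
    have hproj : ‖proj‖ ≤ 1 := proj.opNorm_le_bound zero_le_one fun y => by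
      rw [one_mul]
      exact PiLp.norm_apply_le y i
    have hderiv := ((Real.smoothTransition.contDiff (n := 1)).differentiable one_ne_zero
      (ε⁻¹ * (x i - s))).hasDerivAt.comp_hasFDerivAt x hlin
    rw [Function.comp_def] at hderiv
    rw [hderiv.fderiv, norm_smul, norm_smul, Real.norm_eq_abs,
      Real.norm_of_nonneg (inv_nonneg.2 hε.le), div_eq_mul_inv]
    exact mul_le_mul (hC _) (mul_le_of_le_one_right (inv_nonneg.2 hε.le) hproj)
      (by positivity) hC0
  · exact mul_nonpos_of_nonneg_of_nonpos (inv_nonneg.2 hε.le) (sub_nonpos.2 hx)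
  · rw [inv_mul_eq_div, le_div_iff₀ hε]
    linarith

lemma divergence_interpolate {ψ₁ ψ₂ : Euc N → Euc N} {x : Euc N} (hh : DifferentiableAt ℝ h x)
    (h₁ : DifferentiableAt ℝ ψ₁ x) (h₂ : DifferentiableAt ℝ ψ₂ x) :
    divergence ((1 - h) • ψ₁ + h • ψ₂) x =
      (1 - h x) * divergence ψ₁ x + h x * divergence ψ₂ x + fderiv ℝ h x (ψ₂ x - ψ₁ x) := by
  have hh' : DifferentiableAt ℝ (1 - h) x := (differentiableAt_const (1 : ℝ)).sub hh
  have hneg : fderiv ℝ (1 - h) x = -fderiv ℝ h x := fderiv_const_sub 1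
  rw [divergence_add (hh'.smul h₁) (hh.smul h₂), divergence_smul hh' h₁, divergence_smul hh h₂,
    hneg, map_sub, Pi.sub_apply, Pi.one_apply, neg_apply]
  ring

lemma norm_interpolate_le_one {ψ₁ ψ₂ : Euc N → Euc N} {x : Euc N} (hh : h x ∈ Set.Icc 0 1)
    (h₁ : ‖ψ₁ x‖ ≤ 1) (h₂ : ‖ψ₂ x‖ ≤ 1) : ‖((1 - h) • ψ₁ + h • ψ₂) x‖ ≤ 1 :=
  mem_closedBall_zero_iff.1 <| convex_closedBall (0 : Euc N) 1 (mem_closedBall_zero_iff.2 h₁)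
    (mem_closedBall_zero_iff.2 h₂) (sub_nonneg.2 hh.2) hh.1 (sub_add_cancel 1 (h x))

lemma indicator_mul_divergence_add_le {ψ₁ ψ₂ : Euc N → Euc N} {C₁ C₂ : ℝ} {x : Euc N}
    (hh : ContDiff ℝ 1 h) (hmem : ∀ x, h x ∈ Set.Icc 0 1) (hK : ‖fderiv ℝ h x‖ ≤ K)
    (hzero : ∀ x ∈ L, h x = 0) (hone : ∀ x ∉ L, x ∉ S → h x = 1)
    (h₁ : ContDiff ℝ 1 ψ₁) (hle₁ : ‖ψ₁ x‖ ≤ 1) (hC₁ : ‖divergence ψ₁ x‖ ≤ C₁)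
    (h₂ : ContDiff ℝ 1 ψ₂) (hle₂ : ‖ψ₂ x‖ ≤ 1) (hC₂ : ‖divergence ψ₂ x‖ ≤ C₂) :
    (A ∩ L).indicator 1 x * divergence ψ₁ x + (A \ L).indicator 1 x * divergence ψ₂ x ≤
      A.indicator 1 x * divergence ((1 - h) • ψ₁ + h • ψ₂) x +
        (C₁ + C₂ + 2 * K) * (A ∩ S).indicator 1 x := by
  have hK0 : 0 ≤ K := (norm_nonneg _).trans hK
  have hC₁' := abs_le.1 hC₁
  have hC₂' := abs_le.1 hC₂
  rw [divergence_interpolate (hh.differentiable one_ne_zero x) (h₁.differentiable one_ne_zero x)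
    (h₂.differentiable one_ne_zero x)]
  have hbound : |fderiv ℝ h x (ψ₂ x - ψ₁ x)| ≤ 2 * K := by
    refine ((fderiv ℝ h x).le_opNorm _).trans ?_
    rw [mul_comm]
    exact mul_le_mul ((norm_sub_le _ _).trans (by linarith)) hK (norm_nonneg _) zero_le_two
  have hbound' := (abs_le.1 hbound).1
  have hS : (0 : ℝ) ≤ (A ∩ S).indicator 1 x := Set.indicator_nonneg (fun _ _ => zero_le_one) x
  have hS' : 0 ≤ (C₁ + C₂ + 2 * K) * (A ∩ S).indicator 1 x := mul_nonneg (by linarith) hS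
  by_cases hxA : x ∈ A
  swap
  · simp [hxA]
  by_cases hxL : x ∈ L
  · have hmin : IsLocalMin h x := Eventually.of_forall fun y => by
      rw [hzero x hxL]
      exact (hmem y).1
    simpa [hxA, hxL, hzero x hxL, hmin.fderiv_eq_zero] using hS'
  by_cases hxS : x ∈ S
  · have h0 := (hmem x).1
    have h1 := (hmem x).2
    simp only [Set.mem_inter_iff, Set.mem_sdiff, hxA, hxL, hxS, and_false, and_self,
      not_false_eq_true, Set.indicator_of_notMem, Set.indicator_of_mem, Pi.one_apply, zero_mul,
      zero_add, one_mul, mul_one]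
    nlinarith
  · have hmax : IsLocalMax h x := Eventually.of_forall fun y => by
      rw [hone x hxL hxS]
      exact (hmem y).2
    simp [hxA, hxL, hxS, hone x hxL hxS, hmax.fderiv_eq_zero]

lemma integral_inter_add_integral_sdiff_le {ψ₁ ψ₂ : Euc N → Euc N} {C₁ C₂ : ℝ}
    (hA : MeasurableSet A) (h1 : volume A ≠ ⊤) (hu : MemBV N (A.indicator 1))
    (hL : MeasurableSet L) (hS : MeasurableSet S)
    (hh : ContDiff ℝ 1 h) (hmem : ∀ x, h x ∈ Set.Icc 0 1) (hK : ∀ x, ‖fderiv ℝ h x‖ ≤ K)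
    (hzero : ∀ x ∈ L, h x = 0) (hone : ∀ x ∉ L, x ∉ S → h x = 1)
    (h₁ : ContDiff ℝ 1 ψ₁) (hc₁ : HasCompactSupport ψ₁) (hle₁ : ∀ x, ‖ψ₁ x‖ ≤ 1)
    (hC₁ : ∀ x, ‖divergence ψ₁ x‖ ≤ C₁)
    (h₂ : ContDiff ℝ 1 ψ₂) (hc₂ : HasCompactSupport ψ₂) (hle₂ : ∀ x, ‖ψ₂ x‖ ≤ 1)
    (hC₂ : ∀ x, ‖divergence ψ₂ x‖ ≤ C₂) :
    (∫ x, (A ∩ L).indicator 1 x * divergence ψ₁ x) +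
        ∫ x, (A \ L).indicator 1 x * divergence ψ₂ x ≤
      tv N (A.indicator 1) + (C₁ + C₂ + 2 * K) * volume.real (A ∩ S) := by
  have hfin {B : Set (Euc N)} (hB : B ⊆ A) : volume B ≠ ⊤ := measure_ne_top_of_subset hB h1
  have hψ : ContDiff ℝ 1 ((1 - h) • ψ₁ + h • ψ₂) :=
    ((contDiff_const.sub hh).smul h₁).add (hh.smul h₂)
  have hψc : HasCompactSupport ((1 - h) • ψ₁ + h • ψ₂) := hc₁.smul_left.add hc₂.smul_left
  have hint₁ := integrable_mul_divergence
    (integrable_indicator_one (hA.inter hL) (hfin Set.inter_subset_left)) h₁ hc₁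
  have hint₂ := integrable_mul_divergence
    (integrable_indicator_one (hA.diff hL) (hfin Set.sdiff_subset)) h₂ hc₂
  have hint := integrable_mul_divergence hu.1 hψ hψc
  have hintS := (integrable_indicator_one (hA.inter hS) (hfin Set.inter_subset_left)).const_mul
    (C₁ + C₂ + 2 * K)
  have hvol : volume.real (A ∩ S) = ∫ x, (A ∩ S).indicator 1 x :=
    (integral_indicator_one (hA.inter hS)).symm
  rw [hvol, ← integral_const_mul, ← integral_add hint₁ hint₂]
  refine le_trans ?_ (add_le_add_left (integral_mul_divergence_le_tv hu hψ hψc fun x =>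
    norm_interpolate_le_one (hmem x) (hle₁ x) (hle₂ x)) _)
  rw [← integral_add hint hintS]
  exact integral_mono (hint₁.add hint₂) (hint.add hintS) fun x =>
    indicator_mul_divergence_add_le hh hmem (hK x) hzero hone h₁ (hle₁ x) (hC₁ x) h₂ (hle₂ x)
      (hC₂ x)

theorem MemBV.inter_halfSpace_and_sdiff_halfSpace (hA : MeasurableSet A) (h1 : volume A ≠ ⊤)
    (hu : MemBV N (A.indicator 1)) (i : Fin N) (s : ℝ)
    (hs : Tendsto (fun ε => volume.real (A ∩ {x | x i ∈ Set.Ioo s (s + ε)}) / ε) (𝓝[>] 0) (𝓝 0)) :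
    MemBV N ((A ∩ {x | x i ≤ s}).indicator 1) ∧ MemBV N ((A \ {x | x i ≤ s}).indicator 1) ∧
      tv N ((A ∩ {x | x i ≤ s}).indicator 1) + tv N ((A \ {x | x i ≤ s}).indicator 1) ≤
        tv N (A.indicator 1) := by
  have hcoord : Measurable fun x : Euc N => x i := by fun_prop
  have hL : MeasurableSet {x : Euc N | x i ≤ s} := measurableSet_le hcoord measurable_const
  refine memBV_and_tv_add_tv_le
    (integrable_indicator_one (hA.inter hL) (measure_ne_top_of_subset Set.inter_subset_left h1))
    (integrable_indicator_one (hA.diff hL) (measure_ne_top_of_subset Set.sdiff_subset h1)) ?_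
  rintro _ ⟨ψ₁, h₁, hc₁, hle₁, rfl⟩ _ ⟨ψ₂, h₂, hc₂, hle₂, rfl⟩
  obtain ⟨C₁, hC₁⟩ := exists_norm_divergence_le h₁ hc₁
  obtain ⟨C₂, hC₂⟩ := exists_norm_divergence_le h₂ hc₂
  obtain ⟨C, hcutoff⟩ := exists_halfSpace_cutoff i s
  have hid : Tendsto (fun ε : ℝ => ε) (𝓝[>] 0) (𝓝 0) := nhdsWithin_le_nhds
  have hlim := (((hid.const_mul (C₁ + C₂)).add_const (2 * C)).mul hs).const_add
    (tv N (A.indicator 1))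
  rw [mul_zero, add_zero] at hlim
  refine ge_of_tendsto hlim ?_
  filter_upwards [self_mem_nhdsWithin] with ε (hε : 0 < ε)
  obtain ⟨h, hh, hmem, hK, hzero, hone⟩ := hcutoff ε hε
  refine (integral_inter_add_integral_sdiff_le hA h1 hu hL
    (hcoord (measurableSet_Ioo (a := s) (b := s + ε))) hh hmem hK hzero
    (fun x hxL hxS => hone x ?_) h₁ hc₁ hle₁ hC₁ h₂ hc₂ hle₂ hC₂).trans_eq ?_
  · by_contra! hlt
    exact hxS ⟨not_le.1 hxL, hlt⟩
  · simp only [Set.preimage]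
    field_simp

end Cut

section Rigidity

variable {n N : ℕ}

/-- `A` has positive finite volume and attains equality in the isoperimetric inequality
`mul_invRadius_mul_volume_le_tv`. -/
structure IsIsoperimetric (A : Set (Euc N)) : Prop where
  measurableSet : MeasurableSet A
  volume_ne_zero : volume A ≠ 0
  volume_ne_top : volume A ≠ ⊤
  memBV : MemBV N (A.indicator 1)
  tv_le : tv N (A.indicator 1) ≤ N * invRadius N (volume A) * volume.real A

/-- The density of the first coordinate with respect to the volume on `A`. -/
def headDensity (A : Set (Euc (n + 1))) : ℝ → ENNReal := headSliceVolume (WithLp.toLp 2 ⁻¹' A)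

variable {A : Set (Euc (n + 1))}

lemma measurable_headDensity (hA : MeasurableSet A) : Measurable (headDensity A) :=
  measurable_headSliceVolume (measurableSet_preimage_toLp hA)

lemma lintegral_headDensity (hA : MeasurableSet A) : ∫⁻ t, headDensity A t = volume A :=
  (lintegral_headSliceVolume (measurableSet_preimage_toLp hA)).trans (volume_preimage_toLp hA)

lemma measurable_head : Measurable fun x : Euc (n + 1) => x 0 := by fun_prop

lemma map_head_restrict (hA : MeasurableSet A) :
    (volume.restrict A).map (fun x : Euc (n + 1) => x 0) =
      volume.withDensity (headDensity A) := by
  ext s hs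
  have hm := measurable_head (n := n) hs
  rw [Measure.map_apply measurable_head hs, Measure.restrict_apply hm, withDensity_apply _ hs,
    ← lintegral_headDensity (hm.inter hA), ← lintegral_indicator hs]
  refine lintegral_congr fun t => ?_
  by_cases ht : t ∈ s <;> simp [headDensity, headSliceVolume, headSlice, ht]

lemma measureReal_inter_head (hA : MeasurableSet A) (h1 : volume A ≠ ⊤) {s : Set ℝ}
    (hs : MeasurableSet s) :
    volume.real (A ∩ {x | x 0 ∈ s}) = ∫ t in s, (headDensity A t).toReal := by
  have h := congr_arg (fun μ => μ s) (map_head_restrict hA)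
  simp only [Measure.map_apply measurable_head hs, Measure.restrict_apply (measurable_head hs),
    withDensity_apply _ hs] at h
  rw [measureReal_def, Set.inter_comm]
  refine (congr_arg ENNReal.toReal h).trans (integral_toReal
    (measurable_headDensity hA).aemeasurable (ae_restrict_of_ae (ae_lt_top
      (measurable_headDensity hA) ?_))).symm
  rwa [lintegral_headDensity hA]

lemma measureReal_inter_head_le (hA : MeasurableSet A) (h0 : volume A ≠ 0) (h1 : volume A ≠ ⊤)
    (s : ℝ) :
    volume.real (A ∩ {x | x 0 ≤ s}) = volume.real A * lineCDF (headDensity A) s := by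
  have hvol : volume.real A ≠ 0 := ENNReal.toReal_ne_zero.2 ⟨h0, h1⟩
  rw [lineCDF_eq s (measurable_headDensity hA) (by rwa [lintegral_headDensity hA]),
    lintegral_headDensity hA, ← measureReal_def, mul_div_cancel₀ _ hvol]
  exact measureReal_inter_head hA h1 measurableSet_Iic

lemma measureReal_sdiff_head_le (hA : MeasurableSet A) (h0 : volume A ≠ 0) (h1 : volume A ≠ ⊤)
    (s : ℝ) :
    volume.real (A \ {x | x 0 ≤ s}) = volume.real A * (1 - lineCDF (headDensity A) s) := by
  have h := measureReal_inter_add_sdiff (μ := volume) (s := A)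
    (measurable_head (n := n) (measurableSet_Iic (a := s))) h1
  have hle := measureReal_inter_head_le hA h0 h1 s
  simp only [Set.preimage, Set.mem_Iic] at h
  rw [mul_sub, mul_one, ← hle]
  exact eq_sub_of_add_eq' h

lemma tendsto_measureReal_inter_head_Ioo_div (hA : MeasurableSet A) (h0 : volume A ≠ 0)
    (h1 : volume A ≠ ⊤) {s : ℝ} (hs : HasDerivAt (lineCDF (headDensity A)) 0 s) :
    Tendsto (fun ε => volume.real (A ∩ {x | x 0 ∈ Set.Ioo s (s + ε)}) / ε) (𝓝[>] 0) (𝓝 0) := by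
  have h := hs.tendsto_slope_zero_right.const_mul (volume.real A)
  rw [mul_zero] at h
  refine h.congr' ?_
  filter_upwards [self_mem_nhdsWithin] with ε (hε : 0 < ε)
  rw [measureReal_inter_head hA h1 measurableSet_Ioo, ← integral_Ioc_eq_integral_Ioo,
    ← intervalIntegral.integral_of_le (by linarith), lineCDF_sub _ (measurable_headDensity hA)
      (by rwa [lintegral_headDensity hA]), lintegral_headDensity hA, ← measureReal_def, smul_eq_mul]
  have hvol : volume.real A ≠ 0 := ENNReal.toReal_ne_zero.2 ⟨h0, h1⟩
  field_simp

lemma mul_invRadius_mul_measureReal_lt_tv {A B : Set (Euc N)} (hN : N ≠ 0) (h0 : volume.real B ≠ 0)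
    (hlt : volume.real B < volume.real A) (hB : MeasurableSet B) (hu : MemBV N (B.indicator 1)) :
    N * invRadius N (volume A) * volume.real B < tv N (B.indicator 1) := by
  obtain ⟨hB0, hB1⟩ := ENNReal.toReal_ne_zero.1 h0
  refine lt_of_lt_of_le ?_ (mul_invRadius_mul_volume_le_tv hB hB0 hB1 hu)
  have : (0 : ℝ) < N := Nat.cast_pos.2 (Nat.pos_of_ne_zero hN)
  have : 0 < volume.real B := measureReal_nonneg.lt_of_ne' h0
  have : 0 < ballVolume N := ballVolume_pos N
  change _ < N * (ballVolume N / volume.real B) ^ (N : ℝ)⁻¹ * volume.real B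
  change N * (ballVolume N / volume.real A) ^ (N : ℝ)⁻¹ * volume.real B < _
  gcongr

namespace IsIsoperimetric

lemma invRadius_pos {A : Set (Euc N)} (hA : IsIsoperimetric A) : 0 < invRadius N (volume A) :=
  Real.rpow_pos_of_pos
    (div_pos (ballVolume_pos N) (ENNReal.toReal_pos hA.volume_ne_zero hA.volume_ne_top)) _

/-- Otherwise cutting `A` along a hyperplane would give two sets of smaller volume without
increasing the total perimeter. -/
lemma lineCDF_headDensity_notMem_Ioo (hA : IsIsoperimetric A) {s : ℝ}
    (hs : HasDerivAt (lineCDF (headDensity A)) 0 s) :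
    lineCDF (headDensity A) s ∉ Set.Ioo (0 : ℝ) 1 := by
  rintro ⟨hpos, hlt⟩
  obtain ⟨hmeas, h0, h1, hu, htv⟩ := hA
  have hvol : 0 < volume.real A := ENNReal.toReal_pos h0 h1
  have hL : MeasurableSet {x : Euc (n + 1) | x 0 ≤ s} := measurable_head measurableSet_Iic
  obtain ⟨hinter, hsdiff, hadd⟩ := MemBV.inter_halfSpace_and_sdiff_halfSpace hmeas h1 hu 0 s
    (tendsto_measureReal_inter_head_Ioo_div hmeas h0 h1 hs)
  have hle := measureReal_inter_head_le hmeas h0 h1 s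
  have hgt := measureReal_sdiff_head_le hmeas h0 h1 s
  have htv_inter := mul_invRadius_mul_measureReal_lt_tv (A := A) n.succ_ne_zero
    (by rw [hle]; positivity) (by rw [hle]; exact mul_lt_of_lt_one_right hvol hlt)
    (hmeas.inter hL) hinter
  have htv_sdiff := mul_invRadius_mul_measureReal_lt_tv (A := A) n.succ_ne_zero
    (by rw [hgt]; exact mul_ne_zero hvol.ne' (sub_pos.2 hlt).ne')
    (by rw [hgt]; exact mul_lt_of_lt_one_right hvol (by linarith)) (hmeas.diff hL) hsdiff
  rw [hle] at htv_inter
  rw [hgt] at htv_sdiff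
  linarith

lemma ae_knotheDiv_eq {A : Set (Euc N)} (hA : IsIsoperimetric A) :
    ∀ᵐ x, x ∈ (WithLp.toLp 2 ⁻¹' A : Set (Fin N → ℝ)) →
      knotheDiv N (WithLp.toLp 2 ⁻¹' A) x = ENNReal.ofReal (N * invRadius N (volume A)) := by
  obtain ⟨hmeas, h0, h1, hu, htv⟩ := hA
  have hpre := measurableSet_preimage_toLp hmeas
  have hvol := volume_preimage_toLp hmeas
  have hle := ae_le_knotheDiv hpre (by rwa [hvol]) (by rwa [hvol])
  rw [hvol] at hle
  have hconst : ∫⁻ _ in WithLp.toLp 2 ⁻¹' A, ENNReal.ofReal (N * invRadius N (volume A)) =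
      ENNReal.ofReal (N * invRadius N (volume A) * volume.real A) := by
    have hcoef : 0 ≤ N * invRadius N (volume A) :=
      mul_nonneg N.cast_nonneg (invRadius_nonneg _ _)
    rw [setLIntegral_const, hvol, ENNReal.ofReal_mul hcoef, measureReal_def,
      ENNReal.ofReal_toReal h1]
  have hdiv := lintegral_knotheDiv_mul_le_tv hpre hu
    fun x => Set.indicator_nonneg (fun _ _ => zero_le_one) x
  rw [lintegral_mul_ofReal_indicator_one hmeas] at hdiv
  have heq := (PiLp.volume_preserving_toLp (Fin N)).setLIntegral_comp_preimage hmeas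
    ((measurable_knotheDiv hpre).comp (PiLp.volume_preserving_ofLp (Fin N)).measurable)
  refine (ae_restrict_iff' hpre).1 (ae_eq_of_ae_le_of_lintegral_le
    ((ae_restrict_iff' hpre).2 hle) ?_ (measurable_knotheDiv hpre).aemeasurable ?_).symm
  · rw [hconst]
    exact ENNReal.ofReal_ne_top
  · rw [hconst]
    exact (heq.trans_le hdiv).trans (ENNReal.ofReal_le_ofReal htv)

lemma ae_transportDeriv_eq (hn : n ≠ 0) (hA : IsIsoperimetric A) :
    ∀ᵐ t, headDensity A t ≠ 0 →
      transportDeriv n (headDensity A) t = invRadius (n + 1) (volume A) := by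
  have hpre := measurableSet_preimage_toLp hA.measurableSet
  have hvol := volume_preimage_toLp hA.measurableSet
  have hderiv := measurable_transportDeriv n (measurable_headDensity hA.measurableSet)
  have hjac := ae_transportDeriv_mul_pow_eq hpre (by rw [hvol]; exact hA.volume_ne_zero)
    (by rw [hvol]; exact hA.volume_ne_top)
  rw [hvol] at hjac
  have heq : ∀ᵐ x, x ∈ (WithLp.toLp 2 ⁻¹' A : Set (Fin (n + 1) → ℝ)) →
      transportDeriv n (headDensity A) (x 0) = invRadius (n + 1) (volume A) := by
    filter_upwards [hA.ae_knotheDiv_eq, ae_headSliceVolume_ne_zero_and_le_knotheDiv hpre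
      fun t => ae_le_knotheDiv (measurableSet_headSlice hpre t),
      (Measure.quasiMeasurePreserving_eval (fun _ : Fin (n + 1) => (volume : Measure ℝ)) 0).ae hjac]
      with x hdiv hbound hpow hmem
    obtain ⟨hne, hle⟩ := hbound hmem
    obtain ⟨htop, hpow⟩ := hpow hne
    have hle' := (hle htop).trans_eq (hdiv hmem)
    by_contra hlt
    have hr := transportRadius_nonneg n (headDensity A) (x 0)
    have hc := invRadius_nonneg (n + 1) (volume A)
    have hamgm := mul_lt_add_mul_of_mul_pow_eq hn (transportDeriv_nonneg n (headDensity A) (x 0))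
      (mul_nonneg hr (invRadius_nonneg n (headDensity A (x 0)))) hc hpow hlt
    refine hle'.not_gt ((ENNReal.ofReal_lt_ofReal_iff (lt_of_le_of_lt (by positivity) hamgm)).2 ?_)
    push_cast
    exact hamgm
  have hslice := (ae_mem_iff_ae_ae_finCons_mem (s := {x | x ∈ (WithLp.toLp 2 ⁻¹' A) →
    transportDeriv n (headDensity A) (x 0) = invRadius (n + 1) (volume A)})
    (hpre.imp ((hderiv.comp (measurable_pi_apply 0)) (measurableSet_singleton _)))).1 heq
  filter_upwards [hslice] with t ht hne
  by_contra hlt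
  refine hne (measure_eq_zero_iff_ae_notMem.2 ?_)
  filter_upwards [ht] with x' hx' hmem using hlt (hx' hmem)

lemma exists_ae_abs_head_sub_le (hn : n ≠ 0) (hA : IsIsoperimetric A) :
    ∃ p : ℝ, (∀ᵐ x ∂volume.restrict A, |x 0 - p| ≤ (invRadius (n + 1) (volume A))⁻¹) ∧
      ∫ x in A, (x 0 - p) = 0 := by
  have hm := measurable_headDensity hA.measurableSet
  have htotal := lintegral_headDensity hA.measurableSet
  have hfin : ∫⁻ t, headDensity A t ≠ ⊤ := htotal.trans_ne hA.volume_ne_top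
  have hderiv : ∀ᵐ t, lineCDF (headDensity A) t ∈ Set.Ioo (0 : ℝ) 1 →
      transportDeriv n (headDensity A) t = invRadius (n + 1) (volume A) := by
    filter_upwards [hA.ae_transportDeriv_eq hn, ae_hasDerivAt_lineCDF hm hfin] with t h hderiv hmem
    refine h fun hzero => hA.lineCDF_headDensity_notMem_Ioo ?_ hmem
    simpa only [hzero, ENNReal.toReal_zero, zero_div] using hderiv
  obtain ⟨p, hle, hint⟩ := exists_ae_abs_sub_le_and_integral_eq_zero hA.invRadius_pos hm
    (htotal.trans_ne hA.volume_ne_zero) hfin hderiv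
  refine ⟨p, ?_, ?_⟩
  · have hmap : ∀ᵐ t ∂(volume.restrict A).map (fun x : Euc (n + 1) => x 0),
        |t - p| ≤ (invRadius (n + 1) (volume A))⁻¹ := by
      rw [map_head_restrict hA.measurableSet]
      exact (ae_withDensity_iff hm).2 hle
    exact ae_of_ae_map measurable_head.aemeasurable hmap
  · have hmap := integral_map (μ := volume.restrict A) measurable_head.aemeasurable
      (f := fun t => t - p) (by fun_prop)
    rw [← hmap, map_head_restrict hA.measurableSet,
      integral_withDensity_eq_integral_toReal_smul hm (ae_lt_top hm hfin)]
    exact hint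

lemma preimage {A : Set (Euc N)} (hA : IsIsoperimetric A) (L : Euc N ≃ₗᵢ[ℝ] Euc N) :
    IsIsoperimetric (L ⁻¹' A) := by
  have hvol : volume (L ⁻¹' A) = volume A :=
    L.measurePreserving.measure_preimage hA.measurableSet.nullMeasurableSet
  have hind : (L ⁻¹' A).indicator (1 : Euc N → ℝ) = A.indicator 1 ∘ L := rfl
  refine ⟨L.measurePreserving.measurable hA.measurableSet, hvol.trans_ne hA.volume_ne_zero,
    hvol.trans_ne hA.volume_ne_top, ?_, ?_⟩
  · exact hind ▸ hA.memBV.comp_isometry L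
  · rw [hind, tv_comp_isometry, measureReal_def, hvol]
    exact hA.tv_le

/-- The case of a general direction `e` is reduced to the first coordinate by a reflection. -/
lemma exists_ae_abs_inner_sub_le (hn : n ≠ 0) (hA : IsIsoperimetric A) {e : Euc (n + 1)}
    (he : ‖e‖ = 1) :
    ∃ p : ℝ, (∀ᵐ x ∂volume.restrict A, |inner ℝ e x - p| ≤ (invRadius (n + 1) (volume A))⁻¹) ∧
      ∫ x in A, (inner ℝ e x - p) = 0 := by
  set e₀ : Euc (n + 1) := EuclideanSpace.single 0 1
  have hnorm : ‖e₀‖ = ‖e‖ := by simp [e₀, he]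
  set L : Euc (n + 1) ≃ₗᵢ[ℝ] Euc (n + 1) := Submodule.reflection (ℝ ∙ (e₀ - e))ᗮ
  have hL : L e₀ = e := Submodule.reflection_sub hnorm
  have hhead : ∀ x : Euc (n + 1), x 0 = inner ℝ e (L x) := fun x => by
    rw [← hL, L.inner_map_map, EuclideanSpace.inner_single_left]
    simp
  have hpres : MeasurePreserving L (volume.restrict (L ⁻¹' A)) (volume.restrict A) :=
    L.measurePreserving.restrict_preimage hA.measurableSet
  obtain ⟨p, hle, hint⟩ := (hA.preimage L).exists_ae_abs_head_sub_le hn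
  rw [L.measurePreserving.measure_preimage hA.measurableSet.nullMeasurableSet] at hle
  simp only [hhead] at hle hint
  have hemb := L.toHomeomorph.measurableEmbedding
  refine ⟨p, ?_, ?_⟩
  · rw [← hpres.map_eq]
    exact hemb.ae_map_iff.2 hle
  · rw [← hpres.integral_comp hemb]
    exact hint

end IsIsoperimetric

end Rigidity

section InnerBound

variable {Ω E : Type*} [NormedAddCommGroup E] [InnerProductSpace ℝ E]

lemma ae_norm_le_of_forall_ae_inner_le [TopologicalSpace.SeparableSpace E]
    {_ : MeasurableSpace Ω} {μ : Measure Ω} {f : Ω → E} {R : ℝ} (hR : 0 ≤ R)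
    (h : ∀ y, ∀ᵐ x ∂μ, inner ℝ y (f x) ≤ R * ‖y‖) : ∀ᵐ x ∂μ, ‖f x‖ ≤ R := by
  filter_upwards [ae_all_iff.2 fun k => h (TopologicalSpace.denseSeq E k)] with x hx
  have hclosed : IsClosed {y : E | inner ℝ y (f x) ≤ R * ‖y‖} :=
    isClosed_le (by fun_prop) (by fun_prop)
  have hall : ∀ y : E, inner ℝ y (f x) ≤ R * ‖y‖ :=
    fun y => (TopologicalSpace.denseRange_denseSeq E).induction_on y hclosed hx
  have hself := hall (f x)
  rw [real_inner_self_eq_norm_mul_norm] at hself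
  rcases (norm_nonneg (f x)).eq_or_lt with h0 | h0
  · rwa [← h0]
  · exact le_of_mul_le_mul_right hself h0

variable [FiniteDimensional ℝ E] [MeasurableSpace E] [BorelSpace E] {μ : Measure E}
  [IsFiniteMeasure μ]

lemma integrable_id_of_forall_ae_abs_inner_sub_le {C : ℝ}
    (h : ∀ e : E, ‖e‖ = 1 → ∃ p : ℝ, ∀ᵐ x ∂μ, |inner ℝ e x - p| ≤ C) :
    Integrable (fun x : E => x) μ := by
  have hsum : (fun x : E => x) = fun x => ∑ i, inner ℝ (stdOrthonormalBasis ℝ E i) x •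
      stdOrthonormalBasis ℝ E i :=
    funext fun x => ((stdOrthonormalBasis ℝ E).sum_repr' x).symm
  rw [hsum]
  refine integrable_finsetSum _ fun i _ => Integrable.smul_const ?_ _
  obtain ⟨p, hp⟩ := h (stdOrthonormalBasis ℝ E i) ((stdOrthonormalBasis ℝ E).norm_eq_one i)
  have hbdd : Integrable (fun x => inner ℝ (stdOrthonormalBasis ℝ E i) x - p) μ :=
    Integrable.of_bound (by fun_prop) C hp
  exact (hbdd.add (integrable_const p)).congr (ae_of_all _ fun x => sub_add_cancel _ _)

/-- The center of the ball is the barycenter of `μ`, so that it does not depend on `e`. -/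
lemma exists_ae_mem_closedBall_of_forall_inner [NeZero μ] {R : ℝ} (hR : 0 ≤ R)
    (h : ∀ e : E, ‖e‖ = 1 → ∃ p : ℝ, (∀ᵐ x ∂μ, |inner ℝ e x - p| ≤ R) ∧
      ∫ x, (inner ℝ e x - p) ∂μ = 0) :
    ∃ x₀, ∀ᵐ x ∂μ, x ∈ Metric.closedBall x₀ R := by
  have hid : Integrable (fun x : E => x) μ :=
    integrable_id_of_forall_ae_abs_inner_sub_le fun e he => (h e he).imp fun p hp => hp.1
  have hunit : ∀ e : E, ‖e‖ = 1 → ∀ᵐ x ∂μ, |inner ℝ e (x - ⨍ y, y ∂μ)| ≤ R := fun e he => by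
    obtain ⟨p, hle, hint⟩ := h e he
    have hp : inner ℝ e (⨍ y, y ∂μ) = p := by
      rw [integral_sub (hid.const_inner e) (integrable_const p), integral_inner hid,
        integral_const, sub_eq_zero] at hint
      rw [average_eq, inner_smul_right, hint, smul_eq_mul, inv_mul_cancel_left₀]
      exact measureReal_univ_ne_zero
    simpa only [inner_sub_right, hp] using hle
  refine ⟨⨍ y, y ∂μ, ?_⟩
  simp only [mem_closedBall_iff_norm]
  refine ae_norm_le_of_forall_ae_inner_le hR fun y => ?_
  rcases eq_or_ne y 0 with rfl | hy
  · simp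
  have hpos : 0 < ‖y‖ := norm_pos_iff.2 hy
  filter_upwards [hunit (‖y‖⁻¹ • y) (by rw [norm_smul, norm_inv, norm_norm]; field_simp)] with x hx
  have hle := (le_abs_self _).trans hx
  rwa [real_inner_smul_left, inv_mul_eq_div, div_le_iff₀ hpos] at hle

end InnerBound

/-- Equality in the isoperimetric inequality forces the width of `A` to be at most that of a ball
of the same volume, in every direction. -/
theorem IsIsoperimetric.exists_ae_eq_ball {N : ℕ} (hN : 2 ≤ N) {A : Set (Euc N)}
    (hA : IsIsoperimetric A) :
    ∃ x₀, A =ᵐ[volume] Metric.ball x₀ (invRadius N (volume A))⁻¹ := by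
  obtain ⟨n, rfl⟩ : ∃ n, N = n + 1 := ⟨N - 1, by omega⟩
  have hR : 0 < (invRadius (n + 1) (volume A))⁻¹ := inv_pos.2 hA.invRadius_pos
  have : Fact (volume A < ⊤) := ⟨hA.volume_ne_top.lt_top⟩
  have : NeZero (volume.restrict A) := ⟨mt Measure.restrict_eq_zero.1 hA.volume_ne_zero⟩
  obtain ⟨x₀, hx₀⟩ := exists_ae_mem_closedBall_of_forall_inner hR.le
    fun e he => hA.exists_ae_abs_inner_sub_le (by omega) he
  have hball : volume (Metric.ball x₀ (invRadius (n + 1) (volume A))⁻¹) = volume A := by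
    rw [volume_ball_eq x₀ hR, inv_pow, invRadius_pow n.succ_ne_zero, inv_div,
      div_mul_cancel₀ _ (ballVolume_pos _).ne', ENNReal.ofReal_toReal hA.volume_ne_top]
  have hsub : A ≤ᵐ[volume] Metric.closedBall x₀ (invRadius (n + 1) (volume A))⁻¹ :=
    (ae_restrict_iff' hA.measurableSet).1 hx₀
  have hclosed := Measure.addHaar_closedBall_eq_addHaar_ball volume x₀
    (invRadius (n + 1) (volume A))⁻¹
  refine ⟨x₀, (ae_eq_of_ae_subset_of_measure_ge hsub (hclosed.trans hball).le
    hA.measurableSet.nullMeasurableSet measure_closedBall_lt_top.ne).trans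
    (ae_eq_of_subset_of_measure_ge Metric.ball_subset_closedBall hclosed.le
    measurableSet_ball.nullMeasurableSet measure_closedBall_lt_top.ne).symm⟩

/-! ### Gagliardo–Nirenberg maximizers -/

section LebesgueNorms

variable {N : ℕ} {q : ℝ} {u v : Euc N → ℝ}

lemma nrm1_eq_nrmq (u : Euc N → ℝ) : nrm1 N u = nrmq N 1 u := by simp [nrm1, nrmq]

lemma nrmq_nonneg (q : ℝ) (u : Euc N → ℝ) : 0 ≤ nrmq N q u := ENNReal.toReal_nonneg

lemma nrm1_nonneg (u : Euc N → ℝ) : 0 ≤ nrm1 N u := ENNReal.toReal_nonneg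

lemma nrmq_congr (q : ℝ) (h : u =ᵐ[volume] v) : nrmq N q u = nrmq N q v := by
  rw [nrmq, nrmq, eLpNorm_congr_ae h]

lemma nrmq_const_mul (q : ℝ) (u : Euc N → ℝ) (c : ℝ) :
    nrmq N q (fun x => c * u x) = |c| * nrmq N q u := by
  have h := congrArg ENNReal.toReal (eLpNorm_const_smul c u (ENNReal.ofReal q) volume)
  rwa [ENNReal.toReal_mul, toReal_enorm] at h

lemma nrmq_comp_inv_smul_rpow (hq : 0 < q) (u : Euc N → ℝ) {r : ℝ} (hr : 0 < r) :
    nrmq N q (fun x => u (r⁻¹ • x)) ^ q = r ^ N * nrmq N q u ^ q := by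
  have h : eLpNorm (fun x => u (r⁻¹ • x)) (ENNReal.ofReal q) volume
      = ENNReal.ofReal (r ^ N) ^ q⁻¹ * eLpNorm u (ENNReal.ofReal q) volume := by
    have hmap := Measure.map_addHaar_smul (volume : Measure (Euc N)) (inv_ne_zero hr.ne')
    rw [finrank_euclideanSpace_fin, inv_pow, inv_inv, abs_of_pos (by positivity)] at hmap
    rw [← Function.comp_def u, ← (measurableEmbedding_const_smul₀
      (inv_ne_zero hr.ne')).eLpNorm_map_measure, hmap,
      eLpNorm_smul_measure_of_ne_zero (ENNReal.ofReal_pos.2 (by positivity)).ne', smul_eq_mul,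
      one_div, ENNReal.toReal_inv, ENNReal.toReal_ofReal hq.le]
  rw [nrmq, nrmq, h, ENNReal.toReal_mul, ← ENNReal.toReal_rpow, ENNReal.toReal_ofReal
    (by positivity), mul_rpow (by positivity) ENNReal.toReal_nonneg,
    rpow_inv_rpow (by positivity) hq.ne']

lemma nrmq_rpow_eq_integral (hq : 0 < q) (hu : AEStronglyMeasurable u) :
    nrmq N q u ^ q = ∫ x, |u x| ^ q := by
  rw [nrmq, toReal_eLpNorm hu, lpNorm_eq_integral_norm_rpow_toReal (by simpa using hq)
    ENNReal.ofReal_ne_top hu, ENNReal.toReal_ofReal hq.le, rpow_inv_rpow _ hq.ne']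
  · rfl
  · positivity

lemma nrmq_rpow_indicator_one (hq : 0 < q) {A : Set (Euc N)} (hA : MeasurableSet A) :
    nrmq N q (A.indicator 1) ^ q = volume.real A := by
  rw [nrmq, Pi.one_def, eLpNorm_indicator_const hA (by simpa using hq) ENNReal.ofReal_ne_top,
    ENNReal.toReal_ofReal hq.le, enorm_one, one_mul, ← ENNReal.toReal_rpow, one_div,
    rpow_inv_rpow ENNReal.toReal_nonneg hq.ne', measureReal_def]

lemma nrmq_pos (hq : 0 < q) (hu : MemLp u (ENNReal.ofReal q)) (h : ¬ u =ᵐ[volume] 0) :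
    0 < nrmq N q u :=
  ENNReal.toReal_pos (mt (eLpNorm_eq_zero_iff hu.1 (by simpa using hq)).1 h) hu.2.ne

lemma memLp_of_nrmq_pos (hu : AEStronglyMeasurable u) (h : 0 < nrmq N q u) :
    MemLp u (ENNReal.ofReal q) :=
  ⟨hu, lt_top_iff_ne_top.2 (ENNReal.toReal_ne_zero.1 h.ne').2⟩

lemma nrm1_pos (hu : Integrable u) (h : ¬ u =ᵐ[volume] 0) : 0 < nrm1 N u := by
  rw [nrm1_eq_nrmq]
  exact nrmq_pos one_pos (by simpa using memLp_one_iff_integrable.2 hu) h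

lemma nrm1_indicator_one {A : Set (Euc N)} (hA : MeasurableSet A) :
    nrm1 N (A.indicator 1) = volume.real A := by
  simpa only [nrm1_eq_nrmq, rpow_one] using nrmq_rpow_indicator_one one_pos hA

lemma tv_pos (hN : N ≠ 0) (hu : MemBV N u) (h : ¬ u =ᵐ[volume] 0) : 0 < tv N u :=
  (tv_nonneg u).lt_of_ne fun h' => h (ae_eq_zero_of_tv_eq_zero hN hu h'.symm)

lemma ratioQ_congr (q : ℝ) (h : u =ᵐ[volume] v) : ratioQ N q u = ratioQ N q v := by
  simp only [ratioQ, nrm1_eq_nrmq, nrmq_congr _ h, tv_congr h]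

lemma ratioQ_const_mul (q : ℝ) (u : Euc N → ℝ) {c : ℝ} (hc : c ≠ 0) :
    ratioQ N q (fun x => c * u x) = ratioQ N q u := by
  have hc' : 0 < |c| := abs_pos.2 hc
  rw [ratioQ, ratioQ, nrm1_eq_nrmq, nrm1_eq_nrmq, nrmq_const_mul, nrmq_const_mul,
    tv_const_mul u hc, mul_rpow hc'.le (nrmq_nonneg _ _), mul_rpow hc'.le (nrmq_nonneg _ _),
    mul_rpow hc'.le (tv_nonneg _), mul_mul_mul_comm, ← rpow_add hc', sub_add_cancel,
    mul_div_mul_left _ _ (rpow_pos_of_pos hc' q).ne']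

lemma ratioQ_comp_inv_smul (hq : 0 < q) (u : Euc N → ℝ) {r : ℝ} (hr : 0 < r) :
    ratioQ N q (fun x => u (r⁻¹ • x)) = ratioQ N q u := by
  have h1 : nrm1 N (fun x => u (r⁻¹ • x)) = r ^ N * nrm1 N u := by
    simpa only [nrm1_eq_nrmq, rpow_one] using nrmq_comp_inv_smul_rpow one_pos u hr
  have hr' : (r ^ N) ^ (q - (q - 1) * N) * (r ^ N * r⁻¹) ^ ((q - 1) * (N : ℝ)) = r ^ N := by
    rw [mul_rpow (by positivity) (by positivity), ← mul_assoc, ← rpow_add (by positivity),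
      inv_rpow hr.le, ← rpow_neg hr.le, ← rpow_natCast, ← rpow_mul hr.le, ← rpow_add hr]
    ring_nf
  rw [ratioQ, ratioQ, nrmq_comp_inv_smul_rpow hq u hr, h1, tv_comp_inv_smul u hr,
    mul_rpow (by positivity) (nrm1_nonneg u),
    mul_rpow (by positivity) (tv_nonneg _), mul_mul_mul_comm, hr',
    mul_div_mul_left _ _ (by positivity)]

end LebesgueNorms

section GNMaximizer

variable {N : ℕ} {q : ℝ} {u v : Euc N → ℝ}

/-- A function of `BV(ℝ^N)`, not a.e. zero, attaining the best constant in the Gagliardo–Nirenberg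
inequality. If `v = 0` a.e., then `ratioQ N q v = 0` with the convention `x / 0 = 0`, so comparing
over all of `BV(ℝ^N)` amounts to comparing over nonzero functions. -/
structure IsGNMaximizer (N : ℕ) (q : ℝ) (u : Euc N → ℝ) : Prop where
  memBV : MemBV N u
  not_ae_eq_zero : ¬ u =ᵐ[volume] 0
  ratioQ_le : ∀ v, MemBV N v → ratioQ N q v ≤ ratioQ N q u

lemma exists_nrm1_eq_tv_eq_ratioQ_eq (hN : N ≠ 0) (hq : 0 < q) (hv : MemBV N v)
    (hv₀ : ¬ v =ᵐ[volume] 0) {s t : ℝ} (hs : 0 < s) (ht : 0 < t) :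
    ∃ w, MemBV N w ∧ nrm1 N w = s ∧ tv N w = t ∧ ratioQ N q w = ratioQ N q v := by
  have hsv := nrm1_pos hv.1 hv₀
  have htv := tv_pos hN hv hv₀
  set r := s / nrm1 N v * (tv N v / t) with hr
  have hr₀ : 0 < r := by positivity
  set c := s / (nrm1 N v * r ^ N) with hc
  have hc₀ : 0 < c := by positivity
  have hnrm : nrm1 N (fun x => v (r⁻¹ • x)) = r ^ N * nrm1 N v := by
    simpa only [nrm1_eq_nrmq, rpow_one] using nrmq_comp_inv_smul_rpow one_pos v hr₀
  refine ⟨fun x => c * v (r⁻¹ • x), (hv.comp_inv_smul hr₀).const_mul hc₀.ne', ?_, ?_, ?_⟩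
  · rw [nrm1_eq_nrmq, nrmq_const_mul, ← nrm1_eq_nrmq, hnrm, abs_of_pos hc₀, hc]
    field_simp
  · rw [tv_const_mul _ hc₀.ne', tv_comp_inv_smul v hr₀, abs_of_pos hc₀]
    calc c * (r ^ N * r⁻¹ * tv N v) = s / nrm1 N v * tv N v * r⁻¹ := by rw [hc]; field_simp
      _ = t := by rw [hr]; field_simp
  · rw [ratioQ_const_mul q _ hc₀.ne', ratioQ_comp_inv_smul hq v hr₀]

lemma isGNMaximizer_of_forall_nrmq_le (hN : N ≠ 0) (hq : 0 < q) (hu : MemBV N u)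
    (hu₀ : ¬ u =ᵐ[volume] 0)
    (h : ∀ v, MemBV N v → nrm1 N v = nrm1 N u → tv N v = tv N u →
      nrmq N q v ^ q ≤ nrmq N q u ^ q) : IsGNMaximizer N q u := by
  have hpos (w : Euc N → ℝ) :
      0 ≤ nrm1 N w ^ (q - (q - 1) * N) * tv N w ^ ((q - 1) * (N : ℝ)) :=
    mul_nonneg (rpow_nonneg (nrm1_nonneg w) _) (rpow_nonneg (tv_nonneg w) _)
  refine ⟨hu, hu₀, fun v hv => ?_⟩
  by_cases hv₀ : v =ᵐ[volume] 0
  · have hzero : nrmq N q v = 0 := by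
      rw [nrmq_congr q hv₀, nrmq, eLpNorm_zero, ENNReal.toReal_zero]
    rw [ratioQ, hzero, zero_rpow hq.ne', zero_div]
    exact div_nonneg (rpow_nonneg (nrmq_nonneg q u) q) (hpos u)
  · obtain ⟨w, hw, hnrm, htv, hratio⟩ := exists_nrm1_eq_tv_eq_ratioQ_eq hN hq hv hv₀
      (nrm1_pos hu.1 hu₀) (tv_pos hN hu hu₀)
    rw [← hratio, ratioQ, ratioQ, hnrm, htv]
    exact div_le_div_of_nonneg_right (h w hw hnrm htv) (hpos u)

lemma not_ae_eq_zero_of_tv_rpow_add_nrm1_rpow_eq_one {a b : ℝ} (ha : a ≠ 0) (hb : b ≠ 0)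
    (h : tv N u ^ a + nrm1 N u ^ b = 1) : ¬ u =ᵐ[volume] 0 := fun hu => by
  have htv : tv N u = 0 := by
    have h2 := tv_const_mul u (two_ne_zero (α := ℝ))
    rw [tv_congr (hu.mono fun x hx => show 2 * u x = u x by simp [hx]), abs_two] at h2
    linarith
  rw [htv, nrm1_eq_nrmq, nrmq_congr 1 hu, nrmq, eLpNorm_zero, ENNReal.toReal_zero,
    zero_rpow ha, zero_rpow hb] at h
  norm_num at h

/-- Rescaling keeps the ratio and prescribes both the `L¹` norm and the total variation, so a
maximizer of `D_α` has the largest `L^q` norm among functions sharing these two norms with it. -/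
theorem isGNMaximizer_of_eq_sSup (hN : N ≠ 0) (hq : 0 < q) {α a b : ℝ} (hα : 0 < α) (ha : a ≠ 0)
    (hb : b ≠ 0) (hu : MemBV N u) (hcon : tv N u ^ a + nrm1 N u ^ b = 1)
    (hmax : nrm1 N u + α * nrmq N q u ^ q =
      sSup { r | ∃ v : Euc N → ℝ, MemBV N v ∧ tv N v ^ a + nrm1 N v ^ b = 1 ∧
        r = nrm1 N v + α * nrmq N q v ^ q }) : IsGNMaximizer N q u := by
  have hu₀ := not_ae_eq_zero_of_tv_rpow_add_nrm1_rpow_eq_one ha hb hcon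
  have hpos : 0 < nrm1 N u + α * nrmq N q u ^ q :=
    add_pos_of_pos_of_nonneg (nrm1_pos hu.1 hu₀)
      (mul_nonneg hα.le (rpow_nonneg (nrmq_nonneg q u) q))
  refine isGNMaximizer_of_forall_nrmq_le hN hq hu hu₀ fun v hv hnrm htv => ?_
  have hbdd := not_imp_comm.1 Real.sSup_of_not_bddAbove (hmax.symm.trans_ne hpos.ne')
  have hle := hmax.symm ▸ le_csSup hbdd ⟨v, hv, by rw [htv, hnrm, hcon], rfl⟩
  rw [hnrm, add_le_add_iff_left] at hle
  exact le_of_mul_le_mul_left hle hα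

lemma IsGNMaximizer.congr (hu : IsGNMaximizer N q u) (h : u =ᵐ[volume] v) :
    IsGNMaximizer N q v :=
  ⟨hu.memBV.congr h, fun hv => hu.not_ae_eq_zero (h.trans hv), ratioQ_congr q h ▸ hu.ratioQ_le⟩

lemma IsGNMaximizer.const_mul (hu : IsGNMaximizer N q u) {c : ℝ} (hc : c ≠ 0) :
    IsGNMaximizer N q fun x => c * u x :=
  ⟨hu.memBV.const_mul hc,
    fun h => hu.not_ae_eq_zero (h.mono fun _ hx => (mul_eq_zero.1 hx).resolve_left hc),
    ratioQ_const_mul q u hc ▸ hu.ratioQ_le⟩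

lemma indicator_ball_one_not_ae_eq_zero {R : ℝ} (hR : 0 < R) :
    ¬ (Metric.ball (0 : Euc N) R).indicator (1 : Euc N → ℝ) =ᵐ[volume] 0 := fun h => by
  have hR' := integral_indicator_ball_one (N := N) hR
  rw [integral_congr_ae h] at hR'
  have := ballVolume_pos N
  simp only [Pi.zero_apply, integral_zero] at hR'
  exact (mul_pos (pow_pos hR N) this).ne hR'

lemma ratioQ_eq_rpow (hq : 0 < q) (u : Euc N → ℝ) :
    ratioQ N q u = (nrmq N q u /
      (nrm1 N u ^ (1 - (q - 1) * N / q) * tv N u ^ ((q - 1) * N / q))) ^ q := by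
  have hnrm := nrm1_nonneg u
  have htv := tv_nonneg u
  rw [div_rpow (nrmq_nonneg q u) (by positivity), mul_rpow (by positivity) (by positivity),
    ← rpow_mul hnrm, ← rpow_mul htv, sub_mul, one_mul, div_mul_cancel₀ _ hq.ne', ratioQ]

lemma ratioQ_pos (hN : N ≠ 0) (hq : 0 < q) (hu : MemBV N u) (huq : MemLp u (ENNReal.ofReal q))
    (h : ¬ u =ᵐ[volume] 0) : 0 < ratioQ N q u :=
  div_pos (rpow_pos_of_pos (nrmq_pos hq huq h) q) <| mul_pos
    (rpow_pos_of_pos (nrm1_pos hu.1 h) _) (rpow_pos_of_pos (tv_pos hN hu h) _)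

lemma IsGNMaximizer.nrmq_pos (hN : N ≠ 0) (hq : 0 < q) (hu : IsGNMaximizer N q u) :
    0 < nrmq N q u := by
  have hball : 0 < ratioQ N q ((Metric.ball (0 : Euc N) 1).indicator 1) :=
    ratioQ_pos hN hq (memBV_indicator_ball_and_tv_le one_pos).1
      (memLp_indicator_const _ measurableSet_ball 1 (.inr measure_ball_lt_top.ne))
      (indicator_ball_one_not_ae_eq_zero one_pos)
  refine (nrmq_nonneg q u).lt_of_ne fun h => ?_
  have hle := hball.trans_le (hu.ratioQ_le _ (memBV_indicator_ball_and_tv_le one_pos).1)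
  rw [ratioQ, ← h, zero_rpow hq.ne', zero_div] at hle
  exact hle.false

/-- Taking `q`-th roots in the Gagliardo–Nirenberg inequality and applying the weighted AM-GM
inequality yields a bound which is additive in `v`. -/
lemma IsGNMaximizer.nrmq_le (hN : N ≠ 0) (hq1 : 1 ≤ q) (hqN : (q - 1) * N ≤ q)
    (hu : IsGNMaximizer N q u) (hv : MemBV N v) (hv₀ : ¬ v =ᵐ[volume] 0) :
    nrmq N q v ≤ nrmq N q u * ((1 - (q - 1) * N / q) * (nrm1 N v / nrm1 N u) +
      (q - 1) * N / q * (tv N v / tv N u)) := by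
  have hq : 0 < q := by linarith
  have hθ₀ : 0 ≤ (q - 1) * N / q := div_nonneg (mul_nonneg (by linarith) N.cast_nonneg) hq.le
  have hθ₁ : (q - 1) * N / q ≤ 1 := (div_le_one hq).2 hqN
  have hratio := hu.ratioQ_le v hv
  have hsu := nrm1_pos hu.memBV.1 hu.not_ae_eq_zero
  have htu := tv_pos hN hu.memBV hu.not_ae_eq_zero
  have hsv := nrm1_pos hv.1 hv₀
  have htv := tv_pos hN hv hv₀
  have hnu := nrmq_nonneg q u
  have hnv := nrmq_nonneg q v
  rw [ratioQ_eq_rpow hq, ratioQ_eq_rpow hq,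
    rpow_le_rpow_iff (by positivity) (by positivity) hq] at hratio
  set θ := (q - 1) * N / q
  calc nrmq N q v
      ≤ nrmq N q u / (nrm1 N u ^ (1 - θ) * tv N u ^ θ) * (nrm1 N v ^ (1 - θ) * tv N v ^ θ) :=
        (div_le_iff₀ (by positivity)).1 hratio
    _ = nrmq N q u * ((nrm1 N v / nrm1 N u) ^ (1 - θ) * (tv N v / tv N u) ^ θ) := by
        rw [div_rpow hsv.le hsu.le, div_rpow htv.le htu.le]
        field_simp
    _ ≤ _ := mul_le_mul_of_nonneg_left (geom_mean_le_arith_mean2_weighted (by linarith) hθ₀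
        (by positivity) (by positivity) (by ring)) hnu

end GNMaximizer

section MinkowskiEquality

variable {X : Type*} [MeasurableSpace X] {μ : Measure X} {q A B : ℝ}

lemma div_add_rpow_le {s t : ℝ} (hq : 1 ≤ q) (hA : 0 < A) (hB : 0 < B) (hs : 0 ≤ s)
    (ht : 0 ≤ t) :
    ((s + t) / (A + B)) ^ q ≤ A / (A + B) * (s / A) ^ q + B / (A + B) * (t / B) ^ q := by
  have h := (convexOn_rpow hq).2 (Set.mem_Ici.2 (div_nonneg hs hA.le))
    (Set.mem_Ici.2 (div_nonneg ht hB.le)) (show 0 ≤ A / (A + B) by positivity)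
    (show 0 ≤ B / (A + B) by positivity) (by field_simp)
  have hcomb : A / (A + B) * (s / A) + B / (A + B) * (t / B) = (s + t) / (A + B) := by field_simp
  simpa only [smul_eq_mul, hcomb] using h

lemma eq_div_mul_add_of_le_div_add_rpow {s t : ℝ} (hq : 1 < q) (hA : 0 < A) (hB : 0 < B)
    (hs : 0 ≤ s) (ht : 0 ≤ t)
    (h : A / (A + B) * (s / A) ^ q + B / (A + B) * (t / B) ^ q ≤ ((s + t) / (A + B)) ^ q) :
    t = B / (A + B) * (s + t) := by
  by_contra hne
  have hst : s / A ≠ t / B := fun heq => hne <| by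
    rw [div_eq_div_iff hA.ne' hB.ne'] at heq
    field_simp
    linarith
  have hlt := (strictConvexOn_rpow hq).2 (Set.mem_Ici.2 (div_nonneg hs hA.le))
    (Set.mem_Ici.2 (div_nonneg ht hB.le)) hst (show 0 < A / (A + B) by positivity)
    (show 0 < B / (A + B) by positivity) (by field_simp)
  have hcomb : A / (A + B) * (s / A) + B / (A + B) * (t / B) = (s + t) / (A + B) := by field_simp
  simp only [smul_eq_mul, hcomb] at hlt
  exact hlt.not_ge h

lemma integrable_rpow_of_memLp {f : X → ℝ} (hq : 0 < q) (hf₀ : 0 ≤ f)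
    (hf : MemLp f (ENNReal.ofReal q) μ) : Integrable (fun x => f x ^ q) μ := by
  have h := hf.integrable_norm_rpow (by simpa using hq) ENNReal.ofReal_ne_top
  simpa only [norm_of_nonneg (hf₀ _), ENNReal.toReal_ofReal hq.le] using h

/-- The equality case of Minkowski's inequality: here `A` and `B` play the role of the `L^q` norms
of `f` and `g`. -/
lemma ae_eq_div_mul_add_of_add_rpow_le_integral {f g : X → ℝ} (hq : 1 < q) (hA : 0 < A)
    (hB : 0 < B) (hf₀ : 0 ≤ f) (hg₀ : 0 ≤ g) (hf : MemLp f (ENNReal.ofReal q) μ)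
    (hg : MemLp g (ENNReal.ofReal q) μ) (hfA : ∫ x, f x ^ q ∂μ ≤ A ^ q)
    (hgB : ∫ x, g x ^ q ∂μ ≤ B ^ q) (h : (A + B) ^ q ≤ ∫ x, (f x + g x) ^ q ∂μ) :
    ∀ᵐ x ∂μ, g x = B / (A + B) * (f x + g x) := by
  have hq₀ : 0 < q := by linarith
  have hfg : Integrable (fun x => ((f x + g x) / (A + B)) ^ q) μ := by
    simp only [div_rpow (add_nonneg (hf₀ _) (hg₀ _)) (add_pos hA hB).le]
    exact (integrable_rpow_of_memLp hq₀ (add_nonneg hf₀ hg₀) (hf.add hg)).div_const _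
  have hfi : Integrable (fun x => A / (A + B) * (f x / A) ^ q) μ := by
    simp only [div_rpow (hf₀ _) hA.le]
    exact ((integrable_rpow_of_memLp hq₀ hf₀ hf).div_const _).const_mul _
  have hgi : Integrable (fun x => B / (A + B) * (g x / B) ^ q) μ := by
    simp only [div_rpow (hg₀ _) hB.le]
    exact ((integrable_rpow_of_memLp hq₀ hg₀ hg).div_const _).const_mul _
  have hle : ∫ x, (A / (A + B) * (f x / A) ^ q + B / (A + B) * (g x / B) ^ q) ∂μ
      ≤ ∫ x, ((f x + g x) / (A + B)) ^ q ∂μ := by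
    rw [integral_add hfi hgi, integral_const_mul, integral_const_mul]
    simp only [div_rpow (hf₀ _) hA.le, div_rpow (hg₀ _) hB.le,
      div_rpow (add_nonneg (hf₀ _) (hg₀ _)) (add_pos hA hB).le, integral_div]
    calc A / (A + B) * ((∫ x, f x ^ q ∂μ) / A ^ q) + B / (A + B) * ((∫ x, g x ^ q ∂μ) / B ^ q)
        ≤ A / (A + B) * 1 + B / (A + B) * 1 := by
          gcongr
          · exact div_le_one_of_le₀ hfA (by positivity)
          · exact div_le_one_of_le₀ hgB (by positivity)
      _ = 1 := by field_simp
      _ ≤ (∫ x, (f x + g x) ^ q ∂μ) / (A + B) ^ q := (one_le_div (by positivity)).2 h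
  have hconvex (x : X) := div_add_rpow_le hq.le hA hB (hf₀ x) (hg₀ x)
  have heq := (integral_eq_iff_of_ae_le hfg (hfi.add hgi) (ae_of_all _ hconvex)).1
    ((integral_mono hfg (hfi.add hgi) hconvex).antisymm hle)
  exact heq.mono fun x hx => eq_div_mul_add_of_le_div_add_rpow hq hA hB (hf₀ x) (hg₀ x) hx.ge

end MinkowskiEquality

section SplitProfile

variable {s k : ℝ}

lemma splitProfile_mem_Icc (hs : 0 ≤ s) : splitProfile s ∈ Set.Icc 0 s := by
  have h₁ : 1 ≤ √(1 + s ^ 2) := one_le_sqrt.2 (by nlinarith)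
  have h₂ : √(1 + s ^ 2) ≤ 1 + s := sqrt_le_iff.2 ⟨by linarith, by nlinarith⟩
  constructor <;> rw [splitProfile] <;> linarith

lemma splitProfile_mem_Icc_of_nonpos (hs : s ≤ 0) : splitProfile s ∈ Set.Icc s 0 := by
  have h₁ : 1 ≤ √(1 + s ^ 2) := one_le_sqrt.2 (by nlinarith)
  have h₂ : √(1 + s ^ 2) ≤ 1 - s := sqrt_le_iff.2 ⟨by linarith, by nlinarith⟩
  constructor <;> rw [splitProfile] <;> linarith

lemma abs_sub_splitProfile_add_abs_splitProfile (s : ℝ) :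
    |s - splitProfile s| + |splitProfile s| = |s| := by
  rcases le_total 0 s with hs | hs
  · obtain ⟨h₀, h₁⟩ := splitProfile_mem_Icc hs
    rw [abs_of_nonneg hs, abs_of_nonneg h₀, abs_of_nonneg (by linarith), sub_add_cancel]
  · obtain ⟨h₀, h₁⟩ := splitProfile_mem_Icc_of_nonpos hs
    rw [abs_of_nonpos hs, abs_of_nonpos h₁, abs_of_nonpos (by linarith)]
    ring

lemma splitProfile_eq_mul_of_abs_eq (h : |splitProfile s| = k * |s|) :
    splitProfile s = k * s := by
  rcases le_total 0 s with hs | hs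
  · rwa [abs_of_nonneg hs, abs_of_nonneg (splitProfile_mem_Icc hs).1] at h
  · rw [abs_of_nonpos hs, abs_of_nonpos (splitProfile_mem_Icc_of_nonpos hs).2] at h
    linarith

lemma eq_zero_or_mul_eq_of_splitProfile_eq_mul (h : splitProfile s = k * s) :
    s = 0 ∨ s * (4 * (k * (1 - k))) = 2 * (2 * k - 1) := by
  have hsq := sq_sqrt (show (0 : ℝ) ≤ 1 + s ^ 2 by positivity)
  rw [show √(1 + s ^ 2) = 1 + (2 * k - 1) * s by rw [splitProfile] at h; linarith] at hsq
  refine or_iff_not_imp_left.2 fun hs => mul_left_cancel₀ hs ?_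
  linear_combination -hsq

lemma eq_zero_or_eq_of_splitProfile_eq_mul (hk₀ : k ≠ 0) (hk₁ : k ≠ 1)
    (h : splitProfile s = k * s) : s = 0 ∨ s = 2 * (2 * k - 1) / (4 * (k * (1 - k))) :=
  (eq_zero_or_mul_eq_of_splitProfile_eq_mul h).imp_right
    (eq_div_of_mul_eq (by have := sub_ne_zero.2 hk₁.symm; positivity))

lemma splitProfile_eq_zero_iff : splitProfile s = 0 ↔ s = 0 := by
  refine ⟨fun h => ?_, fun h => h ▸ splitProfile_zero⟩
  rcases eq_zero_or_mul_eq_of_splitProfile_eq_mul (k := 0) (by rw [h, zero_mul]) with h | h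
  · exact h
  · norm_num at h

lemma splitProfile_eq_self_iff : splitProfile s = s ↔ s = 0 := by
  refine ⟨fun h => ?_, fun h => h ▸ splitProfile_zero⟩
  rcases eq_zero_or_mul_eq_of_splitProfile_eq_mul (k := 1) (by rw [h, one_mul]) with h | h
  · exact h
  · norm_num at h

end SplitProfile

section LevelSet

variable {N : ℕ} {q : ℝ} {u v w : Euc N → ℝ}

lemma IsGNMaximizer.nrmq_add_nrmq_le (hN : N ≠ 0) (hq1 : 1 ≤ q) (hqN : (q - 1) * N ≤ q)
    (hu : IsGNMaximizer N q u) (hv : MemBV N v) (hw : MemBV N w) (hv₀ : ¬ v =ᵐ[volume] 0)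
    (hw₀ : ¬ w =ᵐ[volume] 0) (hnrm : nrm1 N v + nrm1 N w ≤ nrm1 N u)
    (htv : tv N v + tv N w ≤ tv N u) : nrmq N q v + nrmq N q w ≤ nrmq N q u := by
  have hq : 0 < q := by linarith
  have hθ₀ : 0 ≤ (q - 1) * N / q := div_nonneg (mul_nonneg (by linarith) N.cast_nonneg) hq.le
  have hθ₁ : 0 ≤ 1 - (q - 1) * N / q := sub_nonneg.2 ((div_le_one hq).2 hqN)
  have hnrm' : nrm1 N v / nrm1 N u + nrm1 N w / nrm1 N u ≤ 1 := by
    rw [← add_div]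
    exact div_le_one_of_le₀ hnrm (nrm1_nonneg u)
  have htv' : tv N v / tv N u + tv N w / tv N u ≤ 1 := by
    rw [← add_div]
    exact div_le_one_of_le₀ htv (tv_nonneg u)
  set θ := (q - 1) * N / q
  calc nrmq N q v + nrmq N q w
      ≤ nrmq N q u * ((1 - θ) * (nrm1 N v / nrm1 N u) + θ * (tv N v / tv N u)) +
        nrmq N q u * ((1 - θ) * (nrm1 N w / nrm1 N u) + θ * (tv N w / tv N u)) :=
        add_le_add (hu.nrmq_le hN hq1 hqN hv hv₀) (hu.nrmq_le hN hq1 hqN hw hw₀)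
    _ = nrmq N q u * ((1 - θ) * (nrm1 N v / nrm1 N u + nrm1 N w / nrm1 N u) +
        θ * (tv N v / tv N u + tv N w / tv N u)) := by ring
    _ ≤ nrmq N q u * ((1 - θ) * 1 + θ * 1) := mul_le_mul_of_nonneg_left (add_le_add
        (mul_le_mul_of_nonneg_left hnrm' hθ₁) (mul_le_mul_of_nonneg_left htv' hθ₀))
        (nrmq_nonneg q u)
    _ = nrmq N q u := by ring

lemma nrm1_sub_splitProfile_add_nrm1_splitProfile (hu : MemBV N u) :
    nrm1 N (fun x => u x - splitProfile (u x)) + nrm1 N (fun x => splitProfile (u x))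
      = nrm1 N u := by
  have hnrm {v : Euc N → ℝ} (hv : Integrable v) : nrm1 N v = ∫ x, |v x| := by
    simpa only [nrm1_eq_nrmq, rpow_one] using nrmq_rpow_eq_integral one_pos hv.1
  obtain ⟨hv, hw, -⟩ := hu.split
  rw [hnrm hv.1, hnrm hw.1, hnrm hu.1, ← integral_add hv.1.abs hw.1.abs]
  simp only [abs_sub_splitProfile_add_abs_splitProfile]

/-- Adding the bounds for the two pieces of the splitting of `u` gives equality in Minkowski's
inequality for `|u| = |u - splitProfile u| + |splitProfile u|`. -/
lemma IsGNMaximizer.exists_ae_splitProfile_eq_mul (hN : N ≠ 0) (hq1 : 1 < q)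
    (hqN : (q - 1) * N ≤ q) (hu : IsGNMaximizer N q u) :
    ∃ k, k ≠ 0 ∧ k ≠ 1 ∧ ∀ᵐ x, splitProfile (u x) = k * u x := by
  have hq : 0 < q := by linarith
  obtain ⟨hv, hw, htv⟩ := hu.memBV.split
  have hv₀ : ¬ (fun x => u x - splitProfile (u x)) =ᵐ[volume] 0 := fun h =>
    hu.not_ae_eq_zero (h.mono fun x hx => splitProfile_eq_self_iff.1 (sub_eq_zero.1 hx).symm)
  have hw₀ : ¬ (fun x => splitProfile (u x)) =ᵐ[volume] 0 := fun h =>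
    hu.not_ae_eq_zero (h.mono fun x hx => splitProfile_eq_zero_iff.1 hx)
  have huq := memLp_of_nrmq_pos hu.memBV.1.1 (hu.nrmq_pos hN hq)
  have hvq : MemLp (fun x => u x - splitProfile (u x)) (ENNReal.ofReal q) := huq.mono hv.1.1 <|
    ae_of_all _ fun x => (le_add_of_nonneg_right (abs_nonneg _)).trans_eq
      (abs_sub_splitProfile_add_abs_splitProfile (u x))
  have hwq : MemLp (fun x => splitProfile (u x)) (ENNReal.ofReal q) := huq.mono hw.1.1 <|
    ae_of_all _ fun x => (le_add_of_nonneg_left (abs_nonneg _)).trans_eq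
      (abs_sub_splitProfile_add_abs_splitProfile (u x))
  have hA := _root_.nrmq_pos hq hvq hv₀
  have hB := _root_.nrmq_pos hq hwq hw₀
  have hAB := hu.nrmq_add_nrmq_le hN hq1.le hqN hv hw hv₀ hw₀
    (nrm1_sub_splitProfile_add_nrm1_splitProfile hu.memBV).le htv
  have hprop := ae_eq_div_mul_add_of_add_rpow_le_integral hq1 hA hB (fun x => abs_nonneg _)
    (fun x => abs_nonneg _) hvq.norm hwq.norm (nrmq_rpow_eq_integral hq hv.1.1).ge
    (nrmq_rpow_eq_integral hq hw.1.1).ge (by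
      simp only [abs_sub_splitProfile_add_abs_splitProfile]
      rw [← nrmq_rpow_eq_integral hq hu.memBV.1.1]
      exact rpow_le_rpow (add_pos hA hB).le hAB hq.le)
  refine ⟨_, (div_pos hB (add_pos hA hB)).ne',
    ((div_lt_one (add_pos hA hB)).2 (lt_add_of_pos_left _ hA)).ne, hprop.mono fun x hx => ?_⟩
  simp only [abs_sub_splitProfile_add_abs_splitProfile] at hx
  exact splitProfile_eq_mul_of_abs_eq hx

theorem IsGNMaximizer.exists_ae_eq_indicator (hN : N ≠ 0) (hq1 : 1 < q)
    (hqN : (q - 1) * N ≤ q) (hu : IsGNMaximizer N q u) :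
    ∃ lam ≠ 0, ∃ A, MeasurableSet A ∧ u =ᵐ[volume] fun x => lam * A.indicator 1 x := by
  obtain ⟨k, hk₀, hk₁, hk⟩ := hu.exists_ae_splitProfile_eq_mul hN hq1 hqN
  set lam := 2 * (2 * k - 1) / (4 * (k * (1 - k)))
  have hval : ∀ᵐ x, u x = 0 ∨ u x = lam :=
    hk.mono fun x hx => eq_zero_or_eq_of_splitProfile_eq_mul hk₀ hk₁ hx
  obtain ⟨g, hg, hug⟩ := hu.memBV.1.1
  refine ⟨lam, fun h => hu.not_ae_eq_zero (hval.mono fun x hx => ?_), g ⁻¹' {lam},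
    hg.measurable (measurableSet_singleton lam), ?_⟩
  · rwa [h, or_self] at hx
  · filter_upwards [hval, hug] with x hx hgx
    by_cases hlam : g x = lam
    · simp [Set.indicator, hgx, hlam]
    · rw [hgx] at hx ⊢
      simpa [Set.indicator, hlam] using hx

lemma IsGNMaximizer.tv_le_of_nrm1_eq_of_nrmq_eq (hN : N ≠ 0) (hq1 : 1 < q)
    (hu : IsGNMaximizer N q u) (hv : MemBV N v) (hv₀ : ¬ v =ᵐ[volume] 0)
    (hnrm : nrm1 N v = nrm1 N u) (hnrmq : nrmq N q v = nrmq N q u) : tv N u ≤ tv N v := by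
  have hle := hu.ratioQ_le v hv
  have htu := tv_pos hN hu.memBV hu.not_ae_eq_zero
  have htv := tv_pos hN hv hv₀
  have hpow : 0 < (q - 1) * (N : ℝ) := mul_pos (by linarith) (by positivity)
  have hsu := nrm1_pos hu.memBV.1 hu.not_ae_eq_zero
  rwa [ratioQ, ratioQ, hnrm, hnrmq, div_le_div_iff_of_pos_left
    (rpow_pos_of_pos (hu.nrmq_pos hN (by linarith)) q) (by positivity) (by positivity),
    mul_le_mul_iff_right₀ (by positivity), rpow_le_rpow_iff htu.le htv.le hpow] at hle

lemma measureReal_eq_inv_invRadius_pow_mul (hN : N ≠ 0) (A : Set (Euc N)) :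
    volume.real A = (invRadius N (volume A))⁻¹ ^ N * ballVolume N := by
  rw [inv_pow, invRadius_pow hN, inv_div, div_mul_cancel₀ _ (ballVolume_pos N).ne',
    measureReal_def]

lemma IsGNMaximizer.isIsoperimetric (hN : N ≠ 0) (hq1 : 1 < q) {A : Set (Euc N)}
    (hmeas : MeasurableSet A) (hA : IsGNMaximizer N q (A.indicator 1)) : IsIsoperimetric A := by
  have hq : 0 < q := by linarith
  have hvol : 0 < volume.real A :=
    nrm1_indicator_one hmeas ▸ nrm1_pos hA.memBV.1 hA.not_ae_eq_zero
  obtain ⟨h₀, h₁⟩ := ENNReal.toReal_ne_zero.1 hvol.ne'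
  have hr : 0 < invRadius N (volume A) := rpow_pos_of_pos (div_pos (ballVolume_pos N) hvol) _
  set R := (invRadius N (volume A))⁻¹ with hR
  have hR₀ : 0 < R := inv_pos.2 hr
  have hball : R ^ N * ballVolume N = volume.real A :=
    (measureReal_eq_inv_invRadius_pow_mul hN A).symm
  have hvolball : volume.real (Metric.ball (0 : Euc N) R) = volume.real A := by
    rw [measureReal_def, volume_ball_eq 0 hR₀, hball, ENNReal.toReal_ofReal hvol.le]
  have hnrm : nrm1 N ((Metric.ball (0 : Euc N) R).indicator 1) = nrm1 N (A.indicator 1) := by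
    rw [nrm1_indicator_one hmeas, nrm1_indicator_one measurableSet_ball, hvolball]
  have hnrmq : nrmq N q ((Metric.ball (0 : Euc N) R).indicator 1) = nrmq N q (A.indicator 1) := by
    rw [← rpow_left_inj (nrmq_nonneg _ _) (nrmq_nonneg _ _) hq.ne',
      nrmq_rpow_indicator_one hq hmeas, nrmq_rpow_indicator_one hq measurableSet_ball, hvolball]
  obtain ⟨hbv, htv⟩ := memBV_indicator_ball_and_tv_le (N := N) hR₀
  refine ⟨hmeas, h₀, h₁, hA.memBV, (hA.tv_le_of_nrm1_eq_of_nrmq_eq hN hq1 hbv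
    (indicator_ball_one_not_ae_eq_zero hR₀) hnrm hnrmq).trans (htv.trans_eq ?_)⟩
  rw [hball, hR, div_inv_eq_mul]

lemma IsIsoperimetric.tv_eq (hN : N ≠ 0) {A : Set (Euc N)} (hA : IsIsoperimetric A) :
    tv N (A.indicator 1) = (invRadius N (volume A))⁻¹ ^ (N - 1) * omegaS N := by
  have htv : tv N (A.indicator 1) = N * invRadius N (volume A) * volume.real A :=
    hA.tv_le.antisymm (mul_invRadius_mul_volume_le_tv hA.measurableSet hA.volume_ne_zero
      hA.volume_ne_top hA.memBV)
  have hr := hA.invRadius_pos.ne'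
  rw [htv, measureReal_eq_inv_invRadius_pow_mul hN, ← pow_sub_one_mul hN, omegaS, ← ballVolume]
  field_simp

theorem IsGNMaximizer.exists_ae_eq_indicator_ball (hN : 2 ≤ N) (hq1 : 1 < q)
    (hqN : (q - 1) * N ≤ q) (hu : IsGNMaximizer N q u) :
    ∃ lam ≠ 0, ∃ R > 0, ∃ x₀, u =ᵐ[volume] (Metric.ball x₀ R).indicator (fun _ => lam) ∧
      tv N u = |lam| * R ^ (N - 1) * omegaS N ∧ nrm1 N u = |lam| * R ^ N * omegaS N / N := by
  have hN₀ : N ≠ 0 := by omega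
  obtain ⟨lam, hlam, A, hmeas, huA⟩ := hu.exists_ae_eq_indicator hN₀ hq1 hqN
  have hA : IsIsoperimetric A := by
    refine IsGNMaximizer.isIsoperimetric hN₀ hq1 hmeas
      ((hu.const_mul (inv_ne_zero hlam)).congr (huA.mono fun x hx => ?_))
    simp only [hx, inv_mul_cancel_left₀ hlam]
  obtain ⟨x₀, hball⟩ := hA.exists_ae_eq_ball hN
  refine ⟨lam, hlam, _, inv_pos.2 hA.invRadius_pos, x₀, ?_, ?_, ?_⟩
  · refine huA.trans (EventuallyEq.trans (ae_of_all _ fun x => ?_)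
      (indicator_ae_eq_of_ae_eq_set hball))
    simp [Set.indicator]
  · rw [tv_congr huA, tv_const_mul _ hlam, hA.tv_eq hN₀, mul_assoc]
  · rw [nrm1_eq_nrmq, nrmq_congr 1 huA, nrmq_const_mul, ← nrm1_eq_nrmq, nrm1_indicator_one hmeas,
      measureReal_eq_inv_invRadius_pow_mul hN₀, omegaS, ← ballVolume]
    field_simp

end LevelSet

lemma sub_one_mul_le_of_le_div_sub_one {N q : ℝ} (hN : 1 < N) (hq : q ≤ N / (N - 1)) :
    (q - 1) * N ≤ q := by
  rw [le_div_iff₀ (by linarith)] at hq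
  linarith

/-- any maximizer of `D_α` is (a.e.) a multiple of a
characteristic function of a ball, with the stated constraint on the coefficient. -/
theorem Dalpha_maximizer_form (N : ℕ) (hN : 2 ≤ N) (q : ℝ) (hq1 : 1 < q)
    (hq2 : q ≤ (N : ℝ) / ((N : ℝ) - 1)) (α a b : ℝ) (hα : 0 < α) (ha : 0 < a)
    (hb : 0 < b) (u₀ : Euc N → ℝ) (hu₀ : MemBV N u₀)
    (hcon : tv N u₀ ^ a + nrm1 N u₀ ^ b = 1)
    (hmax : nrm1 N u₀ + α * nrmq N q u₀ ^ q =
      sSup { r | ∃ u : Euc N → ℝ, MemBV N u ∧ tv N u ^ a + nrm1 N u ^ b = 1 ∧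
        r = nrm1 N u + α * nrmq N q u ^ q }) :
    ∃ lam : ℝ, lam ≠ 0 ∧ ∃ R : ℝ, 0 < R ∧ ∃ x₀ : Euc N,
      u₀ =ᵐ[volume] (Metric.ball x₀ R).indicator (fun _ => lam) ∧
      (|lam| * R ^ (N-1) * omegaS N) ^ a + (|lam| * R ^ N * omegaS N / N) ^ b = 1 := by
  obtain ⟨lam, hlam, R, hR, x₀, hball, htv, hnrm⟩ :=
    (isGNMaximizer_of_eq_sSup (by omega) (by linarith) hα ha.ne' hb.ne' hu₀ hcon
      hmax).exists_ae_eq_indicator_ball hN hq1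
      (sub_one_mul_le_of_le_div_sub_one (by exact_mod_cast hN) hq2)
  exact ⟨lam, hlam, R, hR, x₀, hball, by rw [← htv, ← hnrm, hcon]⟩
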